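/- arXiv:2402.09829 — 2 statements merged into one kernel-verified Lean document; each statement's English description precedes it below -/
import Mathlib

section
/- For every real number c with 8/9 ≤ c < 1, one has limsup_{x→∞} T_c(x)/π(x) ≤ 8(1/c − 1); equivalently, for every ε > 0 there exists x₀ such that for all x ≥ x₀, T_c(x) ≤ (8(1/c − 1) + ε)·π(x). -/
open Real Finset

attribute [local instance] Classical.propDecidable

/-- `Pplus n` is the largest prime factor of `n`, with the convention `Pplus 1 = 1`. -/
noncomputable def Pplus (n : ℕ) : ℕ := if n = 1 then 1 else n.primeFactors.sup id

/-- `primePi x` is the number of primes not exceeding `x`. -/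
noncomputable def primePi (x : ℝ) : ℕ :=
  ((Finset.range (⌊x⌋₊ + 1)).filter Nat.Prime).card

/-- `T c x = #{p ≤ x : p prime, P⁺(p-1) ≥ p^c}`. -/
noncomputable def T (c x : ℝ) : ℕ :=
  ((Finset.range (⌊x⌋₊ + 1)).filter
    (fun p : ℕ => p.Prime ∧ (p : ℝ) ^ c ≤ (Pplus (p - 1) : ℝ))).card

/-! A prime `p ≤ x` with `P⁺(p - 1) ≥ p ^ c` is, but for boundedly many exceptions, `p = m * q + 1`
with `q` prime and `m ≤ x ^ (1 - c)` even. Selberg's sieve shows that at most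
`(8 + o(1)) 𝔖(m) X / log² X` primes `q ≤ X = x / m` make `m * q + 1` prime, where `𝔖(m)` is the
singular series; replacing its factors at the primes `p > w` not dividing `m` by `1` makes this
uniform in `m` and costs a factor tending to `1` as `w → ∞`. Since `𝔖` vanishes at odd `m` and has
mean value `1`, summing over `m` gives
`∑ 8 (x / m) / log² (x / m) ∼ 8 (1 / (c log x) - 1 / log x) x = 8 (1 / c - 1) x / log x`.
This is compared with `π(x) ≥ (1 - o(1)) x / log x`, which follows from a Tauberian theorem of
Wiener–Ikehara type with the Fejér kernel. -/

section DivisorSums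

open ArithmeticFunction
open scoped ArithmeticFunction.Moebius

lemma sum_divisors_mul_of_coprime {M : Type*} [AddCommMonoid M] {m n : ℕ} (hmn : m.Coprime n)
    (F : ℕ → M) :
    ∑ d ∈ (m * n).divisors, F d = ∑ a ∈ m.divisors, ∑ b ∈ n.divisors, F (a * b) := by
  rw [← sum_product', Nat.divisors_mul, mul_def, sum_image hmn.mul_injOn_divisors]

lemma sum_divisors_filter_dvd {M : Type*} [AddCommMonoid M] {l n : ℕ} (hn : n ≠ 0) (hl : l ∣ n)
    (F : ℕ → M) :
    ∑ d ∈ n.divisors with l ∣ d, F d = ∑ e ∈ (n / l).divisors, F (l * e) := by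
  have hl0 : l ≠ 0 := ne_zero_of_dvd_ne_zero hn hl
  refine (sum_nbij (l * ·) (fun e he => ?_) ?_ ?_ fun _ _ => rfl).symm
  · rw [Nat.mem_divisors] at he
    exact mem_filter.2 ⟨Nat.mem_divisors.2 ⟨(Nat.mul_dvd_mul_left l he.1).trans
      (Nat.mul_div_cancel' hl).dvd, hn⟩, Nat.dvd_mul_right l e⟩
  · exact (mul_right_injective₀ hl0).injOn
  · rintro d hd
    simp only [coe_filter, Nat.mem_divisors, Set.mem_ofPred_eq] at hd
    obtain ⟨⟨hdn, -⟩, e, rfl⟩ := hd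
    exact ⟨e, by simpa using ⟨Nat.dvd_div_of_mul_dvd hdn, hl0, Nat.le_of_dvd (by lia) hl⟩, rfl⟩

lemma sum_moebius_filter_dvd_dvd {k l n : ℕ} (hn : Squarefree n) (hk : k ∣ n) :
    ∑ d ∈ n.divisors with l ∣ d ∧ d ∣ k, μ d = if l = k then μ l else 0 := by
  have hk_sq := hn.squarefree_of_dvd hk
  simp_rw [and_comm (a := l ∣ _), ← filter_filter]
  rw [Nat.divisors_filter_dvd_of_dvd hn.ne_zero hk]
  by_cases hl : l ∣ k
  · have hcop {e : ℕ} (he : e ∈ (k / l).divisors) : l.Coprime e :=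
      (Nat.coprime_of_squarefree_mul
        ((Nat.mul_div_cancel' hl).symm ▸ hk_sq)).coprime_dvd_right (Nat.dvd_of_mem_divisors he)
    have hquot : k / l = 1 ↔ l = k := by
      rw [Nat.div_eq_iff_eq_mul_left (Nat.pos_of_dvd_of_pos hl hk_sq.ne_zero.bot_lt) hl, one_mul,
        eq_comm]
    rw [sum_divisors_filter_dvd hk_sq.ne_zero hl,
      sum_congr rfl fun e he => isMultiplicative_moebius.map_mul_of_coprime (hcop he), ← mul_sum,
      ← coe_mul_zeta_apply, moebius_mul_coe_zeta, one_apply]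
    simp [hquot]
  · rw [if_neg (by rintro rfl; exact hl dvd_rfl), sum_eq_zero]
    intro d hd
    rw [mem_filter] at hd
    exact absurd (hd.2.trans (Nat.dvd_of_mem_divisors hd.1)) hl

end DivisorSums

section SelbergSieve

open BoundingSieve SelbergSieve
open scoped ArithmeticFunction.Moebius

variable {s : BoundingSieve} {y : ℝ}

/-- The sum `S(y) = ∑ g(l)` over the divisors `l ≤ y` of the sieving range, whose reciprocal is the
minimum of the quadratic form of the Selberg sieve. -/
noncomputable def selbergSum (s : BoundingSieve) (y : ℝ) : ℝ :=
  ∑ l ∈ s.prodPrimes.divisors with ((l : ℕ) : ℝ) ≤ y, s.selbergTerms l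

/-- The optimal weights of the Selberg sieve, supported on the divisors `d ≤ y` of the sieving
range. -/
noncomputable def selbergWeight (s : BoundingSieve) (y : ℝ) (d : ℕ) : ℝ :=
  μ d * (s.nu d)⁻¹ * (selbergSum s y)⁻¹ *
    ∑ l ∈ s.prodPrimes.divisors with ((l : ℕ) : ℝ) ≤ y ∧ d ∣ l, s.selbergTerms l

lemma selbergTerms_nonneg_of_mem {l : ℕ} (hl : l ∈ s.prodPrimes.divisors) :
    0 ≤ s.selbergTerms l :=
  (selbergTerms_pos (Nat.dvd_of_mem_divisors hl)).le

lemma selbergSum_pos (hy : 1 ≤ y) : 0 < selbergSum s y :=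
  sum_pos (fun _ hl => selbergTerms_pos (Nat.dvd_of_mem_divisors (mem_filter.1 hl).1))
    ⟨1, by simpa [prodPrimes_ne_zero] using hy⟩

lemma selbergWeight_one (hy : 1 ≤ y) : selbergWeight s y 1 = 1 := by
  have : selbergSum s y ≠ 0 := (selbergSum_pos hy).ne'
  simpa [selbergWeight, s.nu_mult.map_one, selbergSum] using inv_mul_cancel₀ this

lemma selbergWeight_eq_zero {d : ℕ} (hd : y < d) : selbergWeight s y d = 0 := by
  rw [selbergWeight, sum_eq_zero, mul_zero]
  intro l hl
  rw [mem_filter] at hl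
  have hdl : (d : ℝ) ≤ l := by
    exact_mod_cast Nat.le_of_dvd (Nat.pos_of_mem_divisors hl.1) hl.2.2
  linarith [hl.2.1]

/- Writing `l = k m` with `k = gcd(l, d)` splits `S(y)` into sums over `m ≤ y / k`, each at least
the sum over `m ≤ y / d`. -/
lemma coprime_div_of_dvd_prodPrimes {d : ℕ} (hd : d ∣ s.prodPrimes) :
    d.Coprime (s.prodPrimes / d) :=
  Nat.coprime_of_squarefree_mul ((Nat.mul_div_cancel' hd).symm ▸ s.prodPrimes_squarefree)

lemma selbergTerms_mul {d k m : ℕ} (hd : d ∣ s.prodPrimes) (hk : k ∈ d.divisors)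
    (hm : m ∈ (s.prodPrimes / d).divisors) :
    s.selbergTerms (k * m) = s.selbergTerms k * s.selbergTerms m :=
  selbergTerms_isMultiplicative.map_mul_of_coprime <|
    ((coprime_div_of_dvd_prodPrimes hd).coprime_dvd_left
      (Nat.dvd_of_mem_divisors hk)).coprime_dvd_right (Nat.dvd_of_mem_divisors hm)

lemma sum_selbergTerms_filter_dvd {d : ℕ} (hd : d ∣ s.prodPrimes) :
    ∑ l ∈ s.prodPrimes.divisors with ((l : ℕ) : ℝ) ≤ y ∧ d ∣ l, s.selbergTerms l
      = s.selbergTerms d * ∑ m ∈ (s.prodPrimes / d).divisors with ((d * m : ℕ) : ℝ) ≤ y,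
          s.selbergTerms m := by
  have hP0 : s.prodPrimes ≠ 0 := prodPrimes_ne_zero
  simp_rw [and_comm (b := d ∣ _), ← filter_filter]
  rw [sum_filter, sum_divisors_filter_dvd hP0 hd, ← sum_filter, mul_sum]
  exact sum_congr rfl fun m hm => selbergTerms_mul hd
    (Nat.mem_divisors_self d (ne_zero_of_dvd_ne_zero hP0 hd)) (mem_filter.1 hm).1

lemma nu_inv_mul_sum_selbergTerms_le {d : ℕ} (hd : d ∣ s.prodPrimes) :
    (s.nu d)⁻¹ * ∑ l ∈ s.prodPrimes.divisors with ((l : ℕ) : ℝ) ≤ y ∧ d ∣ l, s.selbergTerms l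
      ≤ selbergSum s y := by
  have hle {k m : ℕ} (hk : k ∈ d.divisors) (h : ((d * m : ℕ) : ℝ) ≤ y) :
      ((k * m : ℕ) : ℝ) ≤ y :=
    le_trans (by gcongr; exact Nat.divisor_le hk) h
  have hg {m : ℕ} (hm : m ∈ (s.prodPrimes / d).divisors) : 0 ≤ s.selbergTerms m :=
    (selbergTerms_pos ((Nat.dvd_of_mem_divisors hm).trans (Nat.div_dvd_of_dvd hd))).le
  have hgd {k : ℕ} (hk : k ∈ d.divisors) : 0 ≤ s.selbergTerms k :=
    (selbergTerms_pos ((Nat.dvd_of_mem_divisors hk).trans hd)).le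
  have hdivisors : s.selbergTerms d * (s.nu d)⁻¹ = ∑ k ∈ d.divisors, s.selbergTerms k := by
    rw [← sum_divisors_selbergTerms_eq_selbergTerms_mul_nu_inv hd, ← sum_filter,
      Nat.divisors_filter_dvd_of_dvd prodPrimes_ne_zero hd]
  calc (s.nu d)⁻¹ * ∑ l ∈ s.prodPrimes.divisors with ((l : ℕ) : ℝ) ≤ y ∧ d ∣ l, s.selbergTerms l
      = ∑ k ∈ d.divisors, ∑ m ∈ (s.prodPrimes / d).divisors with ((d * m : ℕ) : ℝ) ≤ y,
          s.selbergTerms k * s.selbergTerms m := by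
        rw [sum_selbergTerms_filter_dvd hd, ← sum_mul_sum, ← hdivisors]
        ring
    _ ≤ ∑ k ∈ d.divisors, ∑ m ∈ (s.prodPrimes / d).divisors with ((k * m : ℕ) : ℝ) ≤ y,
          s.selbergTerms k * s.selbergTerms m := by
        refine sum_le_sum fun k hk => sum_le_sum_of_subset_of_nonneg
          (monotone_filter_right _ fun m _ h => hle hk h) fun m hm _ =>
            mul_nonneg (hgd hk) (hg (mem_filter.1 hm).1)
    _ = selbergSum s y := by
        conv_rhs => rw [selbergSum, sum_filter, ← Nat.mul_div_cancel' hd]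
        rw [sum_divisors_mul_of_coprime (coprime_div_of_dvd_prodPrimes hd)]
        refine sum_congr rfl fun k hk => ?_
        rw [sum_filter]
        exact sum_congr rfl fun m hm => by rw [selbergTerms_mul hd hk hm]

lemma abs_selbergWeight_le_one (hy : 1 ≤ y) {d : ℕ} (hd : d ∣ s.prodPrimes) :
    |selbergWeight s y d| ≤ 1 := by
  have hμ : |(μ d : ℝ)| = 1 := by
    exact_mod_cast ArithmeticFunction.abs_moebius_eq_one_of_squarefree
      (squarefree_of_dvd_prodPrimes hd)
  have hS := selbergSum_pos (s := s) hy
  have hν := inv_nonneg.2 (nu_pos_of_dvd_prodPrimes hd).le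
  have hsum : 0 ≤ ∑ l ∈ s.prodPrimes.divisors with ((l : ℕ) : ℝ) ≤ y ∧ d ∣ l, s.selbergTerms l :=
    sum_nonneg fun l hl => selbergTerms_nonneg_of_mem (mem_filter.1 hl).1
  rw [selbergWeight, abs_mul, abs_mul, abs_mul, hμ, one_mul, abs_of_nonneg hν,
    abs_of_pos (inv_pos.2 hS), abs_of_nonneg hsum, mul_right_comm, ← div_eq_mul_inv, div_le_one hS]
  exact nu_inv_mul_sum_selbergTerms_le hd

lemma sum_nu_mul_selbergWeight {l : ℕ} (hl : l ∣ s.prodPrimes) :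
    ∑ d ∈ s.prodPrimes.divisors with l ∣ d, s.nu d * selbergWeight s y d
      = if (l : ℝ) ≤ y then μ l * s.selbergTerms l * (selbergSum s y)⁻¹ else 0 := by
  calc ∑ d ∈ s.prodPrimes.divisors with l ∣ d, s.nu d * selbergWeight s y d
      = ∑ d ∈ s.prodPrimes.divisors with l ∣ d,
          ∑ k ∈ s.prodPrimes.divisors with ((k : ℕ) : ℝ) ≤ y ∧ d ∣ k,
            (selbergSum s y)⁻¹ * (s.selbergTerms k * μ d) := by
        refine sum_congr rfl fun d hd => ?_
        have := nu_ne_zero (Nat.dvd_of_mem_divisors (mem_filter.1 hd).1)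
        rw [selbergWeight, ← mul_sum, ← sum_mul]
        field_simp
    _ = ∑ k ∈ s.prodPrimes.divisors with ((k : ℕ) : ℝ) ≤ y,
          ∑ d ∈ s.prodPrimes.divisors with l ∣ d ∧ d ∣ k,
            (selbergSum s y)⁻¹ * (s.selbergTerms k * μ d) :=
        sum_comm' fun d k => by simp only [mem_filter]; tauto
    _ = ∑ k ∈ s.prodPrimes.divisors with ((k : ℕ) : ℝ) ≤ y,
          if l = k then (selbergSum s y)⁻¹ * (s.selbergTerms k * μ l) else 0 := by
        refine sum_congr rfl fun k hk => ?_
        rw [← mul_sum, ← mul_sum, ← Int.cast_sum,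
          sum_moebius_filter_dvd_dvd s.prodPrimes_squarefree
            (Nat.dvd_of_mem_divisors (mem_filter.1 hk).1)]
        split_ifs <;> simp
    _ = _ := by
        rw [sum_ite_eq]
        by_cases hly : (l : ℝ) ≤ y
        · simp only [mem_filter, Nat.mem_divisors, hl, prodPrimes_ne_zero, hly, ne_eq,
            not_false_eq_true, and_self, if_true]
          ring
        · simp [hly]

lemma mainSum_lambdaSquared_selbergWeight (hy : 1 ≤ y) :
    s.mainSum (lambdaSquared (selbergWeight s y)) = (selbergSum s y)⁻¹ := by
  have hS := (selbergSum_pos (s := s) hy).ne'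
  calc s.mainSum (lambdaSquared (selbergWeight s y))
      = ∑ l ∈ s.prodPrimes.divisors,
          if (l : ℝ) ≤ y then s.selbergTerms l * (selbergSum s y)⁻¹ ^ 2 else 0 := by
        rw [mainSum_lambdaSquared_eq_sum_mul_sum_sq]
        refine sum_congr rfl fun l hl => ?_
        have hlP := Nat.dvd_of_mem_divisors hl
        have hg := (selbergTerms_pos hlP).ne'
        have hμ : (μ l : ℝ) ^ 2 = 1 := by
          exact_mod_cast ArithmeticFunction.moebius_sq_eq_one_of_squarefree
            (squarefree_of_dvd_prodPrimes hlP)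
        rw [← sum_filter, sum_nu_mul_selbergWeight hlP]
        split_ifs
        · rw [mul_pow, mul_pow, hμ]
          field_simp
        · simp
    _ = (selbergSum s y)⁻¹ := by
        rw [← sum_filter, ← sum_mul, ← selbergSum]
        field_simp

lemma errSum_lambdaSquared_le (w : ℕ → ℝ) :
    s.errSum (lambdaSquared w) ≤ ∑ d₁ ∈ s.prodPrimes.divisors, ∑ d₂ ∈ s.prodPrimes.divisors,
      |w d₁| * |w d₂| * |s.rem (d₁.lcm d₂)| := by
  have hP0 : s.prodPrimes ≠ 0 := prodPrimes_ne_zero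
  calc s.errSum (lambdaSquared w)
      ≤ ∑ d ∈ s.prodPrimes.divisors, ∑ d₁ ∈ s.prodPrimes.divisors,
          ∑ d₂ ∈ s.prodPrimes.divisors,
            if d = d₁.lcm d₂ then |w d₁| * |w d₂| * |s.rem d| else 0 := by
        refine sum_le_sum fun d hd => ?_
        have hsub := Nat.divisors_subset_of_dvd hP0 (Nat.dvd_of_mem_divisors hd)
        have hnonneg (d₁ d₂ : ℕ) :
            0 ≤ if d = d₁.lcm d₂ then |w d₁| * |w d₂| * |s.rem d| else 0 := by positivity
        calc |lambdaSquared w d| * |s.rem d|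
            ≤ (∑ d₁ ∈ d.divisors, ∑ d₂ ∈ d.divisors,
                |if d = d₁.lcm d₂ then w d₁ * w d₂ else 0|) * |s.rem d| := by
              gcongr
              exact (abs_sum_le_sum_abs _ _).trans (sum_le_sum fun _ _ => abs_sum_le_sum_abs _ _)
          _ = ∑ d₁ ∈ d.divisors, ∑ d₂ ∈ d.divisors,
                if d = d₁.lcm d₂ then |w d₁| * |w d₂| * |s.rem d| else 0 := by
              simp only [sum_mul, apply_ite abs, abs_mul, abs_zero, ite_mul, zero_mul]
          _ ≤ _ := (sum_le_sum fun d₁ _ => sum_le_sum_of_subset_of_nonneg hsub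
                fun d₂ _ _ => hnonneg d₁ d₂).trans
              (sum_le_sum_of_subset_of_nonneg hsub fun d₁ _ _ => sum_nonneg fun d₂ _ =>
                hnonneg d₁ d₂)
    _ = _ := by
        rw [sum_comm]
        refine sum_congr rfl fun d₁ hd₁ => ?_
        rw [sum_comm]
        refine sum_congr rfl fun d₂ hd₂ => ?_
        rw [sum_ite_eq_of_mem']
        exact Nat.mem_divisors.2 ⟨Nat.lcm_dvd (Nat.dvd_of_mem_divisors hd₁)
          (Nat.dvd_of_mem_divisors hd₂), hP0⟩

lemma abs_selbergWeight_le (hy : 1 ≤ y) {d : ℕ} (hd : d ∈ s.prodPrimes.divisors) :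
    |selbergWeight s y d| ≤ if (d : ℝ) ≤ y then 1 else 0 := by
  split_ifs with h
  · exact abs_selbergWeight_le_one hy (Nat.dvd_of_mem_divisors hd)
  · rw [selbergWeight_eq_zero (not_le.1 h), abs_zero]

theorem siftedSum_le_totalMass_div_selbergSum_add {B : ℕ → ℝ} (hy : 1 ≤ y)
    (hrem : ∀ d₁ ∈ s.prodPrimes.divisors, ∀ d₂ ∈ s.prodPrimes.divisors,
      |s.rem (d₁.lcm d₂)| ≤ B d₁ * B d₂) :
    s.siftedSum ≤ s.totalMass / selbergSum s y
      + (∑ d ∈ s.prodPrimes.divisors with ((d : ℕ) : ℝ) ≤ y, B d) ^ 2 := by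
  calc s.siftedSum
      ≤ s.totalMass * s.mainSum (lambdaSquared (selbergWeight s y))
          + s.errSum (lambdaSquared (selbergWeight s y)) :=
        siftedSum_le_mainSum_errSum_of_upperMoebius _
          (upperMoebius_lambdaSquared _ (selbergWeight_one hy))
    _ ≤ s.totalMass * s.mainSum (lambdaSquared (selbergWeight s y))
          + ∑ d₁ ∈ s.prodPrimes.divisors, ∑ d₂ ∈ s.prodPrimes.divisors,
            (if (d₁ : ℝ) ≤ y then 1 else 0) * (if (d₂ : ℝ) ≤ y then 1 else 0)
              * (B d₁ * B d₂) := by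
        grw [errSum_lambdaSquared_le]
        gcongr with d₁ hd₁ d₂ hd₂
        · exact abs_selbergWeight_le hy hd₁
        · exact abs_selbergWeight_le hy hd₂
        · exact hrem d₁ hd₁ d₂ hd₂
    _ = _ := by
        rw [mainSum_lambdaSquared_selbergWeight hy, ← div_eq_mul_inv, sum_filter, sq, sum_mul_sum]
        congr! 3
        split_ifs <;> simp

end SelbergSieve

section PolynomialSieve

open Polynomial ArithmeticFunction

lemma count_mul_of_periodic {p : ℕ → Prop} [DecidablePred p] {d : ℕ} (hp : Function.Periodic p d)
    (q : ℕ) : (d * q).count p = q * d.count p := by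
  induction q with
  | zero => simp
  | succ q ih =>
    have hshift (k : ℕ) : p (d * q + k) ↔ p k := by
      rw [add_comm, mul_comm, ← Nat.nsmul_eq_mul, hp.nsmul q k]
    simp only [mul_add_one, Nat.count_add, ih, hshift, add_one_mul]

lemma abs_count_sub_le_of_periodic {p : ℕ → Prop} [DecidablePred p] {d : ℕ}
    (hp : Function.Periodic p d) (hd : d ≠ 0) (N : ℕ) :
    |(N.count p : ℝ) - d.count p / d * N| ≤ d.count p := by
  set c : ℝ := ↑(d.count p)
  have hshift (k : ℕ) : p (d * (N / d) + k) ↔ p k := by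
    rw [add_comm, mul_comm, ← Nat.nsmul_eq_mul, hp.nsmul (N / d) k]
  have hsplit : (N.count p : ℝ) = (N / d : ℕ) * c + (N % d).count p := by
    conv_lhs => rw [← Nat.div_add_mod N d, Nat.count_add, count_mul_of_periodic hp]
    simp [hshift, c]
  have hN : (N : ℝ) = d * (N / d : ℕ) + (N % d : ℕ) := by exact_mod_cast (Nat.div_add_mod N d).symm
  have hmod : ((N % d : ℕ) : ℝ) / d ≤ 1 := by
    rw [div_le_one (by positivity)]
    exact_mod_cast (Nat.mod_lt N (Nat.pos_of_ne_zero hd)).le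
  have hc : 0 ≤ c := by positivity
  have hcount : ((N % d).count p : ℝ) ≤ c := by
    exact Nat.cast_le.2 <| Nat.count_monotone p (Nat.mod_lt N (Nat.pos_of_ne_zero hd)).le
  have hdiff : (N.count p : ℝ) - c / d * N = (N % d).count p - c * ((N % d : ℕ) / d) := by
    have : (d : ℝ) ≠ 0 := by positivity
    rw [hsplit, hN]
    field_simp
    ring
  rw [hdiff, abs_le]
  constructor
  · nlinarith [show (0 : ℝ) ≤ (N % d).count p by positivity]
  · nlinarith [show (0 : ℝ) ≤ ((N % d : ℕ) : ℝ) / d by positivity]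

lemma abs_card_filter_Ico_sub_le_of_periodic {p : ℕ → Prop} [DecidablePred p] {d : ℕ}
    (hp : Function.Periodic p d) (hd : d ≠ 0) (a N : ℕ) :
    |(#{n ∈ Ico a (a + N) | p n} : ℝ) - d.count p / d * N| ≤ d.count p := by
  have hcount (M : ℕ) : #{n ∈ Ico a (a + M) | p n} = M.count fun n => p (a + n) := by
    rw [Nat.count_eq_card_filter_range,
      ← card_image_of_injective (s := {k ∈ range M | p (a + k)}) (add_right_injective a)]
    congr 1
    ext n
    simp only [mem_filter, mem_Ico, mem_image, mem_range]
    constructor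
    · rintro ⟨⟨han, hn⟩, hpn⟩
      exact ⟨n - a, ⟨by lia, by rwa [Nat.add_sub_cancel' han]⟩, Nat.add_sub_cancel' han⟩
    · rintro ⟨k, ⟨hk, hpk⟩, rfl⟩
      exact ⟨⟨by lia, by lia⟩, hpk⟩
  have hshift : d.count p = d.count fun n => p (a + n) := by
    rw [← hcount, Nat.filter_Ico_card_eq_of_periodic a d p hp]
  rw [hcount, hshift]
  exact abs_count_sub_le_of_periodic (hp.const_add a) hd N

/-- The number of roots of `f` modulo `d`, as a function of `d`. -/
noncomputable def rootCount (f : ℤ[X]) : ArithmeticFunction ℕ where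
  toFun d := if d = 0 then 0 else Nat.card {a : ZMod d // aeval a f = 0}
  map_zero' := if_pos rfl

lemma rootCount_apply (f : ℤ[X]) (d : ℕ) [NeZero d] :
    rootCount f d = Nat.card {a : ZMod d // aeval a f = 0} :=
  if_neg (NeZero.ne d)

lemma aeval_ringEquiv_eq_zero_iff {R S : Type*} [CommRing R] [CommRing S] (e : R ≃+* S) (f : ℤ[X])
    (a : R) : aeval (e a) f = 0 ↔ aeval a f = 0 := by
  have : aeval (e a) f = e (aeval a f) := aeval_algHom_apply e.toRingHom.toIntAlgHom a f
  rw [this, EmbeddingLike.map_eq_zero_iff]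

lemma isMultiplicative_rootCount (f : ℤ[X]) : (rootCount f).IsMultiplicative := by
  refine ArithmeticFunction.IsMultiplicative.iff_ne_zero.2 ⟨?_, fun {m n} hm hn hmn => ?_⟩
  · rw [rootCount_apply]
    have : Subsingleton (ZMod 1) := inferInstanceAs (Subsingleton (Fin 1))
    exact Nat.card_eq_one_iff_unique.2 ⟨inferInstance, ⟨0, Subsingleton.elim _ _⟩⟩
  · have : NeZero m := ⟨hm⟩
    have : NeZero n := ⟨hn⟩
    have hprod (x : ZMod m × ZMod n) : aeval x f = 0 ↔ aeval x.1 f = 0 ∧ aeval x.2 f = 0 := by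
      rw [aeval_prod_apply, Prod.mk_eq_zero]
    rw [rootCount_apply, rootCount_apply, rootCount_apply, ← Nat.card_prod]
    refine Nat.card_congr (((ZMod.chineseRemainder hmn).toEquiv.subtypeEquiv fun a => ?_).trans
      (Equiv.subtypeProdEquivProd ..))
    exact ((hprod _).symm.trans (aeval_ringEquiv_eq_zero_iff _ f a)).symm

lemma natCast_dvd_eval_iff (f : ℤ[X]) (d n : ℕ) :
    d ∣ (f.eval (n : ℤ)).natAbs ↔ aeval (n : ZMod d) f = 0 := by
  have : aeval (n : ZMod d) f = (f.eval (n : ℤ) : ℤ) := by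
    simpa using aeval_algebraMap_apply (ZMod d) (n : ℤ) f
  rw [this, ZMod.intCast_zmod_eq_zero_iff_dvd, Int.natCast_dvd]

lemma count_dvd_eval_eq_rootCount (f : ℤ[X]) {d : ℕ} (hd : d ≠ 0) :
    d.count (fun n => d ∣ (f.eval (n : ℤ)).natAbs) = rootCount f d := by
  have : NeZero d := ⟨hd⟩
  rw [rootCount_apply, Nat.card_eq_fintype_card, Fintype.card_subtype,
    Nat.count_eq_card_filter_range]
  refine card_bij (fun n _ => (n : ZMod d)) (fun n hn => ?_) (fun a ha b hb hab => ?_)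
    fun a ha => ?_
  · simpa [natCast_dvd_eval_iff] using (mem_filter.1 hn).2
  · rw [ZMod.natCast_eq_natCast_iff'] at hab
    simp only [mem_filter, mem_range] at ha hb
    rwa [Nat.mod_eq_of_lt ha.1, Nat.mod_eq_of_lt hb.1] at hab
  · refine ⟨a.val, ?_, ZMod.natCast_zmod_val a⟩
    simpa [natCast_dvd_eval_iff, ZMod.val_lt] using ha

lemma periodic_dvd_eval (f : ℤ[X]) (d : ℕ) :
    Function.Periodic (fun n : ℕ => d ∣ (f.eval (n : ℤ)).natAbs) d := fun n => by
  simp only [natCast_dvd_eval_iff, eq_iff_iff]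
  rw [Nat.cast_add, ZMod.natCast_self, add_zero]

lemma abs_card_filter_dvd_eval_sub_le (f : ℤ[X]) {d : ℕ} (hd : d ≠ 0) (a N : ℕ) :
    |(#{n ∈ Ico a (a + N) | d ∣ (f.eval ((n : ℕ) : ℤ)).natAbs} : ℝ) - rootCount f d / d * N|
      ≤ rootCount f d := by
  rw [← count_dvd_eval_eq_rootCount f hd]
  exact abs_card_filter_Ico_sub_le_of_periodic (periodic_dvd_eval f d) hd a N

/-- The sieve detecting coprimality of `f n` with `P`, for `n` in `[a, a + N)`; its elements are
the numbers `|f n|`, counted with multiplicity. -/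
noncomputable def polynomialSieve (f : ℤ[X]) (a N : ℕ) {P : ℕ} (hP : Squarefree P)
    (hroot : ∀ p : ℕ, p.Prime → p ∣ P → 0 < rootCount f p ∧ rootCount f p < p) :
    BoundingSieve where
  support := (Ico a (a + N)).image fun n : ℕ => (f.eval (n : ℤ)).natAbs
  prodPrimes := P
  prodPrimes_squarefree := hP
  weights k := #{n ∈ Ico a (a + N) | (f.eval ((n : ℕ) : ℤ)).natAbs = k}
  weights_nonneg _ := by positivity
  totalMass := N
  nu := ((rootCount f : ArithmeticFunction ℕ) : ArithmeticFunction ℝ).pdiv ArithmeticFunction.id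
  nu_mult := (isMultiplicative_rootCount f).natCast.pdiv isMultiplicative_id.natCast
  nu_pos_of_prime p hp hpP := by
    have := (hroot p hp hpP).1
    have := hp.pos
    simp only [pdiv_apply, natCoe_apply, id_apply]
    positivity
  nu_lt_one_of_prime p hp hpP := by
    simp only [pdiv_apply, natCoe_apply, id_apply]
    rw [div_lt_one (by exact_mod_cast hp.pos)]
    exact_mod_cast (hroot p hp hpP).2

section

variable {f : ℤ[X]} {a N P : ℕ} {hP : Squarefree P}
  {hroot : ∀ p : ℕ, p.Prime → p ∣ P → 0 < rootCount f p ∧ rootCount f p < p}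

lemma siftedSum_polynomialSieve :
    (polynomialSieve f a N hP hroot).siftedSum
      = #{n ∈ Ico a (a + N) | P.Coprime (f.eval ((n : ℕ) : ℤ)).natAbs} := by
  have := sum_comp (s := Ico a (a + N)) (fun k => if P.Coprime k then (1 : ℝ) else 0)
    fun n : ℕ => (f.eval (n : ℤ)).natAbs
  simp only [sum_boole, nsmul_eq_mul, mul_ite, mul_one, mul_zero] at this
  rw [this]
  exact sum_congr rfl fun k _ => if_congr Iff.rfl rfl rfl

lemma abs_rem_polynomialSieve_le {d : ℕ} (hd : d ≠ 0) :
    |(polynomialSieve f a N hP hroot).rem d| ≤ rootCount f d := by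
  have := sum_comp (s := Ico a (a + N)) (fun k => if d ∣ k then (1 : ℝ) else 0)
    fun n : ℕ => (f.eval (n : ℤ)).natAbs
  simp only [sum_boole, nsmul_eq_mul, mul_ite, mul_one, mul_zero] at this
  have hmult : (polynomialSieve f a N hP hroot).multSum d
      = #{n ∈ Ico a (a + N) | d ∣ (f.eval ((n : ℕ) : ℤ)).natAbs} := by
    rw [this]
    exact sum_congr rfl fun k _ => if_congr Iff.rfl rfl rfl
  rw [BoundingSieve.rem, hmult]
  exact abs_card_filter_dvd_eval_sub_le f hd a N

lemma selbergTerms_polynomialSieve {l : ℕ} (hl : l ∣ P) :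
    (polynomialSieve f a N hP hroot).selbergTerms l
      = ∏ p ∈ l.primeFactors, (rootCount f p : ℝ) / (p - rootCount f p) := by
  rw [BoundingSieve.selbergTerms_apply, ← BoundingSieve.prod_primeFactors_nu hl,
    ← prod_mul_distrib]
  refine prod_congr rfl fun p hp => ?_
  have hp0 : (p : ℝ) ≠ 0 := by exact_mod_cast (Nat.prime_of_mem_primeFactors hp).ne_zero
  change (rootCount f p : ℝ) / p * (1 - (rootCount f p : ℝ) / p)⁻¹ = _
  rw [← div_eq_mul_inv, one_sub_div hp0, div_div_div_cancel_right₀ hp0]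

lemma selbergSum_polynomialSieve (y : ℝ) :
    selbergSum (polynomialSieve f a N hP hroot) y = ∑ l ∈ P.divisors with ((l : ℕ) : ℝ) ≤ y,
      ∏ p ∈ l.primeFactors, (rootCount f p : ℝ) / (p - rootCount f p) :=
  sum_congr rfl fun _ hl =>
    selbergTerms_polynomialSieve (Nat.dvd_of_mem_divisors (mem_filter.1 hl).1)

end

lemma rootCount_le_card_divisors {f : ℤ[X]} (hf : ∀ p : ℕ, p.Prime → rootCount f p ≤ 2) {d : ℕ}
    (hd : Squarefree d) : rootCount f d ≤ #d.divisors := by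
  rw [← (isMultiplicative_rootCount f).prod_primeFactors hd, Nat.card_divisors hd.ne_zero]
  refine prod_le_prod' fun p hp => (hf p (Nat.prime_of_mem_primeFactors hp)).trans ?_
  have := (Nat.prime_of_mem_primeFactors hp).factorization_pos_of_dvd hd.ne_zero
    (Nat.dvd_of_mem_primeFactors hp)
  lia

lemma card_divisors_lcm_le (a b : ℕ) : #(a.lcm b).divisors ≤ #a.divisors * #b.divisors := by
  rcases eq_or_ne (a * b) 0 with h | h
  · obtain rfl | rfl := mul_eq_zero.1 h <;> simp
  · calc #(a.lcm b).divisors ≤ #(a * b).divisors :=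
          card_le_card (Nat.divisors_subset_of_dvd h (Nat.lcm_dvd_mul a b))
      _ ≤ _ := by rw [Nat.divisors_mul]; exact card_mul_le

lemma sum_card_divisors_le {y : ℝ} (hy : 1 ≤ y) :
    ∑ d ∈ Ioc 0 ⌊y⌋₊, (#d.divisors : ℝ) ≤ y * (1 + log y) := by
  have hσ : ∑ d ∈ Ioc 0 ⌊y⌋₊, #d.divisors = ∑ n ∈ Ioc 0 ⌊y⌋₊, ⌊y⌋₊ / n := by
    rw [← sum_Ioc_sigma0_eq_sum_div]
    simp only [sigma_zero_apply]
  calc ∑ d ∈ Ioc 0 ⌊y⌋₊, (#d.divisors : ℝ) = ∑ n ∈ Ioc 0 ⌊y⌋₊, ((⌊y⌋₊ / n : ℕ) : ℝ) := by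
        exact_mod_cast hσ
    _ ≤ ∑ n ∈ Ioc 0 ⌊y⌋₊, y * (n : ℝ)⁻¹ := by
        refine sum_le_sum fun n _ => Nat.cast_div_le.trans ?_
        rw [← div_eq_mul_inv]
        gcongr
        exact Nat.floor_le (by linarith)
    _ = y * harmonic ⌊y⌋₊ := by
        rw [← mul_sum, harmonic_eq_sum_Icc]
        push_cast
        rfl
    _ ≤ y * (1 + log y) := by gcongr; exact harmonic_floor_le_one_add_log y hy

theorem card_coprime_eval_le {f : ℤ[X]} {P : ℕ} (hP : Squarefree P)
    (hroot : ∀ p : ℕ, p.Prime → p ∣ P → 0 < rootCount f p ∧ rootCount f p < p)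
    (hroot_two : ∀ p : ℕ, p.Prime → rootCount f p ≤ 2) (a N : ℕ) {y : ℝ} (hy : 1 ≤ y) :
    (#{n ∈ Ico a (a + N) | P.Coprime (f.eval ((n : ℕ) : ℤ)).natAbs} : ℝ)
      ≤ N / (∑ l ∈ P.divisors with ((l : ℕ) : ℝ) ≤ y,
          ∏ p ∈ l.primeFactors, (rootCount f p : ℝ) / (p - rootCount f p))
        + (y * (1 + log y)) ^ 2 := by
  have hrem : ∀ d₁ ∈ P.divisors, ∀ d₂ ∈ P.divisors,
      |(polynomialSieve f a N hP hroot).rem (d₁.lcm d₂)|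
        ≤ (#d₁.divisors : ℝ) * (#d₂.divisors : ℝ) := by
    intro d₁ hd₁ d₂ hd₂
    have hsq : Squarefree (d₁.lcm d₂) := hP.squarefree_of_dvd
      (Nat.lcm_dvd (Nat.dvd_of_mem_divisors hd₁) (Nat.dvd_of_mem_divisors hd₂))
    refine (abs_rem_polynomialSieve_le hsq.ne_zero).trans ?_
    exact_mod_cast (rootCount_le_card_divisors hroot_two hsq).trans (card_divisors_lcm_le d₁ d₂)
  have herr : ∑ d ∈ P.divisors with ((d : ℕ) : ℝ) ≤ y, (#d.divisors : ℝ) ≤ y * (1 + log y) := by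
    refine le_trans (sum_le_sum_of_subset_of_nonneg (fun d hd => ?_) fun _ _ _ => by positivity)
      (sum_card_divisors_le hy)
    rw [mem_filter] at hd
    exact mem_Ioc.2 ⟨Nat.pos_of_mem_divisors hd.1, Nat.le_floor hd.2⟩
  have hsieve := siftedSum_le_totalMass_div_selbergSum_add (s := polynomialSieve f a N hP hroot)
    hy hrem
  rw [siftedSum_polynomialSieve, selbergSum_polynomialSieve] at hsieve
  exact hsieve.trans (add_le_add_right (pow_le_pow_left₀ (sum_nonneg fun _ _ => by positivity)
    herr 2) _)

end PolynomialSieve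

section DilationSum

/-- The sum `∑ g(d) F(z / d)` over the divisors `d` of `P`, where `g` is extended multiplicatively
from primes to squarefree numbers. For the indicator of `[1, ∞)` as `F` it is the truncated sum
`∑ g(d)` over `d ≤ z`. -/
noncomputable def dilationSum (g : ℕ → ℝ) (P : ℕ) (F : ℝ → ℝ) (z : ℝ) : ℝ :=
  ∑ d ∈ P.divisors, (∏ p ∈ d.primeFactors, g p) * F (z / d)

variable {g h : ℕ → ℝ} {F G : ℝ → ℝ} {P q : ℕ} {z : ℝ}

lemma prod_primeFactors_nonneg_of_dvd (hg : ∀ p ∈ P.primeFactors, 0 ≤ g p) {d : ℕ}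
    (hd : d ∈ P.divisors) : 0 ≤ ∏ p ∈ d.primeFactors, g p :=
  prod_nonneg fun p hp => hg p <|
    Nat.primeFactors_mono (Nat.dvd_of_mem_divisors hd) (Nat.mem_divisors.1 hd).2 hp

@[simp]
lemma dilationSum_one : dilationSum g 1 F z = F z := by
  simp [dilationSum]

lemma dilationSum_prime_mul (hq : q.Prime) (hqP : q.Coprime P) :
    dilationSum g (q * P) F z = dilationSum g P F z + g q * dilationSum g P F (z / q) := by
  have hmul {d : ℕ} (hd : d ∈ P.divisors) :
      ∏ p ∈ (q * d).primeFactors, g p = g q * ∏ p ∈ d.primeFactors, g p := by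
    have hqd := hqP.coprime_dvd_right (Nat.dvd_of_mem_divisors hd)
    rw [hqd.primeFactors_mul, prod_union hqd.disjoint_primeFactors, hq.primeFactors, prod_singleton]
  rw [dilationSum, sum_divisors_mul_of_coprime hqP, hq.sum_divisors, add_comm, dilationSum,
    dilationSum, mul_sum]
  congr 1
  · simp only [one_mul]
  · refine sum_congr rfl fun d hd => ?_
    rw [hmul hd, Nat.cast_mul, div_div, mul_assoc]

lemma dilationSum_nonneg (hg : ∀ p ∈ P.primeFactors, 0 ≤ g p) (hF : ∀ t, 0 ≤ F t) :
    0 ≤ dilationSum g P F z :=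
  sum_nonneg fun _ hd => mul_nonneg (prod_primeFactors_nonneg_of_dvd hg hd) (hF _)

lemma monotone_dilationSum (hg : ∀ p ∈ P.primeFactors, 0 ≤ g p) (hF : Monotone F) :
    Monotone (dilationSum g P F) := fun _ _ hyz =>
  sum_le_sum fun _ hd => mul_le_mul_of_nonneg_left
    (hF (div_le_div_of_nonneg_right hyz (Nat.cast_nonneg _)))
    (prod_primeFactors_nonneg_of_dvd hg hd)

lemma dilationSum_le_dilationSum (hg : ∀ p ∈ P.primeFactors, 0 ≤ g p) (hz : 0 ≤ z)
    (hFG : ∀ t ≤ z, F t ≤ G t) : dilationSum g P F z ≤ dilationSum g P G z :=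
  sum_le_sum fun _ hd => mul_le_mul_of_nonneg_left
    (hFG _ (div_le_self hz (by exact_mod_cast Nat.pos_of_mem_divisors hd)))
    (prod_primeFactors_nonneg_of_dvd hg hd)

lemma squarefree_prime_mul_induction {motive : (P : ℕ) → Squarefree P → Prop}
    (one : motive 1 squarefree_one)
    (prime_mul : ∀ (q P : ℕ) (hq : q.Prime) (hqP : q.Coprime P) (hP : Squarefree P),
      motive P hP → motive (q * P) (Nat.squarefree_mul_iff.2 ⟨hqP, hq.prime.squarefree, hP⟩))
    (P : ℕ) (hP : Squarefree P) : motive P hP := by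
  induction P using induction_on_primes with
  | zero => exact absurd hP not_squarefree_zero
  | one => exact one
  | prime_mul q P hq ih =>
    obtain ⟨hqP, -, hP'⟩ := Nat.squarefree_mul_iff.1 hP
    exact prime_mul q P hq hqP hP' (ih hP')

lemma forall_mem_primeFactors_prime_mul {p : ℕ → Prop} (hq : q.Prime) (hP : P ≠ 0) :
    (∀ r ∈ (q * P).primeFactors, p r) ↔ p q ∧ ∀ r ∈ P.primeFactors, p r := by
  rw [Nat.primeFactors_mul hq.ne_zero hP, hq.primeFactors, singleton_union, forall_mem_insert]

lemma dilationSum_add_const_mul (c : ℝ) :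
    dilationSum g P (fun t => F t + c * G (t / q)) z =
      dilationSum g P F z + c * dilationSum g P G (z / q) := by
  simp only [dilationSum, mul_sum, ← sum_add_distrib]
  refine sum_congr rfl fun d _ => ?_
  rw [div_right_comm]
  ring

lemma dilationSum_dilationSum_le (hP : Squarefree P) (hF : Monotone F) (hz : 0 ≤ z)
    (hg : ∀ p ∈ P.primeFactors, 0 ≤ g p) (hh : ∀ p ∈ P.primeFactors, 0 ≤ h p) :
    dilationSum g P (dilationSum h P F) z ≤
      dilationSum (fun p => (1 + g p) * (1 + h p) - 1) P F z := by
  induction P, hP using squarefree_prime_mul_induction generalizing z with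
  | one => simp
  | prime_mul q P hq hqP hP ih =>
    rw [forall_mem_primeFactors_prime_mul hq hP.ne_zero] at hg hh
    have hq1 : (1 : ℝ) ≤ q := by exact_mod_cast hq.one_le
    have hmono : Monotone (dilationSum g P (dilationSum h P F)) :=
      monotone_dilationSum hg.2 (monotone_dilationSum hh.2 hF)
    have hinner : dilationSum h (q * P) F =
        fun t => dilationSum h P F t + h q * dilationSum h P F (t / q) :=
      funext fun t => dilationSum_prime_mul hq hqP
    calc dilationSum g (q * P) (dilationSum h (q * P) F) z
        = dilationSum g P (dilationSum h P F) z
          + (g q + h q) * dilationSum g P (dilationSum h P F) (z / q)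
          + g q * h q * dilationSum g P (dilationSum h P F) (z / q / q) := by
          rw [dilationSum_prime_mul hq hqP, hinner, dilationSum_add_const_mul,
            dilationSum_add_const_mul]
          ring
      _ ≤ dilationSum g P (dilationSum h P F) z
          + (g q + h q) * dilationSum g P (dilationSum h P F) (z / q)
          + g q * h q * dilationSum g P (dilationSum h P F) (z / q) := by
          gcongr
          · exact mul_nonneg hg.1 hh.1
          · exact hmono (div_le_self (by positivity) hq1)
      _ = dilationSum g P (dilationSum h P F) z
          + ((1 + g q) * (1 + h q) - 1) * dilationSum g P (dilationSum h P F) (z / q) := by ring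
      _ ≤ _ := by
          rw [dilationSum_prime_mul hq hqP]
          gcongr
          · exact ih hz hg.2 hh.2
          · nlinarith [mul_nonneg hg.1 hh.1, hg.1, hh.1]
          · exact ih (by positivity) hg.2 hh.2

lemma add_mul_apply_div_le {a b r : ℝ} {l : ℕ} (hF : Monotone F) (hF0 : ∀ t, 0 ≤ F t) (hz : 0 ≤ z)
    (hq : 0 < q) (ha : 0 ≤ a) (hr : 0 ≤ r) (hab : 1 + a ≤ r * (1 + b))
    (hrl : l = q ∨ l = 1 ∧ 1 ≤ r) :
    F z + a * F (z / q) ≤ r * (F (l * z) + b * F (l * z / q)) := by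
  have hq1 : (1 : ℝ) ≤ q := by exact_mod_cast hq
  have hle : F (z / q) ≤ F z := hF (div_le_self hz hq1)
  rcases hrl with rfl | ⟨rfl, hr1⟩
  · have hle' : F z ≤ F (l * z) := hF (le_mul_of_one_le_left hz hq1)
    rw [mul_div_cancel_left₀ _ (by positivity)]
    calc F z + a * F (z / l) ≤ (1 + a) * F z := by nlinarith [mul_le_mul_of_nonneg_left hle ha]
      _ ≤ r * (1 + b) * F z := mul_le_mul_of_nonneg_right hab (hF0 z)
      _ ≤ r * (F (l * z) + b * F z) := by nlinarith [mul_le_mul_of_nonneg_left hle' hr]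
  · rw [Nat.cast_one, one_mul]
    nlinarith [mul_nonneg (sub_nonneg.2 hr1) (sub_nonneg.2 hle),
      mul_le_mul_of_nonneg_right hab (hF0 (z / q))]

lemma dilationSum_le_prod_mul_dilationSum {ρ : ℕ → ℝ} {ℓ : ℕ → ℕ} (hP : Squarefree P)
    (hF : Monotone F) (hF0 : ∀ t, 0 ≤ F t) (hz : 0 ≤ z)
    (hg : ∀ p ∈ P.primeFactors, 0 ≤ g p) (hh : ∀ p ∈ P.primeFactors, 0 ≤ h p)
    (hgh : ∀ p ∈ P.primeFactors, 1 + g p ≤ ρ p * (1 + h p))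
    (hρℓ : ∀ p ∈ P.primeFactors, ℓ p = p ∨ ℓ p = 1 ∧ 1 ≤ ρ p) :
    dilationSum g P F z ≤ (∏ p ∈ P.primeFactors, ρ p) *
      dilationSum h P F (z * ∏ p ∈ P.primeFactors, (ℓ p : ℝ)) := by
  induction P, hP using squarefree_prime_mul_induction generalizing z with
  | one => simp
  | prime_mul q P hq hqP hP ih =>
    have hρ : ∀ p ∈ (q * P).primeFactors, 0 ≤ ρ p := fun p hp => by
      nlinarith [hgh p hp, hg p hp, hh p hp]
    rw [forall_mem_primeFactors_prime_mul hq hP.ne_zero] at hg hh hgh hρℓ hρ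
    have hprod (u : ℕ → ℝ) :
        ∏ p ∈ (q * P).primeFactors, u p = u q * ∏ p ∈ P.primeFactors, u p := by
      rw [hqP.primeFactors_mul, prod_union hqP.disjoint_primeFactors, hq.primeFactors,
        prod_singleton]
    set R := ∏ p ∈ P.primeFactors, ρ p
    set L := ∏ p ∈ P.primeFactors, (ℓ p : ℝ)
    have hR : 0 ≤ R := prod_nonneg hρ.2
    have hzL : 0 ≤ z * L := mul_nonneg hz (prod_nonneg fun _ _ => Nat.cast_nonneg _)
    have hlocal : dilationSum h P F (z * L) + g q * dilationSum h P F (z * L / q) ≤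
        ρ q * (dilationSum h P F (ℓ q * (z * L)) + h q * dilationSum h P F (ℓ q * (z * L) / q)) :=
      add_mul_apply_div_le (monotone_dilationSum hh.2 hF) (fun t => dilationSum_nonneg hh.2 hF0)
        hzL hq.pos hg.1 hρ.1 hgh.1 hρℓ.1
    calc dilationSum g (q * P) F z
        = dilationSum g P F z + g q * dilationSum g P F (z / q) := dilationSum_prime_mul hq hqP
      _ ≤ R * dilationSum h P F (z * L) + g q * (R * dilationSum h P F (z / q * L)) := by
          gcongr
          · exact ih hz hg.2 hh.2 hgh.2 hρℓ.2
          · exact hg.1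
          · exact ih (by positivity) hg.2 hh.2 hgh.2 hρℓ.2
      _ = R * (dilationSum h P F (z * L) + g q * dilationSum h P F (z * L / q)) := by
          rw [div_mul_eq_mul_div]
          ring
      _ ≤ R * _ := mul_le_mul_of_nonneg_left hlocal hR
      _ = _ := by
          rw [hprod, hprod, dilationSum_prime_mul hq hqP, mul_left_comm z]
          ring

lemma sum_filter_primeFactors_subset_prime_mul_le {f : ℕ → ℝ} (hq : q.Prime) (hP : P ≠ 0)
    (hf : ∀ n, 0 ≤ f n) (N : ℕ) :
    ∑ n ∈ Ioc 0 N with n.primeFactors ⊆ (q * P).primeFactors, f n ≤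
      ∑ n ∈ Ioc 0 N with n.primeFactors ⊆ P.primeFactors, f n +
        ∑ m ∈ Ioc 0 (N / q) with m.primeFactors ⊆ (q * P).primeFactors, f (q * m) := by
  have hinj : Set.InjOn (q * ·) (↑{m ∈ Ioc 0 (N / q) | m.primeFactors ⊆ (q * P).primeFactors} :
      Set ℕ) := fun a _ b _ => Nat.eq_of_mul_eq_mul_left hq.pos
  rw [← sum_image (g := (q * ·)) (f := f) hinj]
  rw [← sum_filter_not_add_sum_filter _ (q ∣ ·)]
  refine add_le_add (sum_le_sum_of_subset_of_nonneg (fun n hn => ?_) fun n _ _ => hf n)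
    (sum_le_sum_of_subset_of_nonneg (fun n hn => ?_) fun n _ _ => hf n)
  · simp only [mem_filter, Nat.primeFactors_mul hq.ne_zero hP, hq.primeFactors,
      singleton_union] at hn ⊢
    have hqn : q ∉ n.primeFactors := fun h => hn.2 (Nat.dvd_of_mem_primeFactors h)
    exact ⟨hn.1.1, (subset_insert_iff_of_notMem hqn).1 hn.1.2⟩
  · obtain ⟨⟨hn, hsub⟩, m, rfl⟩ := by simpa only [mem_filter] using hn
    have hm : 0 < m := pos_of_mul_pos_right (mem_Ioc.1 hn).1 (Nat.zero_le q)
    exact mem_image_of_mem _ <| mem_filter.2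
      ⟨mem_Ioc.2 ⟨hm, (Nat.le_div_iff_mul_le hq.pos).2 (mul_comm q m ▸ (mem_Ioc.1 hn).2)⟩,
        (Nat.primeFactors_mono (dvd_mul_left m q) (mul_ne_zero hq.ne_zero hm.ne')).trans hsub⟩

lemma one_div_sub_one_nonneg_of_mem_primeFactors {p : ℕ} (hp : p ∈ P.primeFactors) :
    (0 : ℝ) ≤ 1 / ((p : ℝ) - 1) :=
  one_div_nonneg.2 <| sub_nonneg.2 <|
    Nat.one_le_cast.2 (Nat.prime_of_mem_primeFactors hp).one_le

lemma sum_div_le_dilationSum (hP : Squarefree P) (hF : Monotone F) (hF0 : ∀ t, 0 ≤ F t)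
    (hz : 0 ≤ z) (N : ℕ) :
    ∑ n ∈ Ioc 0 N with n.primeFactors ⊆ P.primeFactors, F (z / n) / n ≤
      dilationSum (fun p => 1 / ((p : ℝ) - 1)) P F z := by
  induction P, hP using squarefree_prime_mul_induction generalizing z N with
  | one =>
    have hsub : {n ∈ Ioc 0 N | n.primeFactors ⊆ Nat.primeFactors 1} ⊆ {1} := fun n hn => by
      simp only [Nat.primeFactors_one, subset_empty, Nat.primeFactors_eq_empty, mem_filter,
        mem_Ioc] at hn
      exact mem_singleton.2 (hn.2.resolve_left hn.1.1.ne')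
    refine (sum_le_sum_of_subset_of_nonneg hsub fun n _ _ =>
      div_nonneg (hF0 _) n.cast_nonneg).trans ?_
    simp
  | prime_mul q P hq hqP hP ihP =>
    have hq1 : (1 : ℝ) < q := by exact_mod_cast hq.one_lt
    set D := dilationSum (fun p => 1 / ((p : ℝ) - 1)) P F
    have hmono : Monotone D :=
      monotone_dilationSum (fun _ => one_div_sub_one_nonneg_of_mem_primeFactors) hF
    induction N using Nat.strong_induction_on generalizing z with
    | _ N ihN =>
    rcases N.eq_zero_or_pos with rfl | hN
    · simpa using dilationSum_nonneg (fun _ => one_div_sub_one_nonneg_of_mem_primeFactors) hF0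
    have hfactor (m : ℕ) : F (z / (q * m : ℕ)) / (q * m : ℕ) = 1 / q * (F (z / q / m) / m) := by
      rw [Nat.cast_mul, div_div, one_div_mul_eq_div, div_div, mul_comm (m : ℝ)]
    calc _ ≤ D z + 1 / q * (D (z / q) + 1 / ((q : ℝ) - 1) * D (z / q / q)) := by
          refine (sum_filter_primeFactors_subset_prime_mul_le hq hP.ne_zero
            (fun n => div_nonneg (hF0 _) n.cast_nonneg) N).trans ?_
          simp only [hfactor, ← mul_sum]
          gcongr
          · exact ihP hz N
          · rw [← dilationSum_prime_mul hq hqP]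
            exact ihN _ (Nat.div_lt_self hN hq.one_lt) (by positivity)
      _ ≤ D z + 1 / q * (D (z / q) + 1 / ((q : ℝ) - 1) * D (z / q)) := by
          have := hmono (div_le_self (by positivity : 0 ≤ z / q) hq1.le)
          have := sub_pos.2 hq1
          gcongr
      _ = D z + 1 / ((q : ℝ) - 1) * D (z / q) := by
          have := sub_pos.2 hq1
          field_simp
          ring
      _ = _ := (dilationSum_prime_mul hq hqP).symm

lemma indicator_Ici_one_nonneg (t : ℝ) : 0 ≤ (Set.Ici (1 : ℝ)).indicator (1 : ℝ → ℝ) t :=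
  Set.indicator_nonneg (fun _ _ => zero_le_one) t

lemma monotone_indicator_Ici_one : Monotone ((Set.Ici (1 : ℝ)).indicator (1 : ℝ → ℝ)) :=
  fun s t hst => by
    by_cases hs : 1 ≤ s
    · simp [hs, hs.trans hst]
    · rw [Set.indicator_of_notMem (by simpa using hs)]
      exact indicator_Ici_one_nonneg t

lemma dilationSum_indicator_Ici_one :
    dilationSum g P ((Set.Ici 1).indicator 1) z =
      ∑ d ∈ P.divisors with ((d : ℕ) : ℝ) ≤ z, ∏ p ∈ d.primeFactors, g p := by
  rw [dilationSum, sum_filter]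
  refine sum_congr rfl fun d hd => ?_
  have hd0 : (0 : ℝ) < d := by exact_mod_cast Nat.pos_of_mem_divisors hd
  simp only [Set.indicator_apply, Set.mem_Ici, one_le_div hd0, Pi.one_apply, mul_ite, mul_one,
    mul_zero]

lemma filter_primeFactors_subset_eq (hP : P ≠ 0) (hz : 0 ≤ z)
    (hzP : ∀ p : ℕ, p.Prime → p ≤ z → p ∣ P) :
    {n ∈ Ioc 0 ⌊z⌋₊ | n.primeFactors ⊆ P.primeFactors} = Ioc 0 ⌊z⌋₊ :=
  filter_true_of_mem fun n hn p hp => by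
    have hpn : p ≤ ⌊z⌋₊ := (Nat.le_of_mem_primeFactors hp).trans (mem_Ioc.1 hn).2
    have hp := Nat.prime_of_mem_primeFactors hp
    exact Nat.mem_primeFactors.2 ⟨hp, hzP p hp ((Nat.le_floor_iff hz).1 hpn), hP⟩

lemma log_max_one_le_dilationSum (hP : Squarefree P) (hzP : ∀ p : ℕ, p.Prime → p ≤ z → p ∣ P) :
    log (max 1 z) ≤ dilationSum (fun p => 1 / ((p : ℝ) - 1)) P ((Set.Ici 1).indicator 1) z := by
  rcases le_total z 1 with hz | hz
  · rw [max_eq_left hz, log_one]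
    exact dilationSum_nonneg (fun _ => one_div_sub_one_nonneg_of_mem_primeFactors)
      indicator_Ici_one_nonneg
  have hz0 : 0 ≤ z := zero_le_one.trans hz
  calc log (max 1 z) ≤ harmonic ⌊z⌋₊ := by
        rw [max_eq_right hz]
        exact log_le_harmonic_floor z hz0
    _ = ∑ n ∈ Ioc 0 ⌊z⌋₊, (Set.Ici (1 : ℝ)).indicator (1 : ℝ → ℝ) (z / n) / n := by
        rw [harmonic_eq_sum_Icc, Rat.cast_sum]
        refine sum_congr rfl fun n hn => ?_
        obtain ⟨hn0, hnz⟩ := mem_Ioc.1 hn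
        have : 1 ≤ z / n :=
          (one_le_div (by exact_mod_cast hn0)).2 ((Nat.le_floor_iff hz0).1 hnz)
        simp [this]
    _ ≤ _ := by
        rw [← filter_primeFactors_subset_eq hP.ne_zero hz0 hzP]
        exact sum_div_le_dilationSum hP monotone_indicator_Ici_one indicator_Ici_one_nonneg hz0 _

lemma log_max_one_nonneg (t : ℝ) : 0 ≤ log (max 1 t) :=
  log_nonneg (le_max_left 1 t)

lemma monotone_log_max_one : Monotone fun t : ℝ => log (max 1 t) := fun _ _ hst =>
  log_le_log (by positivity) (max_le_max_left 1 hst)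

lemma log_max_one_sq_sub_le {n : ℕ} (hn : 0 < n) (hz : 0 ≤ z) :
    log (max 1 (z / n)) ^ 2 / 2 - log (max 1 (z / (n + 1 : ℕ))) ^ 2 / 2 ≤
      log (max 1 (z / n)) / n := by
  have hn0 : (0 : ℝ) < n := by exact_mod_cast hn
  have hmono : log (max 1 (z / (n + 1 : ℕ))) ≤ log (max 1 (z / n)) :=
    monotone_log_max_one (div_le_div_of_nonneg_left hz hn0 (by push_cast; linarith))
  have hmax : max 1 (z / n) ≤ (1 + 1 / n) * max 1 (z / (n + 1 : ℕ)) := by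
    have hone : (1 : ℝ) ≤ 1 + 1 / n := le_add_of_nonneg_right (by positivity)
    refine max_le (one_le_mul_of_one_le_of_one_le hone (le_max_left _ _)) ?_
    calc z / n = (1 + 1 / n) * (z / (n + 1 : ℕ)) := by push_cast; field_simp
      _ ≤ _ := by gcongr; exact le_max_right _ _
  have hdiff : log (max 1 (z / n)) ≤ 1 / n + log (max 1 (z / (n + 1 : ℕ))) :=
    calc _ ≤ log ((1 + 1 / n) * max 1 (z / (n + 1 : ℕ))) := log_le_log (by positivity) hmax
      _ = log (1 + 1 / n) + log (max 1 (z / (n + 1 : ℕ))) :=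
          log_mul (by positivity) (by positivity)
      _ ≤ _ := by
          gcongr
          linarith [log_le_sub_one_of_pos (show (0 : ℝ) < 1 + 1 / n by positivity)]
  have := log_max_one_nonneg (z / (n + 1 : ℕ))
  rw [div_eq_mul_one_div (log _)]
  nlinarith

lemma log_sq_half_le_sum (hz : 1 ≤ z) :
    log z ^ 2 / 2 ≤ ∑ n ∈ Ioc 0 ⌊z⌋₊, log (max 1 (z / n)) / n := by
  have hz0 : 0 ≤ z := zero_le_one.trans hz
  have hlast : z / (⌊z⌋₊ + 1 : ℕ) ≤ 1 := by
    rw [div_le_one (by positivity)]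
    exact_mod_cast (Nat.lt_floor_add_one z).le
  calc log z ^ 2 / 2
      = ∑ n ∈ Ico 1 (⌊z⌋₊ + 1), (log (max 1 (z / n)) ^ 2 / 2 -
          log (max 1 (z / (n + 1 : ℕ))) ^ 2 / 2) := by
        rw [← neg_inj, ← sum_neg_distrib]
        simp only [neg_sub]
        rw [sum_Ico_sub (fun n : ℕ => log (max 1 (z / n)) ^ 2 / 2) (by simp), max_eq_left hlast]
        simp [max_eq_right hz]
    _ ≤ ∑ n ∈ Ico 1 (⌊z⌋₊ + 1), log (max 1 (z / n)) / n :=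
        sum_le_sum fun n hn => log_max_one_sq_sub_le (mem_Ico.1 hn).1 hz0

lemma log_sq_half_le_dilationSum (hP : Squarefree P)
    (hzP : ∀ p : ℕ, p.Prime → p ≤ z → p ∣ P) (hz : 1 ≤ z) :
    log z ^ 2 / 2 ≤
      dilationSum (fun p => (1 + 1 / ((p : ℝ) - 1)) * (1 + 1 / ((p : ℝ) - 1)) - 1) P
        ((Set.Ici 1).indicator 1) z := by
  have hz0 : 0 ≤ z := zero_le_one.trans hz
  have hα : ∀ p ∈ P.primeFactors, (0 : ℝ) ≤ 1 / ((p : ℝ) - 1) := fun _ =>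
    one_div_sub_one_nonneg_of_mem_primeFactors
  calc log z ^ 2 / 2 ≤ ∑ n ∈ Ioc 0 ⌊z⌋₊, log (max 1 (z / n)) / n := log_sq_half_le_sum hz
    _ ≤ dilationSum (fun p => 1 / ((p : ℝ) - 1)) P (fun t => log (max 1 t)) z := by
        rw [← filter_primeFactors_subset_eq hP.ne_zero hz0 hzP]
        exact sum_div_le_dilationSum hP monotone_log_max_one log_max_one_nonneg hz0 _
    _ ≤ dilationSum (fun p => 1 / ((p : ℝ) - 1)) P
          (dilationSum (fun p => 1 / ((p : ℝ) - 1)) P ((Set.Ici 1).indicator 1)) z :=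
        dilationSum_le_dilationSum hα hz0 fun t ht =>
          log_max_one_le_dilationSum hP fun p hp hpt => hzP p hp (hpt.trans ht)
    _ ≤ _ := dilationSum_dilationSum_le hP monotone_indicator_Ici_one hz0 hα hα

end DilationSum

section PrimePairs

open Polynomial

variable {m w N p : ℕ} {y z : ℝ}

/-- The Euler factor at `p` of the singular series of the prime pairs `q`, `m q + 1`, where the
primes `p > w` not dividing `m` are given the factor `1`. -/
noncomputable def pairFactor (w m p : ℕ) : ℝ :=
  if p ∣ m then p / (p - 1) else if p ≤ w then 1 - 1 / ((p : ℝ) - 1) ^ 2 else 1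

lemma setOf_aeval_eq_zero_eq [Fact p.Prime] :
    {a : ZMod p | aeval a (X * (C (m : ℤ) * X + 1) : ℤ[X]) = 0} =
      if p ∣ m then {0} else {0, -(m : ZMod p)⁻¹} := by
  ext a
  have hm : (m : ZMod p) = 0 ↔ p ∣ m := ZMod.natCast_eq_zero_iff m p
  by_cases hp : p ∣ m
  · simp [hp, hm.2 hp]
  · have h0 : (m : ZMod p) ≠ 0 := fun h => hp (hm.1 h)
    have hroot : (m : ZMod p) * a + 1 = 0 ↔ a = -(m : ZMod p)⁻¹ := by
      rw [add_eq_zero_iff_eq_neg, ← eq_inv_mul_iff_mul_eq₀ h0, mul_neg_one]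
    simp [hp, hroot]

lemma rootCount_X_mul_add_one (hp : p.Prime) :
    rootCount (X * (C (m : ℤ) * X + 1)) p = if p ∣ m then 1 else 2 := by
  have := Fact.mk hp
  have hcard : rootCount (X * (C (m : ℤ) * X + 1)) p =
      Set.ncard {a : ZMod p | aeval a (X * (C (m : ℤ) * X + 1) : ℤ[X]) = 0} :=
    rootCount_apply _ p
  rw [hcard, setOf_aeval_eq_zero_eq]
  split_ifs with hpm
  · exact Set.ncard_singleton 0
  · rw [Set.ncard_pair]
    have h0 : (m : ZMod p) ≠ 0 := fun h => hpm ((ZMod.natCast_eq_zero_iff m p).1 h)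
    simpa [eq_comm] using h0

lemma rootCount_X_mul_add_one_lt (hp : p.Prime) (hm : Even m) :
    rootCount (X * (C (m : ℤ) * X + 1)) p < p := by
  rw [rootCount_X_mul_add_one hp]
  split_ifs with hpm
  · exact hp.one_lt
  · exact hp.two_le.lt_of_ne fun h => hpm (h ▸ hm.two_dvd)

lemma pairFactor_nonneg (hp : p.Prime) : 0 ≤ pairFactor w m p := by
  have hp2 : (1 : ℝ) ≤ p - 1 := by
    have : (2 : ℝ) ≤ p := by exact_mod_cast hp.two_le
    linarith
  unfold pairFactor
  split_ifs
  · positivity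
  · exact sub_nonneg.2 (by rw [div_le_one (by positivity)]; exact one_le_pow₀ hp2)
  · exact zero_le_one

lemma one_le_pairFactor (hp : p.Prime) (hpw : ¬ p ≤ w) : 1 ≤ pairFactor w m p := by
  have hp1 : (1 : ℝ) < p := by exact_mod_cast hp.one_lt
  rw [pairFactor, if_neg hpw]
  split_ifs
  · rw [one_le_div (by linarith)]
    linarith
  · exact le_rfl

lemma one_add_sq_le_pairFactor_mul (hp : p.Prime) (hm : Even m) :
    1 + ((1 + 1 / ((p : ℝ) - 1)) * (1 + 1 / ((p : ℝ) - 1)) - 1) ≤ pairFactor w m p *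
      (1 + (rootCount (X * (C (m : ℤ) * X + 1)) p : ℝ) /
        (p - rootCount (X * (C (m : ℤ) * X + 1)) p)) := by
  have hlt : (rootCount (X * (C (m : ℤ) * X + 1)) p : ℝ) < p := by
    exact_mod_cast rootCount_X_mul_add_one_lt hp hm
  have hp1 : (1 : ℝ) < p := by exact_mod_cast hp.one_lt
  have hp1' : (p : ℝ) - 1 ≠ 0 := by linarith
  rw [rootCount_X_mul_add_one hp] at hlt ⊢
  unfold pairFactor
  split_ifs at hlt ⊢ with hpm hpw
  · push_cast at hlt ⊢
    apply le_of_eq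
    field_simp
    ring
  · push_cast at hlt ⊢
    have hp2' : (p : ℝ) - 2 ≠ 0 := by linarith
    apply le_of_eq
    field_simp
    ring
  · push_cast at hlt ⊢
    rw [one_add_div (by linarith), one_add_div (by linarith), one_mul, add_sub_cancel,
      div_mul_div_comm, div_le_div_iff₀ (by nlinarith) (by linarith)]
    nlinarith

lemma prod_ite_le_primorial (Y : ℕ) :
    ∏ p ∈ Y.primesLE, ((if p ≤ w then p else 1 : ℕ) : ℝ) ≤ primorial w := by
  rw [← Nat.cast_prod, ← prod_filter, primorial_eq_prod_primesLE]
  refine Nat.cast_le.2 (prod_le_prod_of_subset_of_one_le' (fun p hp => ?_) fun p hp _ => ?_)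
  · rw [mem_filter, Nat.mem_primesLE] at hp
    exact Nat.mem_primesLE.2 ⟨hp.2, hp.1.2⟩
  · exact (Nat.prime_of_mem_primesLE hp).one_le

lemma log_sq_half_le_prod_pairFactor_mul (hm : Even m) (hz : 1 ≤ z) (hzy : z * primorial w ≤ y) :
    log z ^ 2 / 2 ≤ (∏ p ∈ ⌊z⌋₊.primesLE, pairFactor w m p) *
      dilationSum (fun p => (rootCount (X * (C (m : ℤ) * X + 1)) p : ℝ) /
        (p - rootCount (X * (C (m : ℤ) * X + 1)) p)) (primorial ⌊z⌋₊)
          ((Set.Ici 1).indicator 1) y := by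
  have hz0 : 0 ≤ z := zero_le_one.trans hz
  have hprime {p : ℕ} (hp : p ∈ (primorial ⌊z⌋₊).primeFactors) := Nat.prime_of_mem_primeFactors hp
  have hg : ∀ p ∈ (primorial ⌊z⌋₊).primeFactors, (0 : ℝ) ≤
      (rootCount (X * (C (m : ℤ) * X + 1)) p : ℝ) / (p - rootCount (X * (C (m : ℤ) * X + 1)) p) :=
    fun p hp => div_nonneg (Nat.cast_nonneg _)
      (sub_nonneg.2 (by exact_mod_cast (rootCount_X_mul_add_one_lt (hprime hp) hm).le))
  refine (log_sq_half_le_dilationSum (squarefree_primorial ⌊z⌋₊)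
    (fun p hp hpz => hp.dvd_primorial_iff.2 (Nat.le_floor hpz)) hz).trans ?_
  refine (dilationSum_le_prod_mul_dilationSum (ρ := pairFactor w m)
    (ℓ := fun p => if p ≤ w then p else 1) (squarefree_primorial _) monotone_indicator_Ici_one
    indicator_Ici_one_nonneg hz0 (fun p hp => ?_) hg
    (fun p hp => one_add_sq_le_pairFactor_mul (hprime hp) hm) fun p hp => ?_).trans ?_
  · have := one_div_sub_one_nonneg_of_mem_primeFactors hp
    nlinarith
  · by_cases hpw : p ≤ w
    · exact Or.inl (if_pos hpw)
    · exact Or.inr ⟨if_neg hpw, one_le_pairFactor (hprime hp) hpw⟩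
  · rw [primeFactors_primorial]
    refine mul_le_mul_of_nonneg_left (monotone_dilationSum hg monotone_indicator_Ici_one ?_)
      (prod_nonneg fun p hp => pairFactor_nonneg (Nat.prime_of_mem_primesLE hp))
    exact (mul_le_mul_of_nonneg_left (prod_ite_le_primorial _) hz0).trans hzy

lemma card_prime_pairs_le_floor_add (hm0 : 0 < m) (Y : ℕ) :
    #{q ∈ Ioc 0 N | q.Prime ∧ (m * q + 1).Prime} ≤ Y + #{n ∈ Ico 1 (1 + N) |
      (primorial Y).Coprime ((X * (C (m : ℤ) * X + 1) : ℤ[X]).eval ((n : ℕ) : ℤ)).natAbs} := by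
  have hsub : {q ∈ Ioc 0 N | q.Prime ∧ (m * q + 1).Prime} ⊆ Ioc 0 Y ∪ {n ∈ Ico 1 (1 + N) |
      (primorial Y).Coprime
        ((X * (C (m : ℤ) * X + 1) : ℤ[X]).eval ((n : ℕ) : ℤ)).natAbs} := fun q hq => by
    obtain ⟨hqN, hq, hmq⟩ := mem_filter.1 hq
    rw [mem_Ioc] at hqN
    rw [mem_union, mem_Ioc, mem_filter, mem_Ico]
    refine (le_or_gt q Y).imp (fun h => ⟨hq.pos, h⟩) fun hYq => ⟨by lia, ?_⟩
    have heval : ((X * (C (m : ℤ) * X + 1) : ℤ[X]).eval ((q : ℕ) : ℤ)).natAbs =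
        q * (m * q + 1) := by
      simp only [eval_mul, eval_X, eval_add, eval_C, eval_one]
      exact_mod_cast Int.natAbs_natCast _
    have hYmq : Y < m * q + 1 := hYq.trans_le ((Nat.le_mul_of_pos_left q hm0).trans (Nat.le_succ _))
    rw [heval, Nat.coprime_mul_iff_right, Nat.coprime_comm, hq.coprime_iff_not_dvd,
      hq.dvd_primorial_iff, Nat.coprime_comm, hmq.coprime_iff_not_dvd, hmq.dvd_primorial_iff]
    exact ⟨hYq.not_ge, hYmq.not_ge⟩
  simpa using (card_le_card hsub).trans (card_union_le _ _)

theorem card_prime_pairs_le (hm : Even m) (hm0 : 0 < m) (hz : 1 < z)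
    (hzy : z * primorial w ≤ y) :
    (#{q ∈ Ioc 0 N | q.Prime ∧ (m * q + 1).Prime} : ℝ) ≤
      z + 2 * (∏ p ∈ ⌊z⌋₊.primesLE, pairFactor w m p) * N / log z ^ 2 +
        (y * (1 + log y)) ^ 2 := by
  have hz0 : 0 ≤ z := zero_le_one.trans hz.le
  have hy : 1 ≤ y := (one_le_mul_of_one_le_of_one_le hz.le
    (by exact_mod_cast primorial_pos w)).trans hzy
  have hlog := log_sq_half_le_prod_pairFactor_mul hm hz.le hzy
  rw [dilationSum_indicator_Ici_one] at hlog
  have hsieve := card_coprime_eval_le (f := X * (C (m : ℤ) * X + 1))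
    (squarefree_primorial ⌊z⌋₊)
    (fun p hp _ => ⟨by rw [rootCount_X_mul_add_one hp]; split_ifs <;> simp,
      rootCount_X_mul_add_one_lt hp hm⟩)
    (fun p hp => by rw [rootCount_X_mul_add_one hp]; split_ifs <;> simp) 1 N hy
  set G := ∑ l ∈ (primorial ⌊z⌋₊).divisors with ((l : ℕ) : ℝ) ≤ y,
    ∏ p ∈ l.primeFactors, (rootCount (X * (C (m : ℤ) * X + 1)) p : ℝ) /
      (p - rootCount (X * (C (m : ℤ) * X + 1)) p)
  set R := ∏ p ∈ ⌊z⌋₊.primesLE, pairFactor w m p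
  have hR : 0 ≤ R := prod_nonneg fun p hp => pairFactor_nonneg (Nat.prime_of_mem_primesLE hp)
  have hlog0 : 0 < log z ^ 2 := pow_pos (log_pos hz) 2
  have hG : 0 < G := pos_of_mul_pos_right ((half_pos hlog0).trans_le hlog) hR
  have hmain : (N : ℝ) / G ≤ 2 * R * N / log z ^ 2 := by
    rw [div_le_div_iff₀ hG hlog0]
    nlinarith [mul_le_mul_of_nonneg_left hlog (Nat.cast_nonneg (α := ℝ) N)]
  calc _ ≤ (⌊z⌋₊ : ℝ) + #{n ∈ Ico 1 (1 + N) | (primorial ⌊z⌋₊).Coprime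
        ((X * (C (m : ℤ) * X + 1) : ℤ[X]).eval ((n : ℕ) : ℤ)).natAbs} := by
        exact_mod_cast card_prime_pairs_le_floor_add hm0 ⌊z⌋₊
    _ ≤ z + (N / G + (y * (1 + log y)) ^ 2) := add_le_add (Nat.floor_le hz0) hsieve
    _ ≤ _ := by linarith

end PrimePairs

section Averaging

variable {f : ℕ → ℝ} {s : Finset ℕ} {K L x : ℝ} {m w D M N Y : ℕ}

lemma prod_ite_sub_zero_eq {t : Finset ℕ} (ht : ∀ p ∈ t, p.Prime) (g : ℕ → ℝ) :
    ∏ p ∈ t, (if p ∣ m then g p else 0) = if ∏ p ∈ t, p ∣ m then ∏ p ∈ t, g p else 0 := by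
  rw [prod_ite_zero]
  refine if_congr ⟨fun h => prod_primes_dvd m (fun p hp => (ht p hp).prime) h,
    fun h p hp => (dvd_prod_of_mem _ hp).trans h⟩ rfl rfl

lemma sum_prod_ite_dvd_mul_le {S : Finset ℕ} (hS : ∀ p ∈ S, p.Prime) {u v : ℕ → ℝ}
    (hu : ∀ p ∈ S, 0 ≤ u p) (huv : ∀ p ∈ S, u p ≤ v p)
    (hf : ∀ D, D ≠ 0 → ∑ m ∈ s with D ∣ m, f m ≤ K / D) :
    ∑ m ∈ s, (∏ p ∈ S, if p ∣ m then v p else u p) * f m ≤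
      K * ∏ p ∈ S, (u p + (v p - u p) / p) := by
  have hexpand (m : ℕ) : (∏ p ∈ S, if p ∣ m then v p else u p) = ∑ t ∈ S.powerset,
      (∏ p ∈ t, (v p - u p)) * (∏ p ∈ S \ t, u p) * if ∏ p ∈ t, p ∣ m then 1 else 0 := by
    calc _ = ∏ p ∈ S, ((if p ∣ m then v p - u p else 0) + u p) :=
          prod_congr rfl fun p _ => by split_ifs <;> ring
      _ = _ := by
          rw [prod_add]
          refine sum_congr rfl fun t ht => ?_
          rw [prod_ite_sub_zero_eq fun p hp => hS p (mem_powerset.1 ht hp)]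
          split_ifs <;> ring
  calc _ = ∑ t ∈ S.powerset, (∏ p ∈ t, (v p - u p)) * (∏ p ∈ S \ t, u p) *
        ∑ m ∈ s with ∏ p ∈ t, p ∣ m, f m := by
        simp only [hexpand, sum_mul, sum_filter, mul_sum]
        rw [sum_comm]
        refine sum_congr rfl fun t _ => sum_congr rfl fun m _ => ?_
        split_ifs <;> ring
    _ ≤ ∑ t ∈ S.powerset, (∏ p ∈ t, (v p - u p)) * (∏ p ∈ S \ t, u p) *
        (K / (∏ p ∈ t, p : ℕ)) := by
        refine sum_le_sum fun t ht => mul_le_mul_of_nonneg_left (hf _ ?_) (mul_nonneg ?_ ?_)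
        · exact prod_ne_zero_iff.2 fun p hp => (hS p (mem_powerset.1 ht hp)).ne_zero
        · exact prod_nonneg fun p hp => sub_nonneg.2 (huv p (mem_powerset.1 ht hp))
        · exact prod_nonneg fun p hp => hu p (mem_sdiff.1 hp).1
    _ = K * ∏ p ∈ S, ((v p - u p) / p + u p) := by
        rw [prod_add, mul_sum]
        refine sum_congr rfl fun t _ => ?_
        rw [prod_div_distrib, Nat.cast_prod]
        ring
    _ = _ := by simp only [add_comm]

lemma pairFactor_mean_le {p : ℕ} (hp : p.Prime) :
    (if p ≤ w then 1 - 1 / ((p : ℝ) - 1) ^ 2 else 1) +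
      ((p : ℝ) / (p - 1) - if p ≤ w then 1 - 1 / ((p : ℝ) - 1) ^ 2 else 1) / p ≤
      exp (if p ≤ w then 0 else 2 * ((p : ℝ) ^ 2)⁻¹) := by
  have hp2 : (2 : ℝ) ≤ p := by exact_mod_cast hp.two_le
  have hp1 : (0 : ℝ) < p - 1 := by linarith
  split_ifs
  · rw [exp_zero]
    apply le_of_eq
    field_simp
    ring
  · refine le_trans ?_ (add_one_le_exp _)
    have : ((p : ℝ) / (p - 1) - 1) / p ≤ 2 * ((p : ℝ) ^ 2)⁻¹ := by
      rw [div_sub_one hp1.ne', div_div, ← div_eq_mul_inv, div_le_div_iff₀ (by positivity)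
        (by positivity)]
      nlinarith
    linarith

lemma prod_pairFactor_mean_le (hw : w ≠ 0) (Y : ℕ) :
    ∏ p ∈ Y.primesLE, ((if p ≤ w then 1 - 1 / ((p : ℝ) - 1) ^ 2 else 1) +
      ((p : ℝ) / (p - 1) - if p ≤ w then 1 - 1 / ((p : ℝ) - 1) ^ 2 else 1) / p) ≤ exp (2 / w) := by
  have hnonneg (p : ℕ) (hp : p.Prime) : 0 ≤ (if p ≤ w then 1 - 1 / ((p : ℝ) - 1) ^ 2 else 1) +
      ((p : ℝ) / (p - 1) - if p ≤ w then 1 - 1 / ((p : ℝ) - 1) ^ 2 else 1) / p := by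
    have hp2 : (2 : ℝ) ≤ p := by exact_mod_cast hp.two_le
    have hp1 : (0 : ℝ) < p - 1 := by linarith
    split_ifs
    · apply le_of_lt
      field_simp
      nlinarith
    · rw [div_sub_one hp1.ne', sub_sub_cancel]
      positivity
  have htail : ∑ p ∈ Y.primesLE, (if p ≤ w then 0 else 2 * ((p : ℝ) ^ 2)⁻¹) ≤ 2 / w := by
    calc _ = ∑ p ∈ Y.primesLE with ¬ p ≤ w, 2 * ((p : ℝ) ^ 2)⁻¹ := by
          simp only [sum_filter, ite_not]
      _ ≤ ∑ p ∈ Ioc w (max w Y), 2 * ((p : ℝ) ^ 2)⁻¹ := by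
          refine sum_le_sum_of_subset_of_nonneg (fun p hp => ?_) fun _ _ _ => by positivity
          rw [mem_filter, Nat.mem_primesLE] at hp
          exact mem_Ioc.2 ⟨not_le.1 hp.2, le_max_of_le_right hp.1.1⟩
      _ ≤ 2 * ((w : ℝ)⁻¹ - ((max w Y : ℕ) : ℝ)⁻¹) := by
          rw [← mul_sum]
          exact mul_le_mul_of_nonneg_left (sum_Ioc_inv_sq_le_sub hw (le_max_left _ _)) two_pos.le
      _ ≤ 2 / w := by
          rw [div_eq_mul_inv]
          gcongr
          exact sub_le_self _ (by positivity)
  calc _ ≤ ∏ p ∈ Y.primesLE, exp (if p ≤ w then 0 else 2 * ((p : ℝ) ^ 2)⁻¹) :=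
        prod_le_prod (fun p hp => hnonneg p (Nat.mem_primesLE.1 hp).2)
          fun p hp => pairFactor_mean_le (Nat.mem_primesLE.1 hp).2
    _ ≤ _ := by
        rw [← exp_sum]
        exact exp_le_exp.2 htail

theorem sum_prod_pairFactor_mul_le (hw : w ≠ 0) (hK : 0 ≤ K)
    (hf : ∀ D, D ≠ 0 → ∑ m ∈ s with D ∣ m, f m ≤ K / D) (Y : ℕ) :
    ∑ m ∈ s, (∏ p ∈ Y.primesLE, pairFactor w m p) * f m ≤ K * exp (2 / w) := by
  refine (sum_prod_ite_dvd_mul_le (fun p hp => (Nat.mem_primesLE.1 hp).2) (fun p hp => ?_)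
    (fun p hp => ?_) hf).trans (mul_le_mul_of_nonneg_left (prod_pairFactor_mean_le hw Y) hK)
  all_goals
    have hp2 : (2 : ℝ) ≤ p := by exact_mod_cast (Nat.mem_primesLE.1 hp).2.two_le
    have hp1 : (1 : ℝ) ≤ p - 1 := by linarith
  · split_ifs
    · exact sub_nonneg.2 ((div_le_one (by positivity)).2 (one_le_pow₀ hp1))
    · exact zero_le_one
  · refine le_trans ?_ ((one_le_div (by linarith)).2 (sub_le_self (p : ℝ) zero_le_one))
    split_ifs
    · exact sub_le_self _ (by positivity)
    · exact le_rfl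

lemma sum_mul_prod_pairFactor_add_mul_le (hw : w ≠ 0) (hK : 0 ≤ K)
    (hf : ∀ D, D ≠ 0 → ∑ m ∈ s with D ∣ m, f m ≤ K / D) {A B : ℝ} (hA : 0 ≤ A) (hB : 0 ≤ B)
    (Y : ℕ) : ∑ m ∈ s, (A * (∏ p ∈ Y.primesLE, pairFactor w m p) + B) * f m ≤
      (A * exp (2 / w) + B) * K := by
  have htotal : ∑ m ∈ s, f m ≤ K := by simpa using hf 1 one_ne_zero
  calc _ = A * (∑ m ∈ s, (∏ p ∈ Y.primesLE, pairFactor w m p) * f m) + B * ∑ m ∈ s, f m := by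
        simp only [mul_sum, ← sum_add_distrib]
        exact sum_congr rfl fun m _ => by ring
    _ ≤ A * (K * exp (2 / w)) + B * K := by
        gcongr
        exact sum_prod_pairFactor_mul_le hw hK hf Y
    _ = _ := by ring

lemma one_div_succ_mul_log_sq_le {k : ℕ} (hk : 0 < k) (hL : 0 < L)
    (hLk : L ≤ log (x / (k + 1 : ℕ))) :
    1 / ((k + 1 : ℕ) * log (x / (k + 1 : ℕ)) ^ 2) ≤
      (1 + 1 / L) * (1 / log (x / (k + 1 : ℕ)) - 1 / log (x / k)) := by
  have hx : x ≠ 0 := by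
    rintro rfl
    rw [zero_div, log_zero] at hLk
    exact hLk.not_gt hL
  have hk1 : (1 : ℝ) ≤ k := by exact_mod_cast hk
  have hk0 : (0 : ℝ) < k := by linarith
  push_cast at hLk ⊢
  set a := log (x / k) with ha
  set b := log (x / (k + 1)) with hb
  have hab : a - b = log ((k + 1) / k) := by
    rw [ha, hb, log_div hx (by positivity), log_div hx (by positivity),
      log_div (by positivity) (by positivity)]
    ring
  have hb0 : 0 < b := hL.trans_le hLk
  have hab_ge : 1 / ((k : ℝ) + 1) ≤ a - b := by
    have h := one_sub_inv_le_log_of_pos (show 0 < ((k : ℝ) + 1) / k by positivity)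
    rw [inv_div, one_sub_div (by positivity), add_sub_cancel_left] at h
    exact h.trans_eq hab.symm
  have hab_le : a - b ≤ 1 := by
    have h := log_le_sub_one_of_pos (show 0 < ((k : ℝ) + 1) / k by positivity)
    rw [div_sub_one hk0.ne', add_sub_cancel_left] at h
    exact (hab.trans_le h).trans ((div_le_one hk0).2 hk1)
  have hab_pos : 0 < a - b := lt_of_lt_of_le (by positivity) hab_ge
  have ha0 : 0 < a := by linarith
  have ha_le : a ≤ (1 + 1 / L) * b := by
    have : 1 ≤ b / L := (one_le_div hL).2 hLk
    linarith [show (1 + 1 / L) * b = b + b / L by ring]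
  calc 1 / ((k + 1) * b ^ 2) = 1 / (k + 1) * (a * b) / (a * b * b ^ 2) := by field_simp
    _ ≤ (a - b) * ((1 + 1 / L) * b * b) / (a * b * b ^ 2) := by gcongr
    _ = (1 + 1 / L) * (1 / b - 1 / a) := by field_simp

lemma le_log_div_of_mul_exp_le {y : ℝ} (hy : 0 < y) (h : y * exp L ≤ x) : L ≤ log (x / y) := by
  have hle : exp L ≤ x / y := (le_div_iff₀ hy).2 (by rwa [mul_comm])
  exact (le_log_iff_exp_le ((exp_pos L).trans_le hle)).2 hle

lemma sum_one_div_mul_log_sq_le (hL : 0 < L) (hLx : L ≤ log x) (hN : N * exp L ≤ x) :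
    ∑ k ∈ Ioc 0 N, 1 / (k * log (x / k) ^ 2) ≤
      1 / L ^ 2 + (1 + 1 / L) * (1 / L - 1 / log x) := by
  have hlog {k : ℕ} (hk : 0 < k) (hkN : k ≤ N) : L ≤ log (x / k) :=
    le_log_div_of_mul_exp_le (by exact_mod_cast hk) (le_trans (by gcongr) hN)
  rcases N.eq_zero_or_pos with rfl | hN0
  · have := sub_nonneg.2 (one_div_le_one_div_of_le hL hLx)
    rw [Ioc_self, sum_empty]
    positivity
  have htelescope : ∀ n, 1 ≤ n → n ≤ N → ∑ k ∈ Ioc 0 n, 1 / (k * log (x / k) ^ 2) ≤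
      1 / L ^ 2 + (1 + 1 / L) * (1 / log (x / n) - 1 / log x) := by
    intro n hn
    induction n, hn using Nat.le_induction with
    | base =>
      intro _
      simp only [Nat.Ioc_succ_singleton, sum_singleton, Nat.cast_one, zero_add, one_mul, div_one,
        sub_self, mul_zero, add_zero]
      gcongr
    | succ n hn ih =>
      intro hnN
      rw [sum_Ioc_succ_top n.zero_le]
      have := one_div_succ_mul_log_sq_le hn hL (hlog n.succ_pos hnN)
      linarith [ih (by omega)]
  refine (htelescope N hN0 le_rfl).trans ?_
  have := one_div_le_one_div_of_le hL (hlog hN0 le_rfl)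
  gcongr

lemma sum_filter_dvd_one_div_mul_log_sq_le (hL : 0 < L) (hLx : L ≤ log x)
    (hM : M * exp L ≤ x) (hD : D ≠ 0) :
    ∑ m ∈ Ioc 0 M with D ∣ m, 1 / (m * log (x / m) ^ 2) ≤
      (1 / L ^ 2 + (1 + 1 / L) * (1 / L - 1 / log x)) / D := by
  have hD0 : (0 : ℝ) < D := by exact_mod_cast Nat.pos_of_ne_zero hD
  rcases lt_or_ge M D with hMD | hDM
  · have := sub_nonneg.2 (one_div_le_one_div_of_le hL hLx)
    rw [filter_false_of_mem fun m hm hDm => ?_, sum_empty]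
    · positivity
    · have := mem_Ioc.1 hm
      exact absurd (Nat.le_of_dvd this.1 hDm) (by omega)
  have hmultiples : {m ∈ Ioc 0 M | D ∣ m} = (Ioc 0 (M / D)).image (D * ·) := by
    ext m
    simp only [mem_filter, mem_image, mem_Ioc, Nat.le_div_iff_mul_le (Nat.pos_of_ne_zero hD)]
    constructor
    · rintro ⟨⟨h0, hm⟩, k, rfl⟩
      exact ⟨k, ⟨Nat.pos_of_mul_pos_left h0, by rwa [mul_comm]⟩, rfl⟩
    · rintro ⟨k, ⟨hk, hkM⟩, rfl⟩
      exact ⟨⟨by positivity, by rwa [mul_comm]⟩, dvd_mul_right D k⟩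
  have hMDx : (M / D : ℕ) * exp L ≤ x / D := by
    calc ((M / D : ℕ) : ℝ) * exp L ≤ M / D * exp L := by gcongr; exact Nat.cast_div_le
      _ = M * exp L / D := by ring
      _ ≤ x / D := by gcongr
  have hLD : L ≤ log (x / D) := le_log_div_of_mul_exp_le hD0 (le_trans (by gcongr) hM)
  have hlogD : 1 / log x ≤ 1 / log (x / D) := by
    have hD1 : (1 : ℝ) ≤ D := by exact_mod_cast Nat.one_le_iff_ne_zero.2 hD
    have hx : 0 < x :=
      (mul_pos (hD0.trans_le (by exact_mod_cast hDM)) (exp_pos L)).trans_le hM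
    exact one_div_le_one_div_of_le (by linarith)
      (log_le_log (by positivity) (div_le_self hx.le hD1))
  rw [hmultiples, sum_image fun a _ b _ h => Nat.eq_of_mul_eq_mul_left (Nat.pos_of_ne_zero hD) h]
  calc _ = (∑ k ∈ Ioc 0 (M / D), 1 / (k * log (x / D / k) ^ 2)) / (D : ℝ) := by
        rw [sum_div]
        refine sum_congr rfl fun k _ => ?_
        rw [Nat.cast_mul, div_div, div_div]
        ring
    _ ≤ (1 / L ^ 2 + (1 + 1 / L) * (1 / L - 1 / log (x / D))) / D := by
        gcongr
        exact sum_one_div_mul_log_sq_le hL hLD hMDx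
    _ ≤ _ := by gcongr

end Averaging

section PrimePairAsymptotics

open Filter Topology

variable {a b ε : ℝ} {m w Y Z : ℕ}

lemma prod_pairFactor_mono (hwY : w ≤ Y) (hYZ : Y ≤ Z) :
    ∏ p ∈ Y.primesLE, pairFactor w m p ≤ ∏ p ∈ Z.primesLE, pairFactor w m p := by
  refine prod_le_prod_of_subset_of_one_le (Nat.primesLE_mono hYZ)
    (fun p hp => pairFactor_nonneg (Nat.prime_of_mem_primesLE hp)) fun p hp hpY => ?_
  have hp' := Nat.mem_primesLE.1 hp
  exact one_le_pairFactor hp'.2 fun hpw => hpY (Nat.mem_primesLE.2 ⟨hpw.trans hwY, hp'.2⟩)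

lemma isLittleO_rpow_mul_log_pow (ha : a < 1) (n : ℕ) :
    (fun X : ℝ => X ^ a * log X ^ n) =o[atTop] fun X => X := by
  have h := (Asymptotics.isBigO_refl (fun X : ℝ => X ^ a) atTop).mul_isLittleO
    (isLittleO_log_rpow_rpow_atTop n (sub_pos.2 ha))
  refine h.congr' (.of_forall fun X => by simp only [rpow_natCast]) ?_
  filter_upwards [eventually_gt_atTop 0] with X hX
  rw [← rpow_add hX, add_sub_cancel, rpow_one]

lemma eventually_sieve_error_le (ha0 : 0 ≤ a) (ha : a < 1 / 2) (hb : b < 1) (hε : 0 < ε) :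
    ∀ᶠ X : ℝ in atTop, X ^ b + (X ^ a * (1 + log (X ^ a))) ^ 2 ≤ ε * (X / log X ^ 2) := by
  have hterm₁ := (isLittleO_rpow_mul_log_pow hb 2).def (half_pos hε)
  have hterm₂ := (isLittleO_rpow_mul_log_pow (show 2 * a < 1 by linarith) 4).def
    (show 0 < ε / 8 by positivity)
  filter_upwards [hterm₁, hterm₂, eventually_gt_atTop 0, tendsto_log_atTop.eventually_ge_atTop 1]
    with X h₁ h₂ hX hlog
  rw [Real.norm_of_nonneg (by positivity), Real.norm_of_nonneg hX.le] at h₁ h₂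
  have hsq : (X ^ a * (1 + log (X ^ a))) ^ 2 ≤ X ^ (2 * a) * (4 * log X ^ 2) := by
    rw [mul_pow, ← rpow_mul_natCast hX.le, log_rpow hX, Nat.cast_two, mul_comm a 2]
    have hle : 1 + a * log X ≤ 2 * log X := by nlinarith
    have hsq : (1 + a * log X) ^ 2 ≤ (2 * log X) ^ 2 := by gcongr
    rw [mul_pow, show (2 : ℝ) ^ 2 = 4 by norm_num] at hsq
    gcongr
  rw [← mul_div_assoc, le_div_iff₀ (by positivity)]
  calc _ ≤ (X ^ b + X ^ (2 * a) * (4 * log X ^ 2)) * log X ^ 2 := by gcongr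
    _ = X ^ b * log X ^ 2 + 4 * (X ^ (2 * a) * log X ^ 4) := by ring
    _ ≤ ε * X := by linarith

lemma exists_pos_eight_div_one_sub_sq_lt (hε : 0 < ε) :
    ∃ δ : ℝ, δ < 1 / 4 ∧ 0 < δ ∧ 8 / (1 - 4 * δ) ^ 2 < 8 + ε := by
  have hlim : Tendsto (fun δ : ℝ => 8 / (1 - 4 * δ) ^ 2) (𝓝[>] 0) (𝓝 (8 / (1 - 4 * 0) ^ 2)) :=
    (ContinuousAt.tendsto (by fun_prop (disch := norm_num))).mono_left nhdsWithin_le_nhds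
  have hlt : (8 : ℝ) / (1 - 4 * 0) ^ 2 < 8 + ε := by norm_num [hε]
  have hsmall : ∀ᶠ δ : ℝ in 𝓝[>] 0, δ < 1 / 4 :=
    (eventually_lt_nhds (by norm_num)).filter_mono nhdsWithin_le_nhds
  exact (hsmall.and (eventually_mem_nhdsWithin.and (hlim.eventually_lt_const hlt))).exists

theorem eventually_forall_card_prime_pairs_le (w : ℕ) (hε : 0 < ε) :
    ∀ᶠ X : ℝ in atTop, ∀ m Y : ℕ, Even m → 0 < m → ⌊X⌋₊ ≤ Y →
      (#{q ∈ Ioc 0 ⌊X⌋₊ | q.Prime ∧ (m * q + 1).Prime} : ℝ) ≤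
        ((8 + ε) * (∏ p ∈ Y.primesLE, pairFactor w m p) + ε) * (X / log X ^ 2) := by
  obtain ⟨δ, hδ_lt, hδ0, hδ⟩ := exists_pos_eight_div_one_sub_sq_lt hε
  have hrpow {r : ℝ} (hr : 0 < r) := tendsto_rpow_atTop hr
  filter_upwards [eventually_sieve_error_le (show 0 ≤ 1 / 2 - δ by linarith)
      (show 1 / 2 - δ < 1 / 2 by linarith) (show 1 / 2 - 2 * δ < 1 by linarith) hε,
    eventually_gt_atTop 1,
    (hrpow hδ0).eventually_ge_atTop (primorial w : ℝ),
    (hrpow (show 0 < 1 / 2 - 2 * δ by linarith)).eventually_ge_atTop (w : ℝ)]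
    with X herror hX hprimorial hwz m Y hm hm0 hXY
  have hX0 : 0 < X := by linarith
  have hlog : 0 < log X := log_pos hX
  set z := X ^ (1 / 2 - 2 * δ) with hz
  have hzX : z ≤ X := rpow_le_self_of_one_le hX.le (by linarith)
  have hzy : z * primorial w ≤ X ^ (1 / 2 - δ) := by
    calc z * primorial w ≤ z * X ^ δ := by gcongr
      _ = X ^ (1 / 2 - δ) := by rw [hz, ← rpow_add hX0]; ring_nf
  have hprod := prod_pairFactor_mono (m := m) (Nat.le_floor hwz)
    ((Nat.floor_mono hzX).trans hXY)
  have hprod0 : 0 ≤ ∏ p ∈ Y.primesLE, pairFactor w m p :=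
    prod_nonneg fun p hp => pairFactor_nonneg (Nat.prime_of_mem_primesLE hp)
  have hmain : 2 * (∏ p ∈ ⌊z⌋₊.primesLE, pairFactor w m p) * ⌊X⌋₊ / log z ^ 2 ≤
      (8 + ε) * (∏ p ∈ Y.primesLE, pairFactor w m p) * (X / log X ^ 2) := by
    have hδ1 : 0 < 1 - 4 * δ := by linarith
    calc _ ≤ 2 * (∏ p ∈ Y.primesLE, pairFactor w m p) * X / log z ^ 2 := by
          gcongr
          exact Nat.floor_le hX0.le
      _ = 8 / (1 - 4 * δ) ^ 2 * (∏ p ∈ Y.primesLE, pairFactor w m p) * (X / log X ^ 2) := by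
          rw [hz, log_rpow hX0, show 1 / 2 - 2 * δ = (1 - 4 * δ) / 2 by ring]
          field_simp
          ring
      _ ≤ _ := by gcongr
  have hcard := card_prime_pairs_le (N := ⌊X⌋₊) hm hm0
    (one_lt_rpow hX (show 0 < 1 / 2 - 2 * δ by linarith)) hzy
  linarith

end PrimePairAsymptotics

section LargePrimeFactor

open Filter Topology

variable {c x η : ℝ} {p n : ℕ}

lemma Pplus_mem_primeFactors (hn : 1 < n) : Pplus n ∈ n.primeFactors := by
  rw [Pplus, if_neg hn.ne']
  obtain ⟨q, hq, hsup⟩ := exists_mem_eq_sup _ (Nat.nonempty_primeFactors.2 hn) id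
  exact hsup ▸ hq

lemma exists_eq_mul_add_one_of_rpow_le_Pplus (hp : p.Prime) (hpc : (p : ℝ) ^ c ≤ Pplus (p - 1))
    (h2 : 2 < (p : ℝ) ^ c) :
    ∃ m q : ℕ, Even m ∧ 0 < m ∧ (m : ℝ) ≤ (p : ℝ) ^ (1 - c) ∧ q.Prime ∧ p = m * q + 1 := by
  have hp2 : p ≠ 2 := by
    rintro rfl
    have : (Pplus (2 - 1) : ℝ) = 1 := by simp [Pplus]
    linarith
  have hp3 : 2 < p := hp.two_le.lt_of_ne' hp2
  have hp0 : (0 : ℝ) < p := by exact_mod_cast hp.pos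
  obtain ⟨hq, ⟨m, hm⟩, -⟩ :=
    Nat.mem_primeFactors.1 (Pplus_mem_primeFactors (show 1 < p - 1 by omega))
  set q := Pplus (p - 1)
  have hq2 : q ≠ 2 := by
    have : (2 : ℝ) < q := h2.trans_le hpc
    exact_mod_cast this.ne'
  have hm0 : 0 < m := Nat.pos_of_ne_zero fun h => by rw [h] at hm; omega
  refine ⟨m, q, ?_, hm0, ?_, hq, by rw [mul_comm]; omega⟩
  · have heven : Even (q * m) := hm ▸ hp.even_sub_one hp2
    exact (Nat.even_mul.1 heven).resolve_left (Nat.not_even_iff_odd.2 (hq.odd_of_ne_two hq2))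
  · rw [rpow_sub hp0, rpow_one, le_div_iff₀ (by linarith)]
    calc (m : ℝ) * p ^ c ≤ m * q := by gcongr
      _ = (p - 1 : ℕ) := by rw [hm, Nat.cast_mul, mul_comm]
      _ ≤ p := by exact_mod_cast p.sub_le 1

theorem T_le_add_sum_card_prime_pairs (hc0 : 0 < c) (hc1 : c ≤ 1) (hx : 0 ≤ x) :
    (T c x : ℝ) ≤ 2 ^ (1 / c) + ∑ m ∈ Ioc 0 ⌊x ^ (1 - c)⌋₊ with Even m,
      (#{q ∈ Ioc 0 ⌊x / m⌋₊ | q.Prime ∧ (m * q + 1).Prime} : ℝ) := by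
  have hcover : (range (⌊x⌋₊ + 1)).filter (fun p : ℕ => p.Prime ∧ (p : ℝ) ^ c ≤ Pplus (p - 1)) ⊆
      Ioc 0 ⌊(2 : ℝ) ^ (1 / c)⌋₊ ∪ {m ∈ Ioc 0 ⌊x ^ (1 - c)⌋₊ | Even m}.biUnion fun m : ℕ =>
        {q ∈ Ioc 0 ⌊x / m⌋₊ | q.Prime ∧ (m * q + 1).Prime}.image fun q => m * q + 1 := by
    intro p hp
    obtain ⟨hpx, hp, hpc⟩ := mem_filter.1 hp
    have hpx : (p : ℝ) ≤ x := (Nat.le_floor_iff hx).1 (Nat.lt_succ_iff.1 (mem_range.1 hpx))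
    rw [mem_union, mem_biUnion]
    rcases le_or_gt ((p : ℝ) ^ c) 2 with h2 | h2
    · refine Or.inl (mem_Ioc.2 ⟨hp.pos, Nat.le_floor ?_⟩)
      rwa [one_div, le_rpow_inv_iff_of_pos p.cast_nonneg two_pos.le hc0]
    · obtain ⟨m, q, hm, hm0, hmp, hq, rfl⟩ := exists_eq_mul_add_one_of_rpow_le_Pplus hp hpc h2
      have hm0' : (0 : ℝ) < m := by exact_mod_cast hm0
      refine Or.inr ⟨m, mem_filter.2 ⟨mem_Ioc.2 ⟨hm0, Nat.le_floor (hmp.trans ?_)⟩, hm⟩,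
        mem_image.2 ⟨q, mem_filter.2 ⟨mem_Ioc.2 ⟨hq.pos, Nat.le_floor ?_⟩, hq, hp⟩, rfl⟩⟩
      · exact rpow_le_rpow (by positivity) hpx (by linarith)
      · rw [le_div_iff₀ hm0']
        push_cast at hpx
        linarith
  have hcard := (card_le_card hcover).trans ((card_union_le _ _).trans (add_le_add_right
    (card_biUnion_le.trans (sum_le_sum fun m _ => card_image_le)) _))
  rw [Nat.card_Ioc, Nat.sub_zero] at hcard
  calc (T c x : ℝ) ≤ _ := Nat.cast_le.2 hcard
    _ ≤ _ := by
        push_cast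
        gcongr
        exact Nat.floor_le (by positivity)

lemma floor_rpow_one_sub_mul_rpow_le (hx : 0 < x) : ⌊x ^ (1 - c)⌋₊ * x ^ c ≤ x := by
  calc ⌊x ^ (1 - c)⌋₊ * x ^ c ≤ x ^ (1 - c) * x ^ c := by
        gcongr
        exact Nat.floor_le (by positivity)
    _ = x := by rw [← rpow_add hx, sub_add_cancel, rpow_one]

lemma eventually_forall_card_prime_pairs_div_le (hc0 : 0 < c) (w : ℕ) {ε : ℝ} (hε : 0 < ε) :
    ∀ᶠ x : ℝ in atTop, ∀ m : ℕ, Even m → 0 < m → m * x ^ c ≤ x →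
      (#{q ∈ Ioc 0 ⌊x / m⌋₊ | q.Prime ∧ (m * q + 1).Prime} : ℝ) ≤
        ((8 + ε) * (∏ p ∈ ⌊x⌋₊.primesLE, pairFactor w m p) + ε) *
          (1 / (m * log (x / m) ^ 2)) * x := by
  obtain ⟨X₀, hX₀⟩ := eventually_atTop.1 (eventually_forall_card_prime_pairs_le w hε)
  filter_upwards [(tendsto_rpow_atTop hc0).eventually_ge_atTop X₀, eventually_gt_atTop 0]
    with x hxX₀ hx m hm2 hm0 hmx
  have hm1 : (1 : ℝ) ≤ m := by exact_mod_cast hm0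
  have hxm : X₀ ≤ x / m := by
    refine hxX₀.trans ((le_div_iff₀ (by linarith)).2 ?_)
    rwa [mul_comm]
  refine (hX₀ (x / m) hxm m ⌊x⌋₊ hm2 hm0 (Nat.floor_mono (div_le_self hx.le hm1))).trans_eq ?_
  rw [div_div]
  ring

lemma eventually_T_le_mul (hc0 : 0 < c) (hc1 : c ≤ 1) {w : ℕ} (hw : w ≠ 0) {ε : ℝ} (hε : 0 < ε) :
    ∀ᶠ x : ℝ in atTop, (T c x : ℝ) ≤ 2 ^ (1 / c) + ((8 + ε) * exp (2 / w) + ε) *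
      (1 / (c * log x) ^ 2 + (1 + 1 / (c * log x)) * (1 / (c * log x) - 1 / log x)) * x := by
  filter_upwards [eventually_forall_card_prime_pairs_div_le hc0 w hε, eventually_gt_atTop 1]
    with x hpairs hx1
  have hx : 0 < x := by linarith
  have hL : 0 < c * log x := mul_pos hc0 (log_pos hx1)
  have hLx : c * log x ≤ log x := mul_le_of_le_one_left (log_pos hx1).le hc1
  have hMx : ⌊x ^ (1 - c)⌋₊ * x ^ c ≤ x := floor_rpow_one_sub_mul_rpow_le hx
  set M := ⌊x ^ (1 - c)⌋₊
  set K := 1 / (c * log x) ^ 2 + (1 + 1 / (c * log x)) * (1 / (c * log x) - 1 / log x)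
  have hK : 0 ≤ K := by
    have := sub_nonneg.2 (one_div_le_one_div_of_le hL hLx)
    positivity
  have hsum (D : ℕ) (hD : D ≠ 0) :
      ∑ m ∈ {m ∈ Ioc 0 M | Even m} with D ∣ m, 1 / (m * log (x / m) ^ 2) ≤ K / D := by
    refine le_trans (sum_le_sum_of_subset_of_nonneg (filter_subset_filter _ (filter_subset _ _))
      fun m _ _ => by positivity) (sum_filter_dvd_one_div_mul_log_sq_le hL hLx ?_ hD)
    rwa [mul_comm c, ← rpow_def_of_pos hx]
  calc (T c x : ℝ) ≤ 2 ^ (1 / c) + ∑ m ∈ Ioc 0 M with Even m,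
        (#{q ∈ Ioc 0 ⌊x / m⌋₊ | q.Prime ∧ (m * q + 1).Prime} : ℝ) :=
        T_le_add_sum_card_prime_pairs hc0 hc1 hx.le
    _ ≤ 2 ^ (1 / c) + (∑ m ∈ Ioc 0 M with Even m,
        ((8 + ε) * (∏ p ∈ ⌊x⌋₊.primesLE, pairFactor w m p) + ε) *
          (1 / (m * log (x / m) ^ 2))) * x := by
        rw [sum_mul]
        gcongr with m hm
        obtain ⟨⟨hm0, hmM⟩, hm2⟩ : (0 < m ∧ m ≤ M) ∧ Even m := by
          simpa only [mem_filter, mem_Ioc] using hm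
        refine hpairs m hm2 hm0 (le_trans ?_ hMx)
        gcongr
    _ ≤ _ := by
        gcongr
        exact sum_mul_prod_pairFactor_add_mul_le hw hK hsum (by positivity) hε.le _

theorem eventually_T_le (hc0 : 0 < c) (hc1 : c ≤ 1) (hη : 0 < η) :
    ∀ᶠ x : ℝ in atTop, (T c x : ℝ) ≤ (8 * (1 / c - 1) + η) * (x / log x) := by
  obtain ⟨n, hlt, hn⟩ : ∃ n : ℕ, ((8 + 1 / (n : ℝ)) * exp (2 / n) + 1 / n) * (1 / c - 1) <
      8 * (1 / c - 1) + η ∧ 0 < n := by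
    have hinv := tendsto_one_div_atTop_nhds_zero_nat (𝕜 := ℝ)
    have hexp : Tendsto (fun n : ℕ => exp (2 / n)) atTop (𝓝 (exp 0)) :=
      (continuous_exp.tendsto 0).comp (tendsto_const_div_atTop_nhds_zero_nat 2)
    have hlim := (((hinv.const_add 8).mul hexp).add hinv).mul_const (1 / c - 1)
    exact ((hlim.eventually_lt_const (by simpa using hη)).and (eventually_gt_atTop 0)).exists
  set C := (8 + 1 / (n : ℝ)) * exp (2 / n) + 1 / n with hC
  have hlim : Tendsto (fun x : ℝ => 2 ^ (1 / c) * (log x / x) +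
      C * (1 / c ^ 2 * (log x)⁻¹ + (1 + 1 / c * (log x)⁻¹) * (1 / c - 1))) atTop
      (𝓝 (C * (1 / c - 1))) := by
    have hinv := tendsto_inv_atTop_zero.comp tendsto_log_atTop
    have hdiv : Tendsto (fun x : ℝ => log x / x) atTop (𝓝 0) := by
      simpa using (isLittleO_log_id_atTop.tendsto_div_nhds_zero)
    have h := (hdiv.const_mul (2 ^ (1 / c))).add (((hinv.const_mul (1 / c ^ 2)).add
      (((hinv.const_mul (1 / c)).const_add 1).mul_const (1 / c - 1))).const_mul C)
    simpa using h
  filter_upwards [eventually_T_le_mul hc0 hc1 hn.ne' (show 0 < 1 / (n : ℝ) by positivity),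
    hlim.eventually_lt_const hlt, eventually_gt_atTop 1] with x hT hbound hx1
  have hlog : 0 < log x := log_pos hx1
  refine hT.trans ?_
  calc _ = (2 ^ (1 / c) * (log x / x) +
        C * (1 / c ^ 2 * (log x)⁻¹ + (1 + 1 / c * (log x)⁻¹) * (1 / c - 1))) * (x / log x) := by
        rw [← hC]
        field_simp
    _ ≤ _ := by gcongr

end LargePrimeFactor

section FejerKernel

open MeasureTheory Filter Topology

/-- The Fejér kernel on `ℝ`: the cosine transform of the triangle function `t ↦ 1 - t / l` on
`[0, l]`, which is `(1 - cos (l * u)) / (l * u ^ 2)` away from `u = 0`. -/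
noncomputable def fejerKernel (l u : ℝ) : ℝ := l / 2 * sinc (l * u / 2) ^ 2

variable {l u η : ℝ}

lemma fejerKernel_nonneg (hl : 0 < l) : 0 ≤ fejerKernel l u := by
  unfold fejerKernel
  positivity

lemma fejerKernel_eq_div (hl : 0 < l) (hu : u ≠ 0) :
    fejerKernel l u = (1 - cos (l * u)) / (l * u ^ 2) := by
  have hlu : l * u / 2 ≠ 0 := by positivity
  rw [fejerKernel, sinc_of_ne_zero hlu, show l * u = 2 * (l * u / 2) by ring, cos_two_mul,
    cos_sq', mul_div_cancel_left₀ _ two_ne_zero]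
  field_simp
  ring

lemma fejerKernel_le (hl : 0 < l) : fejerKernel l u ≤ l / 2 := by
  have hsinc : sinc (l * u / 2) ^ 2 ≤ 1 := (sq_le_one_iff_abs_le_one _).2 (abs_sinc_le_one _)
  exact mul_le_of_le_one_right (by positivity) hsinc

lemma fejerKernel_mul_sq_le (hl : 0 < l) : fejerKernel l u * u ^ 2 ≤ 2 / l := by
  rcases eq_or_ne u 0 with rfl | hu
  · simp only [zero_pow two_ne_zero, mul_zero]
    positivity
  · have hcos := neg_one_le_cos (l * u)
    rw [fejerKernel_eq_div hl hu, ← div_div, div_mul_cancel₀ _ (pow_ne_zero 2 hu)]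
    gcongr
    linarith

lemma fejerKernel_le_inv_one_add_sq (hl : 0 < l) :
    fejerKernel l u ≤ (l / 2 + 2 / l) * (1 + u ^ 2)⁻¹ := by
  rw [← div_eq_mul_inv, le_div_iff₀ (by positivity), mul_add, mul_one]
  exact add_le_add (fejerKernel_le hl) (fejerKernel_mul_sq_le hl)

lemma fejerKernel_le_of_le_abs (hl : 0 < l) (hη : 0 < η) (hu : η ≤ |u|) :
    fejerKernel l u ≤ 2 / l * (1 + 1 / η ^ 2) * (1 + u ^ 2)⁻¹ := by
  have hsq : η ^ 2 ≤ u ^ 2 := by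
    rw [← sq_abs u]
    gcongr
  have hone : 1 + u ^ 2 ≤ u ^ 2 * (1 + 1 / η ^ 2) := by
    have := (one_le_div (by positivity)).2 hsq
    rw [mul_add, mul_one, mul_one_div]
    linarith
  rw [← div_eq_mul_inv, le_div_iff₀ (by positivity)]
  calc fejerKernel l u * (1 + u ^ 2) ≤ fejerKernel l u * (u ^ 2 * (1 + 1 / η ^ 2)) :=
        mul_le_mul_of_nonneg_left hone (fejerKernel_nonneg hl)
    _ = fejerKernel l u * u ^ 2 * (1 + 1 / η ^ 2) := by ring
    _ ≤ _ := by
      gcongr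
      exact fejerKernel_mul_sq_le hl

lemma continuous_fejerKernel (l : ℝ) : Continuous (fejerKernel l) := by
  unfold fejerKernel
  fun_prop

lemma integrable_fejerKernel (hl : 0 < l) : Integrable (fejerKernel l) := by
  refine Integrable.mono' (integrable_inv_one_add_sq.const_mul (l / 2 + 2 / l))
    (continuous_fejerKernel l).aestronglyMeasurable (.of_forall fun u => ?_)
  rw [Real.norm_of_nonneg (fejerKernel_nonneg hl)]
  exact fejerKernel_le_inv_one_add_sq hl

lemma integral_fejerKernel (hl : 0 < l) : ∫ u, fejerKernel l u = ∫ u, fejerKernel 1 u := by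
  have hscale : fejerKernel l = fun u => l * fejerKernel 1 (l * u) := by
    funext u
    unfold fejerKernel
    ring_nf
  rw [hscale, integral_const_mul, Measure.integral_comp_mul_left, smul_eq_mul,
    abs_of_pos (inv_pos.2 hl), ← mul_assoc, mul_inv_cancel₀ hl.ne', one_mul]

lemma integral_fejerKernel_pos (hl : 0 < l) : 0 < ∫ u, fejerKernel l u := by
  refine integral_pos_of_integrable_nonneg_nonzero (x := 0) (continuous_fejerKernel l)
    (integrable_fejerKernel hl) (fun u => fejerKernel_nonneg hl) ?_
  simp [fejerKernel, hl.ne']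

lemma integral_mul_cos_eq_fejerKernel (hl : 0 < l) (u : ℝ) :
    ∫ t in 0..l, (1 - t / l) * cos (t * u) = fejerKernel l u := by
  rcases eq_or_ne u 0 with rfl | hu
  · simp only [mul_zero, cos_zero, mul_one, fejerKernel, zero_div, sinc_zero, one_pow]
    rw [intervalIntegral.integral_sub (by simp) (by simp), intervalIntegral.integral_const,
      intervalIntegral.integral_div, integral_id, sub_zero, smul_eq_mul]
    field_simp
    ring
  have hderiv : ∀ t ∈ Set.uIcc 0 l, HasDerivAt
      (fun t => (1 - t / l) * sin (t * u) / u - cos (t * u) / (l * u ^ 2))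
      ((1 - t / l) * cos (t * u)) t := by
    intro t _
    have hmul : HasDerivAt (fun t : ℝ => t * u) u t := by
      simpa only [id, one_mul] using (hasDerivAt_id t).mul_const u
    have hsub : HasDerivAt (fun t : ℝ => 1 - t / l) (-(1 / l)) t := by
      simpa only [id] using ((hasDerivAt_id t).div_const l).const_sub 1
    refine (((hsub.mul hmul.sin).div_const u).sub (hmul.cos.div_const (l * u ^ 2))).congr_deriv ?_
    field_simp
    ring
  rw [intervalIntegral.integral_eq_sub_of_hasDerivAt hderiv
    (Continuous.intervalIntegrable (by fun_prop) _ _), fejerKernel_eq_div hl hu, div_self hl.ne',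
    sub_self, zero_mul, zero_mul, cos_zero, sin_zero]
  ring

lemma tendsto_setIntegral_Ioi_fejerKernel_sub (hl : 0 < l) :
    Tendsto (fun v => ∫ u in Set.Ioi 0, fejerKernel l (u - v)) atTop
      (𝓝 (∫ u, fejerKernel l u)) := by
  refine ((aecover_Ioi (μ := volume)
    tendsto_neg_atTop_atBot).integral_tendsto_of_countably_generated
      (integrable_fejerKernel hl)).congr fun v => ?_
  rw [← integral_indicator measurableSet_Ioi, ← integral_indicator measurableSet_Ioi,
    ← integral_sub_right_eq_self _ v]
  refine integral_congr_ae (.of_forall fun u => ?_)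
  simp only [Set.indicator, Set.mem_Ioi, neg_lt_sub_iff_lt_add, lt_add_iff_pos_right]

end FejerKernel

section LaplaceTransform

open MeasureTheory Filter Topology

variable {f : ℝ → ℝ} {G : ℂ → ℂ} {C l δ : ℝ}

lemma integral_mul_cos_sub {μ : Measure ℝ} (hf : Integrable f μ) (t v : ℝ) :
    ∫ u, f u * cos (t * (u - v)) ∂μ =
      (Complex.exp (t * v * Complex.I) *
        ∫ u, (f u : ℂ) * Complex.exp (-(t * Complex.I) * u) ∂μ).re := by
  rw [← integral_const_mul, ← RCLike.re_eq_complex_re, ← integral_re]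
  · refine integral_congr_ae (.of_forall fun u => ?_)
    simp only [RCLike.re_eq_complex_re]
    rw [mul_left_comm, ← Complex.exp_add, Complex.re_ofReal_mul,
      show t * v * Complex.I + -(t * Complex.I) * u = ((-(t * (u - v)) : ℝ) : ℂ) * Complex.I by
        push_cast; ring, Complex.exp_ofReal_mul_I_re, cos_neg]
  · refine Integrable.const_mul ?_ _
    refine hf.ofReal.mul_bdd (c := 1) (by fun_prop) (.of_forall fun u => ?_)
    rw [show -(t * Complex.I) * u = ((-(t * u) : ℝ) : ℂ) * Complex.I by push_cast; ring,
      Complex.norm_exp_ofReal_mul_I]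

lemma integral_mul_fejerKernel_sub {μ : Measure ℝ} [SFinite μ] (hf : Integrable f μ) (hl : 0 < l)
    (v : ℝ) :
    ∫ u, f u * fejerKernel l (u - v) ∂μ =
      ∫ t in 0..l, (1 - t / l) * (Complex.exp (t * v * Complex.I) *
        ∫ u, (f u : ℂ) * Complex.exp (-(t * Complex.I) * u) ∂μ).re := by
  have hint : Integrable
      (Function.uncurry fun t u => (1 - t / l) * (f u * cos (t * (u - v))))
      ((volume.restrict (Set.uIoc 0 l)).prod μ) := by
    have htri : Integrable (fun t : ℝ => 1 - t / l) (volume.restrict (Set.uIoc 0 l)) :=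
      (Continuous.intervalIntegrable (by fun_prop) 0 l).def'
    have hcos : Continuous fun z : ℝ × ℝ => cos (z.1 * (z.2 - v)) := by fun_prop
    refine ((htri.mul_prod hf).mul_bdd (c := 1) hcos.aestronglyMeasurable
      (.of_forall fun z => abs_cos_le_one _)).congr (.of_forall fun z => ?_)
    simp only [Function.uncurry, mul_assoc]
  simp only [← integral_mul_cos_sub hf]
  simp only [← integral_const_mul]
  rw [intervalIntegral_integral_swap hint]
  refine integral_congr_ae (.of_forall fun u => ?_)
  simp only [← integral_mul_cos_eq_fejerKernel hl, ← intervalIntegral.integral_const_mul]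
  exact intervalIntegral.integral_congr fun t _ => by ring

lemma setIntegral_Ioi_mul_exp_mul_fejerKernel_sub (hf : Measurable f) (hfC : ∀ u, |f u| ≤ C)
    (hfG : ∀ s : ℂ, 0 < s.re → G s = ∫ u in Set.Ioi (0 : ℝ), (f u : ℂ) * Complex.exp (-s * u))
    (hl : 0 < l) (hδ : 0 < δ) (v : ℝ) :
    ∫ u in Set.Ioi 0, f u * exp (-δ * u) * fejerKernel l (u - v) =
      ∫ t in 0..l, (1 - t / l) *
        (Complex.exp (t * v * Complex.I) * G (δ + t * Complex.I)).re := by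
  have hint : IntegrableOn (fun u => f u * exp (-δ * u)) (Set.Ioi 0) :=
    (integrableOn_exp_mul_Ioi (neg_lt_zero.2 hδ) 0).bdd_mul hf.aestronglyMeasurable
      (.of_forall hfC)
  rw [integral_mul_fejerKernel_sub hint hl]
  refine intervalIntegral.integral_congr fun t _ => ?_
  rw [hfG _ (by simpa using hδ)]
  congr 3
  refine integral_congr_ae (.of_forall fun u => ?_)
  simp only
  push_cast
  rw [mul_assoc, ← Complex.exp_add]
  ring_nf

lemma tendsto_setIntegral_Ioi_mul_exp_mul_fejerKernel_sub (hf : Measurable f)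
    (hfC : ∀ u, |f u| ≤ C) (hl : 0 < l) (v : ℝ) :
    Tendsto (fun δ : ℝ => ∫ u in Set.Ioi 0, f u * exp (-δ * u) * fejerKernel l (u - v)) (𝓝[>] 0)
      (𝓝 (∫ u in Set.Ioi 0, f u * fejerKernel l (u - v))) := by
  have hK := continuous_fejerKernel l
  refine tendsto_integral_filter_of_dominated_convergence
    (fun u => C * fejerKernel l (u - v)) (.of_forall fun δ => ?_) ?_
    (((integrable_fejerKernel hl).comp_sub_right v).const_mul C).integrableOn
    (.of_forall fun u => ?_)
  · exact Measurable.aestronglyMeasurable (by fun_prop)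
  · filter_upwards [self_mem_nhdsWithin] with δ (hδ : 0 < δ)
    refine ae_restrict_of_forall_mem measurableSet_Ioi fun u (hu : 0 < u) => ?_
    have hexp : exp (-δ * u) ≤ 1 := exp_le_one_iff.2 (by nlinarith)
    rw [norm_mul, norm_mul, Real.norm_of_nonneg (fejerKernel_nonneg hl),
      Real.norm_of_nonneg (exp_pos _).le]
    exact mul_le_mul_of_nonneg_right
      ((mul_le_of_le_one_right (norm_nonneg _) hexp).trans (hfC u)) (fejerKernel_nonneg hl)
  · have hcont : Continuous fun δ : ℝ => f u * exp (-δ * u) * fejerKernel l (u - v) := by fun_prop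
    simpa using (hcont.tendsto 0).mono_left nhdsWithin_le_nhds

lemma setIntegral_Ioi_mul_fejerKernel_sub (hf : Measurable f) (hfC : ∀ u, |f u| ≤ C)
    (hG : ContinuousOn G {s | 0 ≤ s.re})
    (hfG : ∀ s : ℂ, 0 < s.re → G s = ∫ u in Set.Ioi (0 : ℝ), (f u : ℂ) * Complex.exp (-s * u))
    (hl : 0 < l) (v : ℝ) :
    ∫ u in Set.Ioi 0, f u * fejerKernel l (u - v) =
      ∫ t in 0..l, (1 - t / l) * (Complex.exp (t * v * Complex.I) * G (t * Complex.I)).re := by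
  -- Truncating at `max δ 0` turns `G` into a function that is continuous in all real `δ`.
  have hGcont : Continuous fun z : ℝ × ℝ => G ((max z.1 0 : ℝ) + z.2 * Complex.I) :=
    hG.comp_continuous (by fun_prop) fun z => by simp
  have hcont : Continuous fun δ : ℝ => ∫ t in 0..l, (1 - t / l) *
      (Complex.exp (t * v * Complex.I) * G ((max δ 0 : ℝ) + t * Complex.I)).re := by
    refine intervalIntegral.continuous_parametric_intervalIntegral_of_continuous' ?_ 0 l
    exact (by fun_prop : Continuous fun z : ℝ × ℝ => 1 - z.2 / l).mul
      (Complex.continuous_re.comp ((by fun_prop : Continuous fun z : ℝ × ℝ =>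
        Complex.exp (z.2 * v * Complex.I)).mul hGcont))
  refine tendsto_nhds_unique
    (tendsto_setIntegral_Ioi_mul_exp_mul_fejerKernel_sub hf hfC hl v) ?_
  have hlim := (hcont.tendsto 0).mono_left (nhdsWithin_le_nhds (s := Set.Ioi 0))
  simp only [max_self, Complex.ofReal_zero, zero_add] at hlim
  refine hlim.congr' ?_
  filter_upwards [self_mem_nhdsWithin] with δ (hδ : 0 < δ)
  rw [max_eq_left hδ.le, setIntegral_Ioi_mul_exp_mul_fejerKernel_sub hf hfC hfG hl hδ]

lemma tendsto_intervalIntegral_cexp_mul_atTop (g : ℝ → ℂ) (hl : 0 ≤ l) :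
    Tendsto (fun v : ℝ => ∫ t in 0..l, Complex.exp (t * v * Complex.I) * g t) atTop (𝓝 0) := by
  have hfreq : Tendsto (fun v : ℝ => -(v / (2 * π))) atTop (cocompact ℝ) := by
    rw [cocompact_eq_atBot_atTop]
    exact (tendsto_neg_atTop_atBot.comp
      (tendsto_id.atTop_div_const (by positivity))).mono_right le_sup_left
  refine ((Real.tendsto_integral_exp_smul_cocompact
    (Set.indicator (Set.Ioc 0 l) g)).comp hfreq).congr fun v => ?_
  rw [intervalIntegral.integral_of_le hl, ← integral_indicator measurableSet_Ioc]
  refine integral_congr_ae (.of_forall fun t => ?_)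
  have hphase : 2 * π * -(t * -(v / (2 * π))) = t * v := by field_simp
  simp only [Set.indicator_mul_right, Circle.smul_def, fourierChar_apply, smul_eq_mul, hphase]
  push_cast
  rfl

lemma tendsto_setIntegral_Ioi_mul_fejerKernel_sub (hf : Measurable f) (hfC : ∀ u, |f u| ≤ C)
    (hG : ContinuousOn G {s | 0 ≤ s.re})
    (hfG : ∀ s : ℂ, 0 < s.re → G s = ∫ u in Set.Ioi (0 : ℝ), (f u : ℂ) * Complex.exp (-s * u))
    (hl : 0 < l) :
    Tendsto (fun v => ∫ u in Set.Ioi 0, f u * fejerKernel l (u - v)) atTop (𝓝 0) := by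
  have hGcont : Continuous fun t : ℝ => G (t * Complex.I) :=
    hG.comp_continuous (by fun_prop) fun t => by simp
  have hcont (v : ℝ) : Continuous fun t : ℝ =>
      Complex.exp (t * v * Complex.I) * (((1 - t / l : ℝ) : ℂ) * G (t * Complex.I)) :=
    (by fun_prop : Continuous fun t : ℝ => Complex.exp (t * v * Complex.I)).mul
      ((by fun_prop : Continuous fun t : ℝ => ((1 - t / l : ℝ) : ℂ)).mul hGcont)
  have hlim := (Complex.continuous_re.tendsto _).comp (tendsto_intervalIntegral_cexp_mul_atTop
    (fun t : ℝ => ((1 - t / l : ℝ) : ℂ) * G (t * Complex.I)) hl.le)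
  refine hlim.congr fun v => ?_
  rw [setIntegral_Ioi_mul_fejerKernel_sub hf hfC hG hfG hl, Function.comp_apply,
    ← Complex.reCLM_apply, ← Complex.reCLM.intervalIntegral_comp_comm
      ((hcont v).intervalIntegrable _ _)]
  refine intervalIntegral.integral_congr fun t _ => ?_
  simp only [Complex.reCLM_apply]
  rw [mul_left_comm, Complex.re_ofReal_mul]

end LaplaceTransform

section Tauberian

open MeasureTheory Filter Topology

variable {B : ℝ → ℝ} {G : ℂ → ℂ} {C l η ε : ℝ}

lemma measurable_of_monotone_exp_mul (hB : Monotone fun u => exp u * B u) : Measurable B := by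
  have h : B = fun u => exp (-u) * (exp u * B u) := by
    funext u
    rw [← mul_assoc, ← exp_add, neg_add_cancel, exp_zero, one_mul]
  rw [h]
  exact (by fun_prop : Measurable fun u : ℝ => exp (-u)).mul hB.measurable

lemma le_exp_sub_mul_of_monotone_exp_mul (hB : Monotone fun u => exp u * B u) {u v : ℝ}
    (huv : u ≤ v) : B u ≤ exp (v - u) * B v := by
  have h : exp u * B u ≤ exp v * B v := hB huv
  rwa [exp_sub, div_mul_eq_mul_div, le_div_iff₀ (exp_pos u), mul_comm (B u)]

lemma mul_fejerKernel_sub_le (hB : Monotone fun u => exp u * B u) (hB0 : ∀ u, 0 ≤ B u)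
    (hBC : ∀ u, B u ≤ C) (hl : 0 < l) (hη : 0 < η) (u v : ℝ) :
    B u * fejerKernel l (u - (v - η)) ≤
      exp (2 * η) * B v * fejerKernel l (u - (v - η)) +
        C * (2 / l * (1 + 1 / η ^ 2)) * (1 + (u - (v - η)) ^ 2)⁻¹ := by
  have hK : 0 ≤ fejerKernel l (u - (v - η)) := fejerKernel_nonneg hl
  have hBv := hB0 v
  have hC : 0 ≤ C := hBv.trans (hBC v)
  rcases le_or_gt |u - (v - η)| η with hnear | hfar
  · obtain ⟨hlow, hupp⟩ := abs_le.1 hnear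
    have hBu : B u ≤ exp (2 * η) * B v :=
      (le_exp_sub_mul_of_monotone_exp_mul hB (by linarith)).trans
        (mul_le_mul_of_nonneg_right (exp_le_exp.2 (by linarith)) hBv)
    exact (mul_le_mul_of_nonneg_right hBu hK).trans (le_add_of_nonneg_right (by positivity))
  · refine le_trans ?_ (le_add_of_nonneg_left (by positivity))
    rw [mul_assoc C]
    exact mul_le_mul (hBC u) (fejerKernel_le_of_le_abs hl hη hfar.le) hK hC

lemma integrable_mul_fejerKernel_sub {f : ℝ → ℝ} (hf : Measurable f) (hfC : ∀ u, |f u| ≤ C)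
    (hl : 0 < l) (v : ℝ) : Integrable fun u => f u * fejerKernel l (u - v) :=
  ((integrable_fejerKernel hl).comp_sub_right v).bdd_mul hf.aestronglyMeasurable (.of_forall hfC)

lemma setIntegral_Ioi_mul_fejerKernel_sub_le (hB : Monotone fun u => exp u * B u)
    (hB0 : ∀ u, 0 ≤ B u) (hBC : ∀ u, B u ≤ C) (hl : 0 < l) (hη : 0 < η) (v : ℝ) :
    ∫ u in Set.Ioi 0, B u * fejerKernel l (u - (v - η)) ≤
      exp (2 * η) * B v * (∫ u, fejerKernel l u) + C * (2 / l * (1 + 1 / η ^ 2)) * π := by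
  have hK := ((integrable_fejerKernel hl).comp_sub_right (v - η)).const_mul (exp (2 * η) * B v)
  have hinv := (integrable_inv_one_add_sq.comp_sub_right (v - η)).const_mul
    (C * (2 / l * (1 + 1 / η ^ 2)))
  have hBK := integrable_mul_fejerKernel_sub (measurable_of_monotone_exp_mul hB)
    (fun u => (abs_of_nonneg (hB0 u)).trans_le (hBC u)) hl (v - η)
  calc _ ≤ ∫ u, B u * fejerKernel l (u - (v - η)) :=
        setIntegral_le_integral hBK
          (.of_forall fun u => mul_nonneg (hB0 u) (fejerKernel_nonneg hl))
    _ ≤ ∫ u, (exp (2 * η) * B v * fejerKernel l (u - (v - η)) +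
          C * (2 / l * (1 + 1 / η ^ 2)) * (1 + (u - (v - η)) ^ 2)⁻¹) :=
        integral_mono hBK (hK.add hinv) fun u => mul_fejerKernel_sub_le hB hB0 hBC hl hη u v
    _ = _ := by
      rw [integral_add hK hinv, integral_const_mul, integral_const_mul,
        integral_sub_right_eq_self (fejerKernel l),
        integral_sub_right_eq_self fun u : ℝ => (1 + u ^ 2)⁻¹, integral_univ_inv_one_add_sq]

lemma tendsto_setIntegral_Ioi_mul_fejerKernel_sub_of_laplace (hB : Measurable B)
    (hB0 : ∀ u, 0 ≤ B u) (hBC : ∀ u, B u ≤ C) (hG : ContinuousOn G {s | 0 ≤ s.re})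
    (hBG : ∀ s : ℂ, 0 < s.re →
      G s = ∫ u in Set.Ioi (0 : ℝ), ((B u - 1 : ℝ) : ℂ) * Complex.exp (-s * u))
    (hl : 0 < l) :
    Tendsto (fun v => ∫ u in Set.Ioi 0, B u * fejerKernel l (u - v)) atTop
      (𝓝 (∫ u, fejerKernel l u)) := by
  have hsub : Measurable fun u => B u - 1 := hB.sub_const 1
  have habs : ∀ u, |B u - 1| ≤ C + 1 := fun u => by
    have := hB0 u
    have := hBC u
    exact abs_le.2 ⟨by linarith, by linarith⟩
  have hlim := (tendsto_setIntegral_Ioi_mul_fejerKernel_sub hsub habs hG hBG hl).add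
    (tendsto_setIntegral_Ioi_fejerKernel_sub hl)
  rw [zero_add] at hlim
  refine hlim.congr fun v => ?_
  rw [← integral_add (integrable_mul_fejerKernel_sub hsub habs hl v).integrableOn
    ((integrable_fejerKernel hl).comp_sub_right v).integrableOn]
  simp only [sub_one_mul, sub_add_cancel]

-- The kernel is centred at `v - η`, so that nearly all of its mass lies in `[v - 2η, v]`, where
-- `B ≤ exp (2η) * B v`.
lemma eventually_le_exp_mul_of_laplace (hB : Monotone fun u => exp u * B u)
    (hB0 : ∀ u, 0 ≤ B u) (hBC : ∀ u, B u ≤ C) (hG : ContinuousOn G {s | 0 ≤ s.re})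
    (hBG : ∀ s : ℂ, 0 < s.re →
      G s = ∫ u in Set.Ioi (0 : ℝ), ((B u - 1 : ℝ) : ℂ) * Complex.exp (-s * u))
    (hη : 0 < η) (hε : 0 < ε) :
    ∀ᶠ v in atTop, 1 - ε ≤ exp (2 * η) * B v := by
  have hκ := integral_fejerKernel_pos one_pos
  set κ := ∫ u, fejerKernel 1 u
  obtain ⟨l, hl, htail⟩ : ∃ l > 0, C * (2 / l * (1 + 1 / η ^ 2)) * π < ε / 2 * κ := by
    have hlim : Tendsto (fun l : ℝ => C * (2 / l * (1 + 1 / η ^ 2)) * π) atTop (𝓝 0) := by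
      simpa using (((tendsto_const_nhds.div_atTop tendsto_id).mul_const _).const_mul C).mul_const π
    exact ((eventually_gt_atTop 0).and (hlim.eventually_lt_const (by positivity))).exists
  have hshift : Tendsto (fun v : ℝ => v - η) atTop atTop :=
    tendsto_atTop_add_const_right _ (-η) tendsto_id
  have hlim := (tendsto_setIntegral_Ioi_mul_fejerKernel_sub_of_laplace
    (measurable_of_monotone_exp_mul hB) hB0 hBC hG hBG hl).comp hshift
  rw [integral_fejerKernel hl] at hlim
  filter_upwards [hlim.eventually_const_le (show κ - ε / 2 * κ < κ by nlinarith)] with v hv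
  have hupper := setIntegral_Ioi_mul_fejerKernel_sub_le hB hB0 hBC hl hη v
  rw [integral_fejerKernel hl] at hupper
  refine le_of_mul_le_mul_right ?_ hκ
  linarith [hv.trans hupper]

theorem eventually_one_sub_le_of_laplace (hB : Monotone fun u => exp u * B u)
    (hB0 : ∀ u, 0 ≤ B u) (hBC : ∀ u, B u ≤ C) (hG : ContinuousOn G {s | 0 ≤ s.re})
    (hBG : ∀ s : ℂ, 0 < s.re →
      G s = ∫ u in Set.Ioi (0 : ℝ), ((B u - 1 : ℝ) : ℂ) * Complex.exp (-s * u))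
    (hε : 0 < ε) :
    ∀ᶠ v in atTop, 1 - ε ≤ B v := by
  filter_upwards [eventually_le_exp_mul_of_laplace hB hB0 hBC hG hBG
    (show 0 < ε / 4 by positivity) (half_pos hε)] with v hv
  have hexp := add_one_le_exp (-(2 * (ε / 4)))
  have hBv : exp (-(2 * (ε / 4))) * (1 - ε / 2) ≤ B v := by
    rwa [exp_neg, inv_mul_le_iff₀ (exp_pos _)]
  rcases le_or_gt ε 2 with hε2 | hε2
  · nlinarith
  · linarith [hB0 v]

end Tauberian

section PrimeNumberTheorem

open MeasureTheory Filter ArithmeticFunction.vonMangoldt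

/-- The normalised Chebyshev function `u ↦ ψ(e ^ u) / e ^ u`. -/
noncomputable def psiExp (u : ℝ) : ℝ := Chebyshev.psi (exp u) * exp (-u)

lemma exp_mul_psiExp (u : ℝ) : exp u * psiExp u = Chebyshev.psi (exp u) := by
  rw [psiExp, mul_left_comm, ← exp_add, add_neg_cancel, exp_zero, mul_one]

lemma monotone_exp_mul_psiExp : Monotone fun u => exp u * psiExp u := by
  simp only [exp_mul_psiExp]
  exact Chebyshev.psi_mono.comp exp_monotone

lemma psiExp_nonneg (u : ℝ) : 0 ≤ psiExp u :=
  mul_nonneg (Chebyshev.psi_nonneg _) (exp_pos _).le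

lemma psiExp_le (u : ℝ) : psiExp u ≤ log 4 + 4 := by
  rw [psiExp, exp_neg, ← div_eq_mul_inv, div_le_iff₀ (exp_pos u)]
  exact Chebyshev.psi_le_const_mul_self (exp_pos u).le

lemma image_exp_Ioi_zero : exp '' Set.Ioi 0 = Set.Ioi 1 := by
  ext y
  refine ⟨?_, fun hy => ⟨log y, log_pos hy, exp_log (one_pos.trans hy)⟩⟩
  rintro ⟨u, hu, rfl⟩
  exact one_lt_exp_iff.2 hu

lemma LSeries_vonMangoldt_eq_mul_laplace_psiExp {s : ℂ} (hs : 1 < s.re) :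
    LSeries (fun n => (Λ n : ℂ)) s =
      s * ∫ u in Set.Ioi (0 : ℝ), (psiExp u : ℂ) * Complex.exp (-(s - 1) * u) := by
  have hsum (x : ℝ) : ∑ k ∈ Icc 1 ⌊x⌋₊, (Λ k : ℂ) = (Chebyshev.psi x : ℂ) := by
    rw [Chebyshev.psi, Complex.ofReal_sum]
    rfl
  have hbound : (fun n => ∑ k ∈ Icc 1 n, Λ k) =O[atTop] fun n : ℕ => (n : ℝ) ^ (1 : ℝ) := by
    refine .of_bound (log 4 + 4) (.of_forall fun n => ?_)
    have hpsi : ∑ k ∈ Icc 1 n, Λ k = Chebyshev.psi n := by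
      rw [Chebyshev.psi, Nat.floor_natCast]
      rfl
    rw [hpsi, rpow_one, Real.norm_of_nonneg (Chebyshev.psi_nonneg _),
      Real.norm_of_nonneg n.cast_nonneg]
    exact Chebyshev.psi_le_const_mul_self n.cast_nonneg
  rw [LSeries_eq_mul_integral_of_nonneg (fun n => Λ n) zero_le_one hs hbound
    fun _ => ArithmeticFunction.vonMangoldt_nonneg, ← image_exp_Ioi_zero,
    integral_image_eq_integral_abs_deriv_smul measurableSet_Ioi
      (fun u _ => (hasDerivAt_exp u).hasDerivWithinAt) exp_injective.injOn]
  congr 1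
  refine integral_congr_ae (.of_forall fun u => ?_)
  have hcpow : ((exp u : ℝ) : ℂ) ^ (-(s + 1)) = Complex.exp (-(s + 1) * u) := by
    rw [Complex.cpow_def_of_ne_zero (by exact_mod_cast (exp_pos u).ne'),
      ← Complex.ofReal_log (exp_pos u).le, log_exp, mul_comm]
  simp only [hsum, abs_of_pos (exp_pos u), Complex.real_smul, hcpow, psiExp]
  push_cast
  rw [mul_left_comm, ← Complex.exp_add, mul_assoc, ← Complex.exp_add]
  ring_nf

lemma laplace_psiExp_sub_one {s : ℂ} (hs : 0 < s.re) :
    ∫ u in Set.Ioi (0 : ℝ), ((psiExp u - 1 : ℝ) : ℂ) * Complex.exp (-s * u) =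
      LSeries (fun n => (Λ n : ℂ)) (s + 1) / (s + 1) - 1 / s := by
  have hexp : IntegrableOn (fun u : ℝ => Complex.exp (-s * u)) (Set.Ioi 0) :=
    integrableOn_exp_mul_complex_Ioi (by simpa using hs) 0
  have hpsi : IntegrableOn (fun u : ℝ => (psiExp u : ℂ) * Complex.exp (-s * u)) (Set.Ioi 0) := by
    have hmeas := measurable_of_monotone_exp_mul monotone_exp_mul_psiExp
    refine hexp.bdd_mul (c := log 4 + 4) (by fun_prop) (.of_forall fun u => ?_)
    rw [Complex.norm_of_nonneg (psiExp_nonneg u)]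
    exact psiExp_le u
  have hs1 : 1 < (s + 1).re := by simpa using hs
  have hne : s + 1 ≠ 0 := fun h => by
    linarith [(congrArg Complex.re h).trans Complex.zero_re]
  rw [LSeries_vonMangoldt_eq_mul_laplace_psiExp hs1, mul_div_cancel_left₀ _ hne,
    add_sub_cancel_right]
  simp only [Complex.ofReal_sub, Complex.ofReal_one, sub_one_mul]
  rw [integral_sub hpsi hexp, integral_exp_mul_complex_Ioi (by simpa using hs) 0]
  simp [neg_div_neg_eq]

lemma LSeries_vonMangoldt_eq_residueClassAux_add {s : ℂ} (hs : 1 < s.re) :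
    LSeries (fun n => (Λ n : ℂ)) s = LFunctionResidueClassAux (1 : ZMod 1) s + 1 / (s - 1) := by
  have hclass : residueClass (1 : ZMod 1) = fun n => Λ n :=
    Set.indicator_eq_self.2 fun _ _ => Subsingleton.elim _ _
  have haux := eqOn_LFunctionResidueClassAux (a := (1 : ZMod 1)) isUnit_one hs
  simp only [hclass, Nat.totient_one, Nat.cast_one, inv_one] at haux
  rw [haux, sub_add_cancel]

theorem eventually_one_sub_le_psiExp {ε : ℝ} (hε : 0 < ε) : ∀ᶠ u in atTop, 1 - ε ≤ psiExp u := by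
  have hre {s : ℂ} (hs : 0 ≤ s.re) : 1 ≤ (s + 1).re := by simpa using hs
  have hne {s : ℂ} (hs : 0 ≤ s.re) : s + 1 ≠ 0 := fun h => by
    linarith [hre hs, (congrArg Complex.re h).trans Complex.zero_re]
  refine eventually_one_sub_le_of_laplace monotone_exp_mul_psiExp psiExp_nonneg psiExp_le
    (G := fun s => (LFunctionResidueClassAux (1 : ZMod 1) (s + 1) - 1) / (s + 1))
    ?_ (fun s hs => ?_) hε
  · have haux := (continuousOn_LFunctionResidueClassAux (1 : ZMod 1)).comp
      (continuous_add_const 1).continuousOn fun _ hs => hre hs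
    exact (haux.sub continuousOn_const).div (by fun_prop) fun _ hs => hne hs
  · have hs0 : s ≠ 0 := fun h => by simp [h] at hs
    have hs1 : s + 1 ≠ 0 := hne hs.le
    rw [laplace_psiExp_sub_one hs,
      LSeries_vonMangoldt_eq_residueClassAux_add (by simpa using hs), add_sub_cancel_right]
    field_simp
    ring

lemma primePi_eq_primeCounting (x : ℝ) : primePi x = Nat.primeCounting ⌊x⌋₊ := by
  rw [primePi, Nat.primeCounting, Nat.primeCounting', Nat.count_eq_card_filter_range]

theorem eventually_one_sub_mul_le_primePi {ε : ℝ} (hε : 0 < ε) :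
    ∀ᶠ x : ℝ in atTop, (1 - ε) * (x / log x) ≤ primePi x := by
  filter_upwards [tendsto_log_atTop.eventually (eventually_one_sub_le_psiExp hε),
    eventually_gt_atTop 1] with x hx hx1
  have hx0 : 0 < x := one_pos.trans hx1
  rw [psiExp, exp_neg, exp_log hx0, ← div_eq_mul_inv, le_div_iff₀ hx0] at hx
  rw [primePi_eq_primeCounting, ← mul_div_assoc, div_le_iff₀ (log_pos hx1)]
  exact hx.trans (Chebyshev.psi_le_primeCounting_mul_log' x)

end PrimeNumberTheorem

theorem limsup_T_div_pi_le_general (c : ℝ) (hc0 : 0 < c) (hc1 : c ≤ 1) :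
    ∀ ε > 0, ∃ x₀ : ℝ, ∀ x ≥ x₀,
      (T c x : ℝ) ≤ (8 * (1 / c - 1) + ε) * (primePi x : ℝ) := by
  intro ε hε
  set A := 8 * (1 / c - 1)
  have hA0 : 0 ≤ A := mul_nonneg (by norm_num) (sub_nonneg.2 ((one_le_div hc0).2 hc1))
  have hAε : 0 < A + ε := by positivity
  refine Filter.eventually_atTop.1 ?_
  filter_upwards [eventually_T_le hc0 hc1 (half_pos hε),
    eventually_one_sub_mul_le_primePi (div_pos (half_pos hε) hAε)] with x hT hpi
  calc (T c x : ℝ) ≤ (A + ε / 2) * (x / log x) := hT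
    _ = (A + ε) * ((1 - ε / 2 / (A + ε)) * (x / log x)) := by
      field_simp
      ring
    _ ≤ (A + ε) * primePi x := by gcongr

/-- For every `8/9 ≤ c < 1`, `limsup_{x→∞} T_c(x)/π(x) ≤ 8(1/c − 1)`. -/
theorem limsup_T_div_pi_le (c : ℝ) (hc1 : 8 / 9 ≤ c) (hc2 : c < 1) :
    ∀ ε > 0, ∃ x₀ : ℝ, ∀ x ≥ x₀,
      (T c x : ℝ) ≤ (8 * (1 / c - 1) + ε) * (primePi x : ℝ) :=
  limsup_T_div_pi_le_general c (by linarith) hc2.le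
end

section
/- limsup_{x→∞} T_c(x)/π(x) → 0 as c → 1⁻; that is, for every ε > 0 there exists c₀ with 0 < c₀ < 1 such that for every c with c₀ ≤ c < 1 there exists x₀ such that T_c(x) ≤ ε·π(x) for all x ≥ x₀. -/
open Real Finset

attribute [local instance] Classical.propDecidable

/-!
If `p ≤ x` and `P⁺(p - 1) ≥ p ^ c` with `c ≥ 1 / 2`, then every other prime factor of `p - 1` is at
most `x ^ (1 - c)`. So, apart from the primes `p ≤ √x`, such a `p` avoids the class `0` modulo every
small prime and moreover the class `1` modulo every prime `l` with `x ^ (1 - c) < l ≤ x ^ (1 / 16)`.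
A sieve of large sieve type bounds the number of such `p` by about `x / L` with
`L = ∑ q, ∏ p ∣ q, w(p) / (p - w(p))` over squarefree `q`, where `w(p) ∈ {1, 2}` is the number of
classes removed modulo `p`. The doubled classes make `L` at least a constant times
`log x * ∑ l, 1 / l` over these `l`, and by a Mertens estimate the sum over `l` is at least a
constant times `log (1 / (1 - c))`. Hence `T_c(x) / π(x) ≪ 1 / log (1 / (1 - c))`.

The sieve bound is a dual form of the large sieve inequality without exponential sums. To each
squarefree `q` one attaches a `q`-periodic function equal to the sieve weight on every unsieved `n`;
the Chinese remainder theorem makes these functions orthogonal over complete periods, and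
incomplete periods cost only `Q ^ 4`, which is negligible for `Q ≤ x ^ (1 / 8)`.
-/

section FiniteSums

theorem sum_le_sum_of_injOn {α β M : Type*} [AddCommMonoid M] [PartialOrder M]
    [IsOrderedAddMonoid M] {s : Finset α} {t : Finset β} (e : α → β) {f : α → M} {g : β → M}
    (hst : ∀ a ∈ s, e a ∈ t) (he : Set.InjOn e s)
    (hg : ∀ b ∈ t, 0 ≤ g b) (hfg : ∀ a ∈ s, f a ≤ g (e a)) :
    ∑ a ∈ s, f a ≤ ∑ b ∈ t, g b :=
  calc ∑ a ∈ s, f a ≤ ∑ a ∈ s, g (e a) := sum_le_sum hfg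
    _ = ∑ b ∈ s.image e, g b := (sum_image he).symm
    _ ≤ ∑ b ∈ t, g b :=
      sum_le_sum_of_subset_of_nonneg (image_subset_iff.2 hst) fun b hb _ => hg b hb

variable {R : Type*} [CommSemiring R]

theorem sum_range_mul_of_coprime_of_periodic {a b : ℕ} (ha : 0 < a) (hb : 0 < b)
    (hab : a.Coprime b) {A B : ℕ → R} (hA : A.Periodic a) (hB : B.Periodic b) :
    ∑ n ∈ range (a * b), A n * B n = (∑ n ∈ range a, A n) * ∑ n ∈ range b, B n := by
  rw [sum_mul_sum, ← sum_product']
  refine sum_nbij (fun n => (n % a, n % b)) ?maps ?inj ?surj ?eq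
  case maps =>
    intro n _
    simp [Nat.mod_lt _ ha, Nat.mod_lt _ hb]
  case inj =>
    intro m hm n hn hmn
    simp only [coe_range, Set.mem_Iio, Prod.mk.injEq] at hm hn hmn
    exact Nat.ModEq.eq_of_lt_of_lt ((Nat.modEq_and_modEq_iff_modEq_mul hab).1 hmn) hm hn
  case surj =>
    rintro ⟨u, v⟩ huv
    simp only [coe_product, coe_range, Set.mem_prod, Set.mem_Iio] at huv
    obtain ⟨hu, hv⟩ := (Nat.chineseRemainder hab u v).2
    refine ⟨Nat.chineseRemainder hab u v, ?_, Prod.ext ?_ ?_⟩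
    · simpa using Nat.chineseRemainder_lt_mul hab u v ha.ne' hb.ne'
    · exact Eq.trans hu (Nat.mod_eq_of_lt huv.1)
    · exact Eq.trans hv (Nat.mod_eq_of_lt huv.2)
  case eq =>
    intro n _
    simp only [hA.map_mod_nat, hB.map_mod_nat]

theorem periodic_prod_of_dvd {s : Finset ℕ} {g : ℕ → ℕ → R} {D : ℕ} (hg : ∀ m, (g m).Periodic m)
    (hD : ∀ m ∈ s, m ∣ D) : (fun n => ∏ m ∈ s, g m n).Periodic D := by
  intro n
  refine prod_congr rfl fun m hm => ?_
  obtain ⟨k, rfl⟩ := hD m hm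
  rw [mul_comm]
  exact (hg m).nat_mul k n

theorem sum_range_prod_of_periodic {s : Finset ℕ} (hs : ∀ p ∈ s, p.Prime) {g : ℕ → ℕ → R}
    (hg : ∀ p, (g p).Periodic p) :
    ∑ n ∈ range (∏ p ∈ s, p), ∏ p ∈ s, g p n = ∏ p ∈ s, ∑ n ∈ range p, g p n := by
  induction s using Finset.induction_on with
  | empty => simp
  | insert p s hps ih =>
    obtain ⟨hp, hs⟩ := (forall_mem_insert _ _ _).1 hs
    simp_rw [prod_insert hps]
    rw [← ih hs]
    refine sum_range_mul_of_coprime_of_periodic hp.pos (prod_pos fun q hq => (hs q hq).pos) ?_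
      (hg p) (periodic_prod_of_dvd hg fun q hq => dvd_prod_of_mem _ hq)
    exact Nat.Coprime.prod_right fun q hq =>
      (Nat.coprime_primes hp (hs q hq)).2 (ne_of_mem_of_not_mem hq hps).symm

theorem sum_range_of_periodic {G : ℕ → R} {D : ℕ} (hG : G.Periodic D) (N : ℕ) :
    ∑ n ∈ range N, G n = (N / D : ℕ) * ∑ n ∈ range D, G n + ∑ n ∈ range (N % D), G n := by
  have shift : ∀ k r, ∑ n ∈ range (k * D + r), G n =
      k * ∑ n ∈ range D, G n + ∑ n ∈ range r, G n := by
    intro k r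
    induction k with
    | zero => simp
    | succ k ih =>
      have hGD : ∀ n, G (D + n) = G n := fun n => by rw [add_comm, hG]
      rw [show (k + 1) * D + r = D + (k * D + r) by ring, sum_range_add]
      simp_rw [hGD]
      rw [ih]
      push_cast
      ring
  rw [← shift, Nat.div_add_mod']

theorem sum_range_le_of_periodic {G : ℕ → ℝ} {D : ℕ} (hD : 0 < D) (hG : G.Periodic D) {M : ℝ}
    (hM : ∀ n, |G n| ≤ M) (hsum : 0 ≤ ∑ n ∈ range D, G n) (N : ℕ) :
    ∑ n ∈ range N, G n ≤ N / D * ∑ n ∈ range D, G n + D * M := by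
  have hM0 : 0 ≤ M := (abs_nonneg _).trans (hM 0)
  rw [sum_range_of_periodic hG]
  gcongr
  · exact Nat.cast_div_le
  · calc ∑ n ∈ range (N % D), G n ≤ ∑ _n ∈ range (N % D), M :=
          sum_le_sum fun n _ => (le_abs_self _).trans (hM n)
      _ = (N % D : ℕ) * M := by rw [sum_const, card_range, nsmul_eq_mul]
      _ ≤ D * M := by gcongr; exact (Nat.mod_lt N hD).le

end FiniteSums

/-! ### The sieve -/

section Sieve

/-- The factor `w / (p - w)` at the prime `p` of the sieve in which `w = #(Ω p)` residue classes
modulo `p` are removed. -/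
noncomputable def sieveFactor (Ω : ℕ → Finset ℕ) (p : ℕ) : ℝ := #(Ω p) / (p - #(Ω p))

/-- The multiplicative function `h(q) = ∏_{p ∣ q} w(p) / (p - w(p))`. -/
noncomputable def sieveWeight (Ω : ℕ → Finset ℕ) (q : ℕ) : ℝ :=
  ∏ p ∈ q.primeFactors, sieveFactor Ω p

/-- The denominator `∑_{q ≤ Q} μ(q)² h(q)` of the sieve bound. -/
noncomputable def sieveSum (Ω : ℕ → Finset ℕ) (Q : ℕ) : ℝ :=
  ∑ q ∈ Icc 1 Q with Squarefree q, sieveWeight Ω q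

/-- The function of mean zero modulo `p` that is constant on the removed residue classes `Ω p` and
equal to `sieveFactor Ω p` on the remaining ones. -/
noncomputable def localSieveFun (Ω : ℕ → Finset ℕ) (p n : ℕ) : ℝ :=
  if n % p ∈ Ω p then -1 else sieveFactor Ω p

/-- The product of the local sieve functions over the primes dividing `q`. For squarefree `q` these
functions are pairwise orthogonal over a common period. -/
noncomputable def sieveFun (Ω : ℕ → Finset ℕ) (q n : ℕ) : ℝ :=
  ∏ p ∈ q.primeFactors, localSieveFun Ω p n

variable {Ω : ℕ → Finset ℕ} {p q r Q N : ℕ}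

theorem card_lt_of_ssubset_range (hΩ : Ω p ⊂ range p) : (#(Ω p) : ℝ) < p := by
  exact_mod_cast (card_lt_card hΩ).trans_eq (card_range p)

theorem sieveFactor_nonneg (hΩ : Ω p ⊂ range p) : 0 ≤ sieveFactor Ω p :=
  div_nonneg (Nat.cast_nonneg _) (sub_nonneg.2 (card_lt_of_ssubset_range hΩ).le)

theorem card_div_le_sieveFactor (hΩ : Ω p ⊂ range p) :
    (#(Ω p) : ℝ) / p ≤ sieveFactor Ω p :=
  div_le_div_of_nonneg_left (Nat.cast_nonneg _) (sub_pos.2 (card_lt_of_ssubset_range hΩ))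
    (sub_le_self _ (Nat.cast_nonneg _))

theorem periodic_localSieveFun (p : ℕ) : (localSieveFun Ω p).Periodic p := by
  intro n
  simp only [localSieveFun, Nat.add_mod_right]

theorem sum_range_ite_mod_mem (hΩ : Ω p ⊂ range p) (a b : ℝ) :
    ∑ n ∈ range p, (if n % p ∈ Ω p then a else b) = #(Ω p) * a + (p - #(Ω p)) * b := by
  have hmod : ∀ n ∈ range p, (if n % p ∈ Ω p then a else b) = if n ∈ Ω p then a else b :=
    fun n hn => by rw [Nat.mod_eq_of_lt (mem_range.1 hn)]
  rw [sum_congr rfl hmod, sum_ite, filter_mem_eq_inter, inter_eq_right.2 hΩ.subset,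
    ← sdiff_eq_filter, sum_const, sum_const, card_sdiff_of_subset hΩ.subset, card_range,
    nsmul_eq_mul, nsmul_eq_mul, Nat.cast_sub ((card_lt_card hΩ).le.trans_eq (card_range p))]

theorem sum_range_localSieveFun (hΩ : Ω p ⊂ range p) :
    ∑ n ∈ range p, localSieveFun Ω p n = 0 := by
  have hw := sub_pos.2 (card_lt_of_ssubset_range hΩ)
  simp only [localSieveFun, sum_range_ite_mod_mem hΩ, sieveFactor]
  field_simp
  ring

theorem sum_range_localSieveFun_sq (hΩ : Ω p ⊂ range p) :
    ∑ n ∈ range p, localSieveFun Ω p n ^ 2 = p * sieveFactor Ω p := by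
  have hw := sub_pos.2 (card_lt_of_ssubset_range hΩ)
  simp only [localSieveFun, ite_pow, sum_range_ite_mod_mem hΩ, sieveFactor]
  field_simp
  ring

theorem abs_localSieveFun_le (hp : 1 ≤ p) (hΩ : Ω p ⊂ range p) (n : ℕ) :
    |localSieveFun Ω p n| ≤ p * sieveFactor Ω p := by
  have hw := sub_pos.2 (card_lt_of_ssubset_range hΩ)
  unfold localSieveFun
  split_ifs with hn
  · have hcard : (1 : ℝ) ≤ #(Ω p) := by exact_mod_cast card_pos.2 ⟨_, hn⟩
    rw [abs_neg, abs_one, sieveFactor, mul_div_assoc', one_le_div hw]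
    nlinarith
  · rw [abs_of_nonneg (sieveFactor_nonneg hΩ)]
    exact le_mul_of_one_le_left (sieveFactor_nonneg hΩ) (by exact_mod_cast hp)

theorem periodic_sieveFun (q : ℕ) : (sieveFun Ω q).Periodic q :=
  periodic_prod_of_dvd periodic_localSieveFun fun _ => Nat.dvd_of_mem_primeFactors

theorem sieveFun_eq_sieveWeight {n : ℕ} (hn : ∀ p ∈ q.primeFactors, n % p ∉ Ω p) :
    sieveFun Ω q n = sieveWeight Ω q :=
  prod_congr rfl fun p hp => if_neg (hn p hp)

theorem sieveWeight_nonneg (hΩ : ∀ p, p.Prime → Ω p ⊂ range p) : 0 ≤ sieveWeight Ω q :=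
  prod_nonneg fun p hp => sieveFactor_nonneg (hΩ p (Nat.prime_of_mem_primeFactors hp))

theorem sieveSum_pos (hΩ : ∀ p, p.Prime → Ω p ⊂ range p) (hQ : 1 ≤ Q) : 0 < sieveSum Ω Q := by
  refine sum_pos' (fun q _ => sieveWeight_nonneg hΩ) ⟨1, ?_, ?_⟩
  · simp [hQ]
  · simp [sieveWeight]

theorem abs_sieveFun_le (hΩ : ∀ p, p.Prime → Ω p ⊂ range p) (hq : Squarefree q) (n : ℕ) :
    |sieveFun Ω q n| ≤ q * sieveWeight Ω q :=
  calc |sieveFun Ω q n| ≤ ∏ p ∈ q.primeFactors, (p * sieveFactor Ω p) := by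
        rw [sieveFun, abs_prod]
        refine prod_le_prod (fun _ _ => abs_nonneg _) fun p hp => ?_
        have hp := Nat.prime_of_mem_primeFactors hp
        exact abs_localSieveFun_le hp.one_le (hΩ p hp) n
    _ = q * sieveWeight Ω q := by
        rw [prod_mul_distrib, ← Nat.cast_prod, Nat.prod_primeFactors_of_squarefree hq, sieveWeight]

theorem sum_period_sieveFun_sq (hΩ : ∀ p, p.Prime → Ω p ⊂ range p) (hq : Squarefree q) :
    ∑ n ∈ range q, sieveFun Ω q n ^ 2 = q * sieveWeight Ω q := by
  have hprime : ∀ p ∈ q.primeFactors, p.Prime := fun p => Nat.prime_of_mem_primeFactors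
  have hCRT := sum_range_prod_of_periodic hprime (g := fun p n => localSieveFun Ω p n ^ 2)
    fun p => (periodic_localSieveFun p).comp (· ^ 2)
  rw [Nat.prod_primeFactors_of_squarefree hq,
    prod_congr rfl fun p hp => sum_range_localSieveFun_sq (hΩ p (hprime p hp)), prod_mul_distrib,
    ← Nat.cast_prod, Nat.prod_primeFactors_of_squarefree hq] at hCRT
  simpa only [sieveFun, prod_pow, sieveWeight] using hCRT

theorem sum_period_sieveFun_mul_of_not_dvd (hΩ : ∀ p, p.Prime → Ω p ⊂ range p)
    (hp : p.Prime) (hq : Squarefree q) (hpq : p ∣ q) (hr : r ≠ 0) (hpr : ¬p ∣ r) :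
    ∑ n ∈ range (q * r), sieveFun Ω q n * sieveFun Ω r n = 0 := by
  obtain ⟨m, rfl⟩ := hpq
  have hpm : p.Coprime m := Nat.coprime_of_squarefree_mul hq
  have hm : m ≠ 0 := right_ne_zero_of_mul hq.ne_zero
  have hfactor : ∀ n, sieveFun Ω (p * m) n = localSieveFun Ω p n * sieveFun Ω m n := by
    intro n
    rw [sieveFun, hpm.primeFactors_mul, prod_union hpm.disjoint_primeFactors, hp.primeFactors,
      prod_singleton, sieveFun]
  have hperiod : (fun n => sieveFun Ω m n * sieveFun Ω r n).Periodic (m * r) := by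
    refine Function.Periodic.mul ?_ ((periodic_sieveFun r).nat_mul m)
    rw [mul_comm]
    exact (periodic_sieveFun m).nat_mul r
  simp_rw [hfactor, mul_assoc]
  rw [sum_range_mul_of_coprime_of_periodic hp.pos (Nat.mul_pos hm.bot_lt hr.bot_lt)
    (hpm.mul_right ((Nat.Prime.coprime_iff_not_dvd hp).2 hpr)) (periodic_localSieveFun p) hperiod,
    sum_range_localSieveFun (hΩ p hp), zero_mul]

theorem sum_period_sieveFun_mul_of_ne (hΩ : ∀ p, p.Prime → Ω p ⊂ range p)
    (hq : Squarefree q) (hr : Squarefree r) (hqr : q ≠ r) :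
    ∑ n ∈ range (q * r), sieveFun Ω q n * sieveFun Ω r n = 0 := by
  obtain ⟨p, hp, hpqr⟩ : ∃ p : ℕ, p.Prime ∧ ¬(p ∣ q ↔ p ∣ r) := by
    by_contra! h
    exact hqr ((Nat.Squarefree.ext_iff hq hr).2 h)
  by_cases hpq : p ∣ q
  · exact sum_period_sieveFun_mul_of_not_dvd hΩ hp hq hpq hr.ne_zero (by tauto)
  · rw [mul_comm q r, sum_congr rfl fun n _ => mul_comm (sieveFun Ω q n) (sieveFun Ω r n)]
    exact sum_period_sieveFun_mul_of_not_dvd hΩ hp hr (by tauto) hq.ne_zero hpq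

theorem abs_sieveFun_mul_le (hΩ : ∀ p, p.Prime → Ω p ⊂ range p)
    (hq : Squarefree q) (hr : Squarefree r) (n : ℕ) :
    |sieveFun Ω q n * sieveFun Ω r n| ≤ q * sieveWeight Ω q * (r * sieveWeight Ω r) := by
  rw [abs_mul]
  exact mul_le_mul (abs_sieveFun_le hΩ hq n) (abs_sieveFun_le hΩ hr n) (abs_nonneg _)
    (mul_nonneg q.cast_nonneg (sieveWeight_nonneg hΩ))

theorem sum_range_sieveFun_mul_le (hΩ : ∀ p, p.Prime → Ω p ⊂ range p)
    (hq : Squarefree q) (hr : Squarefree r) (hqQ : q ≤ Q) (hrQ : r ≤ Q) (N : ℕ) :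
    ∑ n ∈ range N, sieveFun Ω q n * sieveFun Ω r n ≤
      (if q = r then N * sieveWeight Ω q else 0) +
        (Q : ℝ) ^ 4 * (sieveWeight Ω q * sieveWeight Ω r) := by
  have hq0 : 0 < q := hq.ne_zero.bot_lt
  have hw : 0 ≤ sieveWeight Ω q * sieveWeight Ω r :=
    mul_nonneg (sieveWeight_nonneg hΩ) (sieveWeight_nonneg hΩ)
  split_ifs with hqr
  · subst hqr
    have hsum := sum_period_sieveFun_sq hΩ hq
    simp_rw [sq] at hsum
    have hbound := sum_range_le_of_periodic hq0
      ((periodic_sieveFun q).mul (periodic_sieveFun q)) (abs_sieveFun_mul_le hΩ hq hq)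
      (sum_nonneg fun n _ => mul_self_nonneg _) N
    simp only [Pi.mul_apply, hsum] at hbound
    have hpow : (q : ℝ) ^ 3 ≤ Q ^ 4 := by
      exact_mod_cast (Nat.pow_le_pow_left hqQ 3).trans
        (Nat.pow_le_pow_right (hq0.trans_le hqQ) (by norm_num))
    calc _ ≤ _ := hbound
      _ = N * sieveWeight Ω q + (q : ℝ) ^ 3 * (sieveWeight Ω q * sieveWeight Ω q) := by
          field_simp
      _ ≤ _ := by gcongr
  · have hsum := sum_period_sieveFun_mul_of_ne hΩ hq hr hqr
    have hperiod : (fun n => sieveFun Ω q n * sieveFun Ω r n).Periodic (q * r) := by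
      refine Function.Periodic.mul ?_ ((periodic_sieveFun r).nat_mul q)
      rw [mul_comm]
      exact (periodic_sieveFun q).nat_mul r
    have hbound := sum_range_le_of_periodic (Nat.mul_pos hq0 hr.ne_zero.bot_lt) hperiod
      (abs_sieveFun_mul_le hΩ hq hr) hsum.ge N
    rw [hsum, mul_zero, zero_add] at hbound
    calc _ ≤ _ := hbound
      _ = (q * r) ^ 2 * (sieveWeight Ω q * sieveWeight Ω r) := by push_cast; ring
      _ ≤ (Q * Q) ^ 2 * (sieveWeight Ω q * sieveWeight Ω r) := by gcongr
      _ = _ := by ring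

theorem sum_range_sq_sum_sieveFun_le (hΩ : ∀ p, p.Prime → Ω p ⊂ range p) (Q N : ℕ) :
    ∑ n ∈ range N, (∑ q ∈ Icc 1 Q with Squarefree q, sieveFun Ω q n) ^ 2 ≤
      N * sieveSum Ω Q + Q ^ 4 * sieveSum Ω Q ^ 2 := by
  set F := {q ∈ Icc 1 Q | Squarefree q}
  have hF : ∀ q ∈ F, q ≤ Q ∧ Squarefree q := fun q hq =>
    ⟨(mem_Icc.1 (mem_filter.1 hq).1).2, (mem_filter.1 hq).2⟩
  calc ∑ n ∈ range N, (∑ q ∈ F, sieveFun Ω q n) ^ 2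
      = ∑ q ∈ F, ∑ r ∈ F, ∑ n ∈ range N, sieveFun Ω q n * sieveFun Ω r n := by
        simp_rw [sq, sum_mul_sum]
        rw [sum_comm]
        exact sum_congr rfl fun q _ => sum_comm
    _ ≤ ∑ q ∈ F, ∑ r ∈ F, ((if q = r then N * sieveWeight Ω q else 0) +
          (Q : ℝ) ^ 4 * (sieveWeight Ω q * sieveWeight Ω r)) :=
        sum_le_sum fun q hq => sum_le_sum fun r hr => sum_range_sieveFun_mul_le hΩ (hF q hq).2
          (hF r hr).2 (hF q hq).1 (hF r hr).1 N
    _ = N * sieveSum Ω Q + Q ^ 4 * sieveSum Ω Q ^ 2 := by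
        simp_rw [sum_add_distrib, sum_ite_eq, ← mul_sum]
        rw [← sum_mul, ← sq, sum_ite_mem, inter_self, ← mul_sum, sieveSum]

theorem card_le_of_sifted (hΩ : ∀ p, p.Prime → Ω p ⊂ range p)
    (hQ : 1 ≤ Q) {S : Finset ℕ} (hS : S ⊆ range N)
    (hsift : ∀ n ∈ S, ∀ p, p.Prime → p ≤ Q → n % p ∉ Ω p) :
    (#S : ℝ) ≤ N / sieveSum Ω Q + Q ^ 4 := by
  set L := sieveSum Ω Q
  have hLpos : 0 < L := sieveSum_pos hΩ hQ
  have hsum : ∀ n ∈ S, ∑ q ∈ Icc 1 Q with Squarefree q, sieveFun Ω q n = L := by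
    intro n hn
    refine sum_congr rfl fun q hq => sieveFun_eq_sieveWeight fun p hp => ?_
    exact hsift n hn p (Nat.prime_of_mem_primeFactors hp)
      ((Nat.le_of_mem_primeFactors hp).trans (mem_Icc.1 (mem_filter.1 hq).1).2)
  have hmul : (#S : ℝ) * L ^ 2 ≤ (N / L + Q ^ 4) * L ^ 2 :=
    calc (#S : ℝ) * L ^ 2
        = ∑ n ∈ S, (∑ q ∈ Icc 1 Q with Squarefree q, sieveFun Ω q n) ^ 2 := by
          rw [sum_congr rfl fun n hn => by rw [hsum n hn], sum_const, nsmul_eq_mul]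
      _ ≤ ∑ n ∈ range N, (∑ q ∈ Icc 1 Q with Squarefree q, sieveFun Ω q n) ^ 2 :=
          sum_le_sum_of_subset_of_nonneg hS fun _ _ _ => sq_nonneg _
      _ ≤ N * L + Q ^ 4 * L ^ 2 := sum_range_sq_sum_sieveFun_le hΩ Q N
      _ = (N / L + Q ^ 4) * L ^ 2 := by field_simp
  exact le_of_mul_le_mul_right hmul (by positivity)

end Sieve

/-! ### Lower bounds for the sieve denominator -/

section SquarefreeSums

theorem log_le_sum_squarefree (Y : ℕ) :
    log (Y + 1) ≤ 2 * ∑ a ∈ Icc 1 Y with Squarefree a, (1 : ℝ) / a := by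
  have hharmonic : log (Y + 1) ≤ ∑ n ∈ Icc 1 Y, (1 : ℝ) / n := by
    simpa [harmonic_eq_sum_Icc] using log_add_one_le_harmonic Y
  have hsquares : ∑ b ∈ Icc 1 Y, (1 : ℝ) / b ^ 2 ≤ 2 := by
    have h := sum_Ioo_inv_sq_le (α := ℝ) 0 (Y + 1)
    rw [show Ioo 0 (Y + 1) = Icc 1 Y by ext; simp; omega] at h
    simpa [one_div] using h
  choose! A B hAB hA using Nat.sq_mul_squarefree
  have hsplit : ∑ n ∈ Icc 1 Y, (1 : ℝ) / n ≤
      ∑ ab ∈ {a ∈ Icc 1 Y | Squarefree a} ×ˢ Icc 1 Y, (1 : ℝ) / ab.1 * (1 / ab.2 ^ 2) := by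
    refine sum_le_sum_of_injOn (fun n => (A n, B n)) (fun n hn => ?_) (fun m _ n _ hmn => ?_)
      (fun _ _ => by positivity) fun n _ => ?_
    · obtain ⟨hn1, hnY⟩ := mem_Icc.1 hn
      have hAn : A n ∣ n := ⟨B n ^ 2, by rw [mul_comm, hAB]⟩
      have hBn : B n ∣ n := ⟨B n * A n, by rw [← mul_assoc, ← sq, hAB]⟩
      simp only [mem_product, mem_filter, mem_Icc]
      exact ⟨⟨⟨Nat.pos_of_dvd_of_pos hAn hn1, (Nat.le_of_dvd hn1 hAn).trans hnY⟩, hA n⟩,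
        Nat.pos_of_dvd_of_pos hBn hn1, (Nat.le_of_dvd hn1 hBn).trans hnY⟩
    · obtain ⟨hAmn, hBmn⟩ := Prod.mk.inj hmn
      rw [← hAB m, ← hAB n, hAmn, hBmn]
    · rw [div_mul_div_comm, one_mul, mul_comm]
      exact_mod_cast (congrArg (fun k : ℕ => (1 : ℝ) / k) (hAB n)).ge
  simp only [sum_product, ← sum_mul_sum] at hsplit
  calc log (Y + 1) ≤ _ := hharmonic.trans hsplit
    _ ≤ (∑ a ∈ Icc 1 Y with Squarefree a, (1 : ℝ) / a) * 2 := by gcongr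
    _ = _ := mul_comm _ _

theorem sum_squarefree_dvd_le {p : ℕ} (hp : p.Prime) (Y : ℕ) :
    ∑ a ∈ Icc 1 Y with Squarefree a ∧ p ∣ a, (1 : ℝ) / a ≤
      1 / p * ∑ a ∈ Icc 1 Y with Squarefree a ∧ ¬p ∣ a, (1 : ℝ) / a := by
  rw [mul_sum]
  refine sum_le_sum_of_injOn (· / p) ?_ ?_ (fun _ _ => by positivity) ?_
  · intro a ha
    simp only [mem_filter, mem_Icc] at ha ⊢
    obtain ⟨⟨ha1, haY⟩, hsq, k, rfl⟩ := ha
    rw [Nat.mul_div_cancel_left _ hp.pos]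
    exact ⟨⟨pos_of_mul_pos_right ha1 p.zero_le, (Nat.le_mul_of_pos_left k hp.pos).trans haY⟩,
      hsq.of_mul_right, hp.coprime_iff_not_dvd.1 (Nat.coprime_of_squarefree_mul hsq)⟩
  · intro a ha b hb hab
    exact (Nat.div_left_inj (mem_filter.1 ha).2.2 (mem_filter.1 hb).2.2).1 hab
  · intro a ha
    obtain ⟨-, -, k, rfl⟩ := mem_filter.1 ha
    rw [Nat.mul_div_cancel_left _ hp.pos, Nat.cast_mul, div_mul_div_comm, one_mul]

theorem log_le_sum_squarefree_not_dvd {p : ℕ} (hp : p.Prime) (Y : ℕ) :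
    log (Y + 1) ≤ 3 * ∑ a ∈ Icc 1 Y with Squarefree a ∧ ¬p ∣ a, (1 : ℝ) / a := by
  have hsplit : ∑ a ∈ Icc 1 Y with Squarefree a, (1 : ℝ) / a =
      ∑ a ∈ Icc 1 Y with Squarefree a ∧ p ∣ a, (1 : ℝ) / a +
        ∑ a ∈ Icc 1 Y with Squarefree a ∧ ¬p ∣ a, (1 : ℝ) / a := by
    rw [← sum_filter_add_sum_filter_not _ (p ∣ ·), filter_filter, filter_filter]
  have hhalf : 1 / (p : ℝ) * ∑ a ∈ Icc 1 Y with Squarefree a ∧ ¬p ∣ a, (1 : ℝ) / a ≤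
      1 / 2 * ∑ a ∈ Icc 1 Y with Squarefree a ∧ ¬p ∣ a, (1 : ℝ) / a := by
    gcongr
    exact_mod_cast hp.two_le
  linarith [log_le_sum_squarefree Y, sum_squarefree_dvd_le hp Y]

/-- The sum of the reciprocals of the primes in `(z, Y]`. -/
noncomputable def primeRecipSum (z Y : ℕ) : ℝ := ∑ p ∈ Ioc z Y with p.Prime, (1 : ℝ) / p

theorem sum_prime_sum_squarefree_not_dvd_le (z X Y : ℕ) :
    ∑ p ∈ Ioc z X with p.Prime, ∑ a ∈ Icc 1 Y with Squarefree a ∧ ¬p ∣ a, (1 : ℝ) / (p * a : ℕ) ≤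
      ∑ q ∈ Icc 1 (X * Y) with Squarefree q, (#{p ∈ q.primeFactors | z < p} : ℝ) / q := by
  have hcard : ∀ q : ℕ, (#{p ∈ q.primeFactors | z < p} : ℝ) / q =
      ∑ p ∈ q.primeFactors with z < p, (1 : ℝ) / q := fun q => by
    rw [sum_const, nsmul_eq_mul, mul_one_div]
  simp_rw [hcard]
  rw [sum_sigma', sum_sigma']
  refine sum_le_sum_of_injOn (fun x => ⟨x.1 * x.2, x.1⟩) ?_ ?_ (fun _ _ => by positivity)
    fun _ _ => le_rfl
  · rintro ⟨p, a⟩ hpa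
    simp only [mem_sigma, mem_filter, mem_Ioc, mem_Icc] at hpa ⊢
    obtain ⟨⟨⟨hzp, hpX⟩, hp⟩, ⟨ha1, haY⟩, hsq, hndvd⟩ := hpa
    have hpos : 0 < p * a := Nat.mul_pos hp.pos ha1
    exact ⟨⟨⟨hpos, Nat.mul_le_mul hpX haY⟩, (Nat.squarefree_mul
      (hp.coprime_iff_not_dvd.2 hndvd)).2 ⟨hp.prime.squarefree, hsq⟩⟩,
      Nat.mem_primeFactors.2 ⟨hp, dvd_mul_right _ _, hpos.ne'⟩, hzp⟩
  · rintro ⟨p, a⟩ hpa ⟨p', a'⟩ - heq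
    simp only [Sigma.mk.injEq, heq_eq_eq] at heq
    simp only [coe_sigma, Set.mem_sigma_iff, mem_coe, mem_filter] at hpa
    obtain ⟨hmul, rfl⟩ := heq
    rw [Nat.eq_of_mul_eq_mul_left hpa.1.2.pos hmul]

theorem primeRecipSum_mul_log_le (z X Y : ℕ) :
    primeRecipSum z X * log (Y + 1) ≤
      3 * ∑ q ∈ Icc 1 (X * Y) with Squarefree q, (#{p ∈ q.primeFactors | z < p} : ℝ) / q :=
  calc primeRecipSum z X * log (Y + 1)
      = ∑ p ∈ Ioc z X with p.Prime, 1 / (p : ℝ) * log (Y + 1) := by rw [primeRecipSum, sum_mul]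
    _ ≤ ∑ p ∈ Ioc z X with p.Prime,
          1 / (p : ℝ) * (3 * ∑ a ∈ Icc 1 Y with Squarefree a ∧ ¬p ∣ a, (1 : ℝ) / a) := by
        gcongr with p hp
        exact log_le_sum_squarefree_not_dvd (mem_filter.1 hp).2 Y
    _ = 3 * ∑ p ∈ Ioc z X with p.Prime,
          ∑ a ∈ Icc 1 Y with Squarefree a ∧ ¬p ∣ a, (1 : ℝ) / (p * a : ℕ) := by
        simp_rw [mul_left_comm _ (3 : ℝ), mul_sum, div_mul_div_comm, one_mul, Nat.cast_mul]
    _ ≤ _ := by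
        gcongr
        exact sum_prime_sum_squarefree_not_dvd_le z X Y

theorem card_large_primeFactors_div_le_sieveWeight {Ω : ℕ → Finset ℕ} {z q : ℕ}
    (hsmall : ∀ p : ℕ, p.Prime → 1 / (p : ℝ) ≤ sieveFactor Ω p)
    (hlarge : ∀ p : ℕ, p.Prime → z < p → 2 / (p : ℝ) ≤ sieveFactor Ω p) (hq : Squarefree q) :
    (#{p ∈ q.primeFactors | z < p} : ℝ) / q ≤ sieveWeight Ω q :=
  calc (#{p ∈ q.primeFactors | z < p} : ℝ) / q ≤ 2 ^ #{p ∈ q.primeFactors | z < p} / q := by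
        gcongr
        exact_mod_cast Nat.lt_two_pow_self.le
    _ = ∏ p ∈ q.primeFactors, (if z < p then (2 : ℝ) else 1) / p := by
        rw [prod_div_distrib, prod_ite, prod_const, prod_const_one, mul_one, ← Nat.cast_prod,
          Nat.prod_primeFactors_of_squarefree hq]
    _ ≤ sieveWeight Ω q := by
        refine prod_le_prod (fun p _ => by positivity) fun p hp => ?_
        have hp := Nat.prime_of_mem_primeFactors hp
        split_ifs with hz
        · exact hlarge p hp hz
        · exact hsmall p hp

theorem primeRecipSum_mul_log_le_sieveSum {Ω : ℕ → Finset ℕ} {z : ℕ}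
    (hsmall : ∀ p : ℕ, p.Prime → 1 / (p : ℝ) ≤ sieveFactor Ω p)
    (hlarge : ∀ p : ℕ, p.Prime → z < p → 2 / (p : ℝ) ≤ sieveFactor Ω p) (X Y : ℕ) :
    primeRecipSum z X * log (Y + 1) ≤ 3 * sieveSum Ω (X * Y) :=
  (primeRecipSum_mul_log_le z X Y).trans <| mul_le_mul_of_nonneg_left (sum_le_sum fun _ hq =>
    card_large_primeFactors_div_le_sieveWeight hsmall hlarge (mem_filter.1 hq).2) zero_le_three

end SquarefreeSums

section TwoClassSieve

/-- The residue classes modulo `p` avoided by the shifted primes in question: `0` for every `p`, and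
also `1` when `p > z`. -/
noncomputable def zeroOneClasses (z p : ℕ) : Finset ℕ := if z < p then {0, 1} else {0}

variable {z p : ℕ}

theorem card_zeroOneClasses : #(zeroOneClasses z p) = if z < p then 2 else 1 := by
  unfold zeroOneClasses
  split_ifs <;> rfl

theorem zeroOneClasses_ssubset_range (hz : 2 ≤ z) (hp : p.Prime) :
    zeroOneClasses z p ⊂ range p := by
  refine ssubset_of_subset_of_ne ?_ fun heq => ?_
  · unfold zeroOneClasses
    split_ifs <;> simp [insert_subset_iff, hp.pos, hp.one_lt]
  · have hcard := congrArg card heq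
    rw [card_zeroOneClasses, card_range] at hcard
    have := hp.one_lt
    split_ifs at hcard <;> omega

theorem primeRecipSum_mul_log_le_sieveSum_zeroOneClasses (hz : 2 ≤ z) (X Y : ℕ) :
    primeRecipSum z X * log (Y + 1) ≤ 3 * sieveSum (zeroOneClasses z) (X * Y) := by
  have hfactor : ∀ p : ℕ, p.Prime → ((if z < p then 2 else 1 : ℕ) : ℝ) / p ≤
      sieveFactor (zeroOneClasses z) p := fun p hp => by
    simpa only [card_zeroOneClasses] using
      card_div_le_sieveFactor (zeroOneClasses_ssubset_range hz hp)
  refine primeRecipSum_mul_log_le_sieveSum (fun p hp => ?_) (fun p hp hzp => ?_) X Y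
  · refine le_trans ?_ (hfactor p hp)
    gcongr
    split_ifs <;> norm_num
  · simpa [hzp] using hfactor p hp

end TwoClassSieve

/-! ### Chebyshev and Mertens bounds -/

section PrimeDensity

open Chebyshev Filter

theorem eventually_sqrt_mul_log_le {ε : ℝ} (hε : 0 < ε) :
    ∀ᶠ x : ℝ in atTop, √x * log x ≤ ε * x := by
  filter_upwards [(isLittleO_log_rpow_atTop (one_half_pos (α := ℝ))).bound hε,
    eventually_ge_atTop 0] with x hlog hx
  rw [← sqrt_eq_rpow, norm_of_nonneg (sqrt_nonneg x)] at hlog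
  calc √x * log x ≤ √x * (ε * √x) := by gcongr; exact (le_norm_self _).trans hlog
    _ = ε * (√x * √x) := by ring
    _ = ε * x := by rw [mul_self_sqrt hx]

theorem eventually_mul_le_theta {κ : ℝ} (hκ : κ < log 2) : ∀ᶠ x : ℝ in atTop, κ * x ≤ theta x := by
  filter_upwards [eventually_sqrt_mul_log_le (ε := (log 2 - κ) / 5) (by linarith),
    eventually_ge_atTop 2] with x hsqrt hx
  have hlog2 : log 2 ≤ log x := log_le_log two_pos hx
  have hlog : log x ≤ √x * log x :=
    le_mul_of_one_le_left (log_nonneg (by linarith)) (one_le_sqrt.2 (by linarith))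
  have hshift : log (x + 2) ≤ 2 * log x := by
    calc log (x + 2) ≤ log (x ^ 2) := log_le_log (by linarith) (by nlinarith)
      _ = 2 * log x := by rw [log_pow, Nat.cast_ofNat]
  linarith [theta_ge' (x := x) (by linarith)]

theorem log_four_le : log 4 ≤ 7 / 5 := by
  rw [show (4 : ℝ) = 2 ^ 2 by norm_num, log_pow]
  push_cast
  linarith [log_two_lt_d9]

theorem eventually_div_log_le_primePi :
    ∀ᶠ x : ℝ in atTop, 3 / 5 * (x / log x) ≤ primePi x := by
  filter_upwards [eventually_mul_le_theta (κ := 3 / 5) (by linarith [log_two_gt_d9]),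
    eventually_gt_atTop 1] with x hθ hx
  have hpi : primePi x = Nat.primeCounting ⌊x⌋₊ := by
    rw [primePi, Nat.primeCounting, Nat.primeCounting', Nat.count_eq_card_filter_range]
  rw [hpi, ← mul_div_assoc, div_le_iff₀ (log_pos hx)]
  exact hθ.trans (theta_le_pi_mul_log' x)

theorem primeRecipSum_nonneg (z Y : ℕ) : 0 ≤ primeRecipSum z Y :=
  sum_nonneg fun _ _ => by positivity

theorem primeRecipSum_add {x y z : ℕ} (hxy : x ≤ y) (hyz : y ≤ z) :
    primeRecipSum x y + primeRecipSum y z = primeRecipSum x z := by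
  simp_rw [primeRecipSum, sum_filter]
  exact sum_Ioc_consecutive _ hxy hyz

theorem theta_sub_theta_le {m n : ℕ} (hmn : m ≤ n) :
    theta n - theta m ≤ n * log n * primeRecipSum m n := by
  have hsub : theta n - theta m = ∑ p ∈ Ioc m n with p.Prime, log p := by
    simp_rw [theta, Nat.floor_natCast, sum_filter, sub_eq_iff_eq_add']
    exact (sum_Ioc_consecutive _ m.zero_le hmn).symm
  rw [hsub, primeRecipSum, mul_sum]
  refine sum_le_sum fun p hp => ?_
  obtain ⟨hpn, hp⟩ := mem_filter.1 hp
  have hp0 : (0 : ℝ) < p := by exact_mod_cast hp.pos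
  have hpn : (p : ℝ) ≤ n := by exact_mod_cast (mem_Ioc.1 hpn).2
  rw [mul_one_div, le_div_iff₀ hp0, mul_comm]
  gcongr

theorem eventually_inv_log_le_primeRecipSum :
    ∀ᶠ n : ℕ in atTop, 1 / (4 * log (4 * n)) ≤ primeRecipSum n (4 * n) := by
  have htendsto : Tendsto (fun n : ℕ => 4 * (n : ℝ)) atTop atTop :=
    tendsto_natCast_atTop_atTop.const_mul_atTop four_pos
  filter_upwards [htendsto.eventually (eventually_mul_le_theta (κ := 3 / 5)
    (by linarith [log_two_gt_d9])), eventually_ge_atTop 1] with n hθ hn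
  have hn : (1 : ℝ) ≤ n := by exact_mod_cast hn
  -- `4 * κ - log 4 ≥ 1` is what makes an interval of ratio `4` long enough.
  have hgap : (n : ℝ) ≤ theta (4 * n) - theta n := by
    have hupper := theta_le_log4_mul_x (x := n) n.cast_nonneg
    have : log 4 * n ≤ 7 / 5 * n := by gcongr; exact log_four_le
    linarith
  have hsum := theta_sub_theta_le (m := n) (n := 4 * n) (by omega)
  push_cast at hsum
  have hlog : 0 < log (4 * n) := log_pos (by linarith)
  rw [div_le_iff₀ (by positivity)]
  refine le_of_mul_le_mul_left ?_ (by linarith : (0 : ℝ) < n)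
  linarith

theorem log_log_div_log_le_add {u : ℝ} {z : ℕ} (hu : 0 < u) (hz : 1 ≤ z)
    (hblock : 1 / (4 * log (4 * z)) ≤ primeRecipSum z (4 * z)) :
    log (u / log (4 * z)) ≤
      log (u / log (4 * (4 * z : ℕ))) + 6 * primeRecipSum z (4 * z) := by
  have hz : (1 : ℝ) ≤ z := by exact_mod_cast hz
  have hlog : 0 < log (4 * z) := log_pos (by linarith)
  have hstep : log (4 * (4 * z : ℕ)) = log 4 + log (4 * z) := by
    rw [← log_mul (by norm_num) (by positivity)]
    push_cast
    rfl
  have hratio : u / log (4 * z) =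
      u / log (4 * (4 * z : ℕ)) * (1 + log 4 / log (4 * z)) := by
    rw [hstep]
    field_simp
    ring
  rw [hratio, log_mul (by rw [hstep]; positivity) (by positivity)]
  gcongr
  calc log (1 + log 4 / log (4 * z)) ≤ log 4 / log (4 * z) := by
        linarith [log_le_sub_one_of_pos (show 0 < 1 + log 4 / log (4 * z) by positivity)]
    _ ≤ 6 * (1 / (4 * log (4 * z))) := by
        rw [mul_one_div, div_le_div_iff₀ hlog (by positivity)]
        nlinarith [log_four_le]
    _ ≤ _ := by gcongr

theorem eventually_log_log_div_log_le_primeRecipSum :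
    ∀ᶠ z : ℕ in atTop, ∀ Y : ℕ, log (log (Y + 1) / log (4 * z)) ≤ 6 * primeRecipSum z Y := by
  obtain ⟨z₀, hz₀⟩ := eventually_atTop.1 eventually_inv_log_le_primeRecipSum
  filter_upwards [eventually_ge_atTop (max z₀ 1)] with z hz Y
  induction hd : Y - z using Nat.strong_induction_on generalizing z with
  | h d ih =>
    have hz1 : 1 ≤ z := (le_max_right _ _).trans hz
    have hzR : (1 : ℝ) ≤ z := by exact_mod_cast hz1
    rcases lt_or_ge Y (4 * z) with hY | hY
    · have hYz : log (Y + 1) ≤ log (4 * z) := log_le_log (by positivity) (by exact_mod_cast hY)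
      have hratio : log (log (Y + 1) / log (4 * z)) ≤ 0 :=
        log_nonpos (div_nonneg (log_nonneg (by linarith [Y.cast_nonneg (α := ℝ)]))
          (log_nonneg (by linarith))) (div_le_one_of_le₀ hYz (log_nonneg (by linarith)))
      linarith [primeRecipSum_nonneg z Y]
    · have hY0 : (0 : ℝ) < Y := by exact_mod_cast (by omega : 0 < Y)
      have hstep := log_log_div_log_le_add (u := log (Y + 1)) (log_pos (by linarith)) hz1
        (hz₀ z ((le_max_left _ _).trans hz))
      have htail := ih (Y - 4 * z) (by omega) (4 * z) (by omega) rfl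
      linarith [primeRecipSum_add (by omega : z ≤ 4 * z) hY]

end PrimeDensity

/-! ### Shifted primes with a large prime factor -/

section LargePrimeFactor

open Filter

theorem prime_Pplus_and_dvd {m : ℕ} (hm : 2 ≤ m) : (Pplus m).Prime ∧ Pplus m ∣ m := by
  have hne : m.primeFactors.Nonempty := Nat.nonempty_primeFactors.2 hm
  obtain ⟨p, hp, heq⟩ := exists_mem_eq_sup _ hne id
  rw [Pplus, if_neg (by omega), heq]
  exact ⟨Nat.prime_of_mem_primeFactors hp, Nat.dvd_of_mem_primeFactors hp⟩

theorem lt_rpow_of_dvd_of_rpow_le_Pplus {c : ℝ} {p l : ℕ} (hp : 1 < p) (hl : l.Prime)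
    (hlp : l ∣ p - 1) (hlc : (l : ℝ) < p ^ c) (hc : (p : ℝ) ^ c ≤ Pplus (p - 1)) :
    (l : ℝ) < p ^ (1 - c) := by
  obtain ⟨hr, hrp⟩ := prime_Pplus_and_dvd (hl.two_le.trans (Nat.le_of_dvd (by omega) hlp))
  have hlr : l < Pplus (p - 1) := by exact_mod_cast hlc.trans_le hc
  have hmul : l * Pplus (p - 1) ≤ p - 1 := Nat.le_of_dvd (by omega)
    (((Nat.coprime_primes hl hr).2 hlr.ne).mul_dvd_of_dvd_of_dvd hlp hrp)
  have hp0 : (0 : ℝ) < p := by exact_mod_cast (by omega : 0 < p)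
  rw [rpow_sub hp0, rpow_one, lt_div_iff₀ (rpow_pos_of_pos hp0 c)]
  calc (l : ℝ) * p ^ c ≤ l * Pplus (p - 1) := by gcongr
    _ < p := by exact_mod_cast (by omega : l * Pplus (p - 1) < p)

theorem mod_notMem_zeroOneClasses {c x : ℝ} {z p l : ℕ} (hc : 1 / 2 ≤ c) (hc1 : c ≤ 1)
    (hp : p.Prime) (hpx : p ≤ x) (hcp : (p : ℝ) ^ c ≤ Pplus (p - 1)) (hz : x ^ (1 - c) < z + 1)
    (hl : l.Prime) (hlp : l ^ 2 < p) : p % l ∉ zeroOneClasses z l := by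
  have hlc : (l : ℝ) < p ^ c :=
    calc (l : ℝ) < √p := lt_sqrt_of_sq_lt (by exact_mod_cast hlp)
      _ = p ^ (1 / 2 : ℝ) := sqrt_eq_rpow _
      _ ≤ p ^ c := rpow_le_rpow_of_exponent_le (by exact_mod_cast hp.one_le) hc
  have hzero : p % l ≠ 0 := fun h =>
    ((Nat.dvd_prime hp).1 (Nat.dvd_of_mod_eq_zero h)).elim hl.one_lt.ne'
      ((Nat.le_self_pow two_ne_zero l).trans_lt hlp).ne
  have hone : p % l = 1 → l ≤ z := fun h => by
    have hdvd : l ∣ p - 1 := by simpa only [h] using Nat.dvd_sub_mod (n := l) p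
    have hlt : (l : ℝ) < z + 1 :=
      calc (l : ℝ) < p ^ (1 - c) := lt_rpow_of_dvd_of_rpow_le_Pplus hp.one_lt hl hdvd hlc hcp
        _ ≤ x ^ (1 - c) := rpow_le_rpow p.cast_nonneg hpx (by linarith)
        _ < z + 1 := hz
    exact Nat.lt_succ_iff.1 (by exact_mod_cast hlt)
  unfold zeroOneClasses
  split_ifs with hzl
  · simp only [mem_insert, mem_singleton, not_or]
    exact ⟨hzero, fun h => (hone h).not_gt hzl⟩
  · rwa [mem_singleton]

theorem T_le_div_sieveSum {c x : ℝ} {z Q : ℕ} (hc : 1 / 2 ≤ c) (hc1 : c ≤ 1) (hx : 0 ≤ x)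
    (hz : 2 ≤ z) (hzx : x ^ (1 - c) < z + 1) (hQ : 1 ≤ Q) (hQx : (Q : ℝ) ^ 4 ≤ √x) :
    (T c x : ℝ) ≤ (x + 1) / sieveSum (zeroOneClasses z) Q + 2 * √x + 1 := by
  let S : Finset ℕ := {p ∈ {p ∈ range (⌊x⌋₊ + 1) | p.Prime ∧ (p : ℝ) ^ c ≤ Pplus (p - 1)} |
    ⌊√x⌋₊ < p}
  have hcover : T c x ≤ #S + (⌊√x⌋₊ + 1) := by
    rw [T, ← card_range (⌊√x⌋₊ + 1)]
    refine (card_le_card fun p hp => ?_).trans (card_union_le _ _)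
    rw [mem_union, mem_filter, mem_range]
    exact (lt_or_ge ⌊√x⌋₊ p).imp (fun h => ⟨hp, h⟩) Nat.lt_succ_of_le
  have hsift : ∀ p ∈ S, ∀ l, l.Prime → l ≤ Q → p % l ∉ zeroOneClasses z l := by
    intro p hpS l hl hlQ
    obtain ⟨hpT, hxp⟩ := mem_filter.1 hpS
    obtain ⟨hpx, hp, hcp⟩ := mem_filter.1 hpT
    have hQx : Q ^ 4 ≤ ⌊√x⌋₊ := Nat.le_floor (by exact_mod_cast hQx)
    have hlp : l ^ 2 < p :=
      calc l ^ 2 ≤ l ^ 4 := Nat.pow_le_pow_right hl.pos (by norm_num)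
        _ ≤ Q ^ 4 := Nat.pow_le_pow_left hlQ 4
        _ < p := hQx.trans_lt hxp
    exact mod_notMem_zeroOneClasses hc hc1 hp
      ((Nat.le_floor_iff hx).1 (Nat.lt_succ_iff.1 (mem_range.1 hpx))) hcp hzx hl hlp
  have hΩ : ∀ p, p.Prime → zeroOneClasses z p ⊂ range p := fun p =>
    zeroOneClasses_ssubset_range hz
  have hsieve := card_le_of_sifted hΩ hQ ((filter_subset _ _).trans (filter_subset _ _)) hsift
  have hL := sieveSum_pos hΩ hQ
  calc (T c x : ℝ) ≤ #S + (⌊√x⌋₊ + 1) := by exact_mod_cast hcover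
    _ ≤ ((⌊x⌋₊ + 1 : ℕ) / sieveSum (zeroOneClasses z) Q + Q ^ 4) + (√x + 1) := by
        gcongr
        exact Nat.floor_le (sqrt_nonneg x)
    _ ≤ ((x + 1) / sieveSum (zeroOneClasses z) Q + √x) + (√x + 1) := by
        push_cast
        gcongr
        exact Nat.floor_le hx
    _ = _ := by ring

/-- The denominator of the sieve bound for `T c x`: the classes `0` modulo every prime and `1`
modulo the primes above `x ^ (1 - c)`. The level is a square `Q = Y * Y` because the primes and the
cofactors in the lower bound for the denominator both run up to `Y`, and `Y ≤ x ^ (1 / 16)` keeps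
the sieve error `Q ^ 4` below `√x`. -/
noncomputable def shiftedPrimeSieveSum (c x : ℝ) : ℝ :=
  sieveSum (zeroOneClasses ⌊x ^ (1 - c)⌋₊) (⌊x ^ (1 / 16 : ℝ)⌋₊ * ⌊x ^ (1 / 16 : ℝ)⌋₊)

theorem tendsto_floor_rpow_atTop {a : ℝ} (ha : 0 < a) :
    Tendsto (fun x : ℝ => ⌊x ^ a⌋₊) atTop atTop :=
  tendsto_nat_floor_atTop.comp (tendsto_rpow_atTop ha)

theorem eventually_log_mul_log_le_shiftedPrimeSieveSum {c : ℝ} (hc : c < 1) :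
    ∀ᶠ x in atTop, log (1 / (32 * (1 - c))) * log x ≤ 288 * shiftedPrimeSieveSum c x := by
  have hδ : 0 < 1 - c := by linarith
  have hz := tendsto_floor_rpow_atTop hδ
  filter_upwards [hz.eventually eventually_log_log_div_log_le_primeRecipSum,
    hz.eventually_ge_atTop 2, eventually_gt_atTop 1,
    (tendsto_log_atTop.const_mul_atTop hδ).eventually_ge_atTop (log 4)] with x hmertens hz2 hx hlog4
  set z := ⌊x ^ (1 - c)⌋₊
  set Y := ⌊x ^ (1 / 16 : ℝ)⌋₊
  have hx0 : 0 < x := by linarith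
  have hlogx : 0 < log x := log_pos hx
  have hz1 : (1 : ℝ) < z := by exact_mod_cast hz2
  have hlogY : log x / 16 ≤ log (Y + 1) := by
    rw [div_eq_inv_mul, ← one_div, ← log_rpow hx0]
    exact log_le_log (rpow_pos_of_pos hx0 _) (Nat.lt_floor_add_one _).le
  have hlogz : log (4 * z) ≤ 2 * ((1 - c) * log x) := by
    have : log z ≤ (1 - c) * log x := by
      rw [← log_rpow hx0]
      exact log_le_log (by linarith) (Nat.floor_le (rpow_nonneg hx0.le _))
    rw [log_mul (by norm_num) (by linarith)]
    linarith
  have hratio : log (1 / (32 * (1 - c))) ≤ 6 * primeRecipSum z Y := by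
    refine le_trans (log_le_log (by positivity) ?_) (hmertens Y)
    rw [le_div_iff₀ (log_pos (by linarith))]
    calc 1 / (32 * (1 - c)) * log (4 * z)
        ≤ 1 / (32 * (1 - c)) * (2 * ((1 - c) * log x)) := by gcongr
      _ = log x / 16 := by field_simp; norm_num
      _ ≤ log (Y + 1) := hlogY
  calc log (1 / (32 * (1 - c))) * log x ≤ 6 * primeRecipSum z Y * log x := by gcongr
    _ = 96 * (primeRecipSum z Y * (log x / 16)) := by ring
    _ ≤ 96 * (primeRecipSum z Y * log (Y + 1)) := by
        have := primeRecipSum_nonneg z Y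
        gcongr
    _ ≤ 96 * (3 * shiftedPrimeSieveSum c x) :=
        mul_le_mul_of_nonneg_left (primeRecipSum_mul_log_le_sieveSum_zeroOneClasses hz2 Y Y)
          (by norm_num)
    _ = _ := by ring

theorem eventually_T_le_div_shiftedPrimeSieveSum {c : ℝ} (hc : 1 / 2 ≤ c) (hc1 : c < 1) :
    ∀ᶠ x in atTop, (T c x : ℝ) ≤ (x + 1) / shiftedPrimeSieveSum c x + 2 * √x + 1 := by
  filter_upwards [(tendsto_floor_rpow_atTop (sub_pos.2 hc1)).eventually_ge_atTop 2,
    (tendsto_floor_rpow_atTop (by norm_num : (0 : ℝ) < 1 / 16)).eventually_ge_atTop 1,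
    eventually_ge_atTop 0] with x hz hY hx
  refine T_le_div_sieveSum hc hc1.le hx hz (Nat.lt_floor_add_one _) (Nat.mul_pos hY hY) ?_
  calc ((⌊x ^ (1 / 16 : ℝ)⌋₊ * ⌊x ^ (1 / 16 : ℝ)⌋₊ : ℕ) : ℝ) ^ 4
      = (⌊x ^ (1 / 16 : ℝ)⌋₊ : ℝ) ^ 8 := by push_cast; ring
    _ ≤ (x ^ (1 / 16 : ℝ)) ^ 8 := by
        gcongr
        exact Nat.floor_le (rpow_nonneg hx _)
    _ = √x := by
        rw [← rpow_natCast, ← rpow_mul hx, sqrt_eq_rpow]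
        norm_num

theorem eventually_T_mul_log_le_primePi {c : ℝ} (hc : 1 / 2 ≤ c) (hc1 : c < 1) :
    ∀ᶠ x : ℝ in atTop, T c x * log (1 / (32 * (1 - c))) ≤ 1000 * primePi x := by
  set ℓ := log (1 / (32 * (1 - c)))
  rcases le_or_gt ℓ 0 with hℓ | hℓ
  · exact Eventually.of_forall fun x =>
      (mul_nonpos_of_nonneg_of_nonpos (Nat.cast_nonneg _) hℓ).trans (by positivity)
  filter_upwards [eventually_T_le_div_shiftedPrimeSieveSum hc hc1,
    eventually_log_mul_log_le_shiftedPrimeSieveSum hc1,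
    eventually_div_log_le_primePi, eventually_sqrt_mul_log_le (ε := 1 / ℓ) (by positivity),
    eventually_gt_atTop 1] with x hT hL hpi hsqrt hx
  set L := shiftedPrimeSieveSum c x
  have hlog : 0 < log x := log_pos hx
  have hL0 : 0 < L := by linarith [mul_pos hℓ hlog]
  have hmain : ℓ / L ≤ 288 / log x := by rwa [div_le_div_iff₀ hL0 hlog]
  have hsmall : ℓ * √x ≤ x / log x := by
    rw [le_div_iff₀ hlog, mul_assoc]
    calc ℓ * (√x * log x) ≤ ℓ * (1 / ℓ * x) := by gcongr
      _ = x := by field_simp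
  have hsqrt1 : 1 ≤ √x := one_le_sqrt.2 hx.le
  calc T c x * ℓ ≤ ((x + 1) / L + 2 * √x + 1) * ℓ := by gcongr
    _ = (x + 1) * (ℓ / L) + 2 * (ℓ * √x) + ℓ := by ring
    _ ≤ 2 * x * (288 / log x) + 2 * (x / log x) + x / log x := by
        gcongr
        · linarith
        · exact (le_mul_of_one_le_right hℓ.le hsqrt1).trans hsmall
    _ = 579 * (x / log x) := by ring
    _ ≤ 1000 * primePi x := by linarith [div_pos (zero_lt_one.trans hx) hlog]

end LargePrimeFactor

/-- `limsup_{x→∞} T_c(x)/π(x) → 0` as `c → 1⁻`. -/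
theorem limsup_T_div_pi_tendsto_zero :
    ∀ ε > 0, ∃ c₀ : ℝ, 0 < c₀ ∧ c₀ < 1 ∧
      ∀ c : ℝ, c₀ ≤ c → c < 1 →
        ∃ x₀ : ℝ, ∀ x ≥ x₀, (T c x : ℝ) ≤ ε * (primePi x : ℝ) := by
  intro ε hε
  set δ := exp (-(1000 / ε)) / 32 with hδ
  have hδ0 : 0 < δ := by positivity
  have hδ1 : δ < 1 / 32 := by
    have : exp (-(1000 / ε)) < 1 := exp_lt_one_iff.2 (neg_lt_zero.2 (by positivity))
    linarith
  refine ⟨1 - δ, by linarith, by linarith, fun c hc hc1 => ?_⟩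
  obtain ⟨x₀, hx₀⟩ := Filter.eventually_atTop.1
    (eventually_T_mul_log_le_primePi (by linarith : 1 / 2 ≤ c) hc1)
  refine ⟨x₀, fun x hx => ?_⟩
  have hlog : 1000 / ε ≤ log (1 / (32 * (1 - c))) := by
    rw [one_div, log_inv, le_neg, log_le_iff_le_exp (by linarith)]
    linarith
  have hT : T c x * (1000 / ε) ≤ 1000 * primePi x :=
    (mul_le_mul_of_nonneg_left hlog (Nat.cast_nonneg _)).trans (hx₀ x hx)
  rw [mul_div_assoc', div_le_iff₀ hε] at hT
  linarith
end
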